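/- Under Assumptions A1, A2 and A3, for every compact set A ⊂ ℝ^d, almost surely limsup_{n→∞} sup_{x∈A} (g_n(x) − f(x)) ≤ 0. -/

import Mathlib

open MeasureTheory Filter Metric
open scoped Topology ENNReal NNReal

noncomputable def kb {d : ℕ} (K : EuclideanSpace ℝ (Fin d) → ℝ) (b : ℝ)
    (x : EuclideanSpace ℝ (Fin d)) : ℝ :=
  (b ^ d)⁻¹ * K (b⁻¹ • x)

def natFilt {Ω : Type*} {d : ℕ} (X : ℕ → Ω → EuclideanSpace ℝ (Fin d)) (n : ℕ) :
    MeasurableSpace Ω :=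
  ⨆ i ∈ Finset.Icc 1 n, MeasurableSpace.comap (X i) inferInstance

/-! ### Step-size weights and weighted averages -/

structure Wt (γ : ℕ → ℝ) : Prop where
  pos : ∀ n, 0 < γ n
  half : ∀ n, γ n ≤ 1 / 2
  anti : Antitone γ
  lim : Tendsto γ atTop (𝓝 0)
  ratio : ∀ n, γ n * (1 - γ (n + 1)) ≤ γ (n + 1)

noncomputable def PP (γ : ℕ → ℝ) (n : ℕ) : ℝ := ∏ k ∈ Finset.range n, (1 - γ (k + 1))

noncomputable def SG (γ : ℕ → ℝ) (n : ℕ) : ℝ := ∑ k ∈ Finset.range n, γ (k + 1)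

noncomputable def avg (γ u : ℕ → ℝ) : ℕ → ℝ
  | 0 => 0
  | n + 1 => (1 - γ (n + 1)) * avg γ u n + γ (n + 1) * u n

theorem avg_succ (γ u : ℕ → ℝ) (n : ℕ) :
    avg γ u (n + 1) = (1 - γ (n + 1)) * avg γ u n + γ (n + 1) * u n := rfl

theorem PP_succ (γ : ℕ → ℝ) (n : ℕ) : PP γ (n + 1) = (1 - γ (n + 1)) * PP γ n := by
  unfold PP; rw [Finset.prod_range_succ, mul_comm]

theorem SG_succ (γ : ℕ → ℝ) (n : ℕ) : SG γ (n + 1) = SG γ n + γ (n + 1) := by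
  unfold SG; rw [Finset.sum_range_succ]

namespace Wt
variable {γ : ℕ → ℝ}

theorem PP_pos (hγ : Wt γ) (n : ℕ) : 0 < PP γ n := by
  unfold PP
  exact Finset.prod_pos fun k _ => by linarith [hγ.half (k + 1)]

theorem PP_anti (hγ : Wt γ) : Antitone (PP γ) := by
  refine antitone_nat_of_succ_le fun n => ?_
  rw [PP_succ]
  nlinarith [hγ.pos (n + 1), hγ.PP_pos n]

theorem PP_le (hγ : Wt γ) (n : ℕ) : γ 0 * PP γ n ≤ γ n := by
  induction n with
  | zero => simp [PP]
  | succ n ih =>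
    rw [PP_succ]
    have := hγ.ratio n
    nlinarith [hγ.half (n + 1), hγ.pos (n + 1)]

theorem PP_le' (hγ : Wt γ) (n : ℕ) : PP γ n ≤ (γ 0)⁻¹ * γ n := by
  rw [inv_mul_eq_div, le_div_iff₀ (hγ.pos 0), mul_comm]
  exact hγ.PP_le n

theorem ratio_le (hγ : Wt γ) {m n : ℕ} (h : m ≤ n) : γ m * PP γ n ≤ γ n * PP γ m := by
  induction n, h using Nat.le_induction with
  | base => exact le_rfl
  | succ n h ih =>
    rw [PP_succ]
    have := hγ.ratio n
    have h1 : 0 < 1 - γ (n + 1) := by linarith [hγ.half (n + 1)]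
    calc γ m * ((1 - γ (n + 1)) * PP γ n) = (1 - γ (n + 1)) * (γ m * PP γ n) := by ring
      _ ≤ (1 - γ (n + 1)) * (γ n * PP γ m) := by gcongr
      _ = (γ n * (1 - γ (n + 1))) * PP γ m := by ring
      _ ≤ _ := by gcongr; exact (hγ.PP_pos m).le

theorem PP_lim (hγ : Wt γ) : Tendsto (PP γ) atTop (𝓝 0) := by
  have h : Tendsto (fun n => (γ 0)⁻¹ * γ n) atTop (𝓝 0) := by
    simpa using hγ.lim.const_mul (γ 0)⁻¹
  exact squeeze_zero (fun n => (hγ.PP_pos n).le) hγ.PP_le' h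

theorem PP_le_exp (hγ : Wt γ) {m n : ℕ} (h : m ≤ n) :
    PP γ n ≤ PP γ m * Real.exp (-(SG γ n - SG γ m)) := by
  induction n, h using Nat.le_induction with
  | base => simp
  | succ n h ih =>
    rw [PP_succ, SG_succ]
    have h1 : 0 < 1 - γ (n + 1) := by linarith [hγ.half (n + 1)]
    have h2 : 1 - γ (n + 1) ≤ Real.exp (-γ (n + 1)) := by
      have := Real.add_one_le_exp (-γ (n + 1)); linarith
    have e : -(SG γ n + γ (n + 1) - SG γ m) = -γ (n + 1) + -(SG γ n - SG γ m) := by ring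
    rw [e, Real.exp_add]
    calc (1 - γ (n + 1)) * PP γ n
        ≤ Real.exp (-γ (n + 1)) * (PP γ m * Real.exp (-(SG γ n - SG γ m))) := by
          gcongr; exact (hγ.PP_pos n).le
      _ = _ := by ring

theorem exp_le_PP (hγ : Wt γ) {m n : ℕ} (h : m ≤ n) :
    PP γ m * Real.exp (-(2 * (SG γ n - SG γ m))) ≤ PP γ n := by
  induction n, h using Nat.le_induction with
  | base => simp
  | succ n h ih =>
    rw [PP_succ, SG_succ]
    have h1 : 0 < 1 - γ (n + 1) := by linarith [hγ.half (n + 1)]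
    have h2 : Real.exp (-(2 * γ (n + 1))) ≤ 1 - γ (n + 1) := by
      have h3 := Real.one_sub_inv_le_log_of_pos h1
      have h4 : -(2 * γ (n + 1)) ≤ 1 - (1 - γ (n + 1))⁻¹ := by
        have : (1 - γ (n + 1))⁻¹ ≤ 1 + 2 * γ (n + 1) := by
          rw [inv_le_iff_one_le_mul₀ h1]
          nlinarith [hγ.half (n + 1), hγ.pos (n + 1)]
        linarith
      calc Real.exp (-(2 * γ (n + 1))) ≤ Real.exp (Real.log (1 - γ (n + 1))) :=
            Real.exp_le_exp.mpr (h4.trans h3)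
        _ = _ := Real.exp_log h1
    have e : -(2 * (SG γ n + γ (n + 1) - SG γ m))
      = -(2 * γ (n + 1)) + -(2 * (SG γ n - SG γ m)) := by ring
    rw [e, Real.exp_add]
    calc PP γ m * (Real.exp (-(2 * γ (n + 1))) * Real.exp (-(2 * (SG γ n - SG γ m))))
        = Real.exp (-(2 * γ (n + 1))) * (PP γ m * Real.exp (-(2 * (SG γ n - SG γ m)))) := by ring
      _ ≤ _ := mul_le_mul h2 ih
          (mul_nonneg (hγ.PP_pos m).le (Real.exp_pos _).le) h1.le

theorem SG_mono (hγ : Wt γ) : Monotone (SG γ) := by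
  refine monotone_nat_of_le_succ fun n => ?_
  rw [SG_succ]; linarith [hγ.pos (n + 1)]

theorem SG_lim (hγ : Wt γ) : Tendsto (SG γ) atTop atTop := by
  refine tendsto_atTop.2 fun C => ?_
  have h0 : 0 < Real.exp (-(2 * C)) := Real.exp_pos _
  filter_upwards [hγ.PP_lim.eventually (gt_mem_nhds h0)] with n hn
  have := hγ.exp_le_PP (Nat.zero_le n)
  simp only [PP, SG, Finset.range_zero, Finset.prod_empty, Finset.sum_empty, one_mul, sub_zero]
    at this
  have h2 := lt_of_le_of_lt this hn
  have h3 := Real.exp_lt_exp.1 h2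
  unfold SG; linarith

theorem rec_le (hγ : Wt γ) {A : ℕ → ℝ} {m n : ℕ} (hmn : m ≤ n)
    (h : ∀ k, m ≤ k → k < n → A (k + 1) ≤ (1 - γ (k + 1)) * A k) :
    A n ≤ PP γ n / PP γ m * A m := by
  induction n, hmn using Nat.le_induction with
  | base => rw [div_self (hγ.PP_pos m).ne', one_mul]
  | succ n hmn ih =>
    have h1 : 0 < 1 - γ (n + 1) := by linarith [hγ.half (n + 1)]
    calc A (n + 1) ≤ (1 - γ (n + 1)) * A n := h n hmn (Nat.lt_succ_self n)
      _ ≤ (1 - γ (n + 1)) * (PP γ n / PP γ m * A m) := by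
          gcongr; exact ih fun k hk hk' => h k hk (hk'.trans (Nat.lt_succ_self n))
      _ = _ := by rw [PP_succ]; ring

theorem rec_ge (hγ : Wt γ) {A : ℕ → ℝ} {m n : ℕ} (hmn : m ≤ n)
    (h : ∀ k, m ≤ k → k < n → (1 - γ (k + 1)) * A k ≤ A (k + 1)) :
    PP γ n / PP γ m * A m ≤ A n := by
  have := hγ.rec_le (A := fun k => - A k) hmn (fun k h1 h2 => by have := h k h1 h2; linarith)
  linarith

theorem rec_eq (hγ : Wt γ) {A : ℕ → ℝ} {m n : ℕ} (hmn : m ≤ n)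
    (h : ∀ k, m ≤ k → k < n → A (k + 1) = (1 - γ (k + 1)) * A k) :
    A n = PP γ n / PP γ m * A m :=
  le_antisymm (hγ.rec_le hmn fun k h1 h2 => (h k h1 h2).le)
    (hγ.rec_ge hmn fun k h1 h2 => (h k h1 h2).ge)

theorem div_nonneg' (hγ : Wt γ) (m n : ℕ) : 0 ≤ PP γ n / PP γ m :=
  div_nonneg (hγ.PP_pos n).le (hγ.PP_pos m).le

theorem div_le_one' (hγ : Wt γ) {m n : ℕ} (h : m ≤ n) : PP γ n / PP γ m ≤ 1 :=
  (div_le_one (hγ.PP_pos m)).2 (hγ.PP_anti h)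

/-- upper bound for averages -/
theorem avg_le (hγ : Wt γ) {u : ℕ → ℝ} {m n : ℕ} {C : ℝ} (hmn : m ≤ n)
    (h : ∀ k, m ≤ k → k < n → u k ≤ C) :
    avg γ u n ≤ C + PP γ n / PP γ m * (avg γ u m - C) := by
  have := hγ.rec_le (A := fun k => avg γ u k - C) hmn (fun k h1 h2 => by
    have := h k h1 h2
    simp only [avg_succ]
    nlinarith [hγ.pos (k + 1)])
  linarith

theorem le_avg (hγ : Wt γ) {u : ℕ → ℝ} {m n : ℕ} {C : ℝ} (hmn : m ≤ n)
    (h : ∀ k, m ≤ k → k < n → C ≤ u k) :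
    C + PP γ n / PP γ m * (avg γ u m - C) ≤ avg γ u n := by
  have := hγ.rec_ge (A := fun k => avg γ u k - C) hmn (fun k h1 h2 => by
    have := h k h1 h2
    simp only [avg_succ]
    nlinarith [hγ.pos (k + 1)])
  linarith

theorem avg_nonneg (hγ : Wt γ) {u : ℕ → ℝ} (n : ℕ) (h : ∀ k, k < n → 0 ≤ u k) : 0 ≤ avg γ u n := by
  have := hγ.le_avg (u := u) (C := 0) (Nat.zero_le n) (fun k _ hk => h k hk)
  simpa [avg] using this

theorem avg_le_bound (hγ : Wt γ) {u : ℕ → ℝ} (n : ℕ) {C : ℝ} (hC : 0 ≤ C) (h : ∀ k, k < n → u k ≤ C) :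
    avg γ u n ≤ C := by
  have := hγ.avg_le (u := u) (C := C) (Nat.zero_le n) (fun k _ hk => h k hk)
  simp only [avg, zero_sub] at this
  nlinarith [hγ.div_nonneg' 0 n]

theorem avg_eq_sum (hγ : Wt γ) (u : ℕ → ℝ) (n : ℕ) :
    avg γ u n = PP γ n * ∑ k ∈ Finset.range n, γ (k + 1) / PP γ (k + 1) * u k := by
  induction n with
  | zero => simp [avg]
  | succ n ih =>
    have h1 := (hγ.PP_pos (n + 1)).ne'
    rw [avg_succ, ih, Finset.sum_range_succ, mul_add]
    rw [show PP γ (n + 1) * (γ (n + 1) / PP γ (n + 1) * u n) = γ (n + 1) * u n by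
      field_simp]
    rw [PP_succ]; ring

theorem avg_sub_le (hγ : Wt γ) {u v : ℕ → ℝ} (n : ℕ) {C : ℝ} (hC : 0 ≤ C)
    (h : ∀ k, k < n → |u k - v k| ≤ C) : |avg γ u n - avg γ v n| ≤ C := by
  have e : avg γ u n - avg γ v n = avg γ (fun k => u k - v k) n := by
    rw [hγ.avg_eq_sum, hγ.avg_eq_sum, hγ.avg_eq_sum, ← mul_sub, ← Finset.sum_sub_distrib]
    congr 1
    exact Finset.sum_congr rfl fun k _ => by ring
  rw [e, abs_le]
  constructor
  · have := hγ.le_avg (u := fun k => u k - v k) (C := -C) (Nat.zero_le n)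
      (fun k _ hk => (abs_le.1 (h k hk)).1)
    simp only [avg, zero_sub, neg_neg] at this
    nlinarith [hγ.div_nonneg' 0 n]
  · exact hγ.avg_le_bound n hC fun k hk => (abs_le.1 (h k hk)).2

end Wt


open MeasureTheory Filter Metric
open scoped Topology ENNReal NNReal

/-! ### Kernel facts -/

abbrev EE (d : ℕ) := EuclideanSpace ℝ (Fin d)

structure Ker {d : ℕ} (K : EE d → ℝ) (rK CK : ℝ) (L : ℝ≥0) : Prop where
  nonneg : ∀ x, 0 ≤ K x
  int1 : ∫ x, K x = 1
  lip : LipschitzWith L K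
  pos0 : 0 < K 0
  rpos : 0 < rK
  Cpos : 0 < CK
  tail : ∀ x, (1 + ‖x‖ ^ ((d : ℝ) + rK)) * K x ≤ CK

namespace Ker
variable {d : ℕ} {K : EE d → ℝ} {rK CK : ℝ} {L : ℝ≥0}

theorem integrable (hK : Ker K rK CK L) : Integrable K := by
  by_contra h
  have := hK.int1
  rw [integral_undef h] at this
  exact zero_ne_one this

theorem le (hK : Ker K rK CK L) (x : EE d) : K x ≤ CK := by
  have h1 := hK.tail x
  have h2 : 0 ≤ ‖x‖ ^ ((d : ℝ) + rK) := by positivity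
  nlinarith [hK.nonneg x]

theorem kb_nonneg (hK : Ker K rK CK L) {b : ℝ} (hb : 0 < b) (x : EE d) : 0 ≤ kb K b x := by
  unfold kb
  exact mul_nonneg (by positivity) (hK.nonneg _)

theorem kb_le (hK : Ker K rK CK L) {b : ℝ} (hb : 0 < b) (x : EE d) :
    kb K b x ≤ CK * (b ^ d)⁻¹ := by
  unfold kb
  rw [mul_comm]
  exact mul_le_mul_of_nonneg_right (hK.le _) (by positivity)

theorem kb_cont (hK : Ker K rK CK L) (b : ℝ) : Continuous (kb K b) := by
  unfold kb
  exact continuous_const.mul (hK.lip.continuous.comp (continuous_const_smul _))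

theorem kb_far (hK : Ker K rK CK L) {b : ℝ} (hb : 0 < b) {x : EE d} {δ : ℝ} (hδ : 0 < δ)
    (hx : δ ≤ ‖x‖) : kb K b x ≤ CK * b ^ rK * δ ^ (-((d : ℝ) + rK)) := by
  have hr := hK.rpos
  have h1 := hK.tail (b⁻¹ • x)
  have hn : ‖b⁻¹ • x‖ = b⁻¹ * ‖x‖ := by
    rw [norm_smul, Real.norm_of_nonneg (by positivity)]
  rw [hn] at h1
  have h2 : (b⁻¹ * δ) ^ ((d : ℝ) + rK) ≤ (b⁻¹ * ‖x‖) ^ ((d : ℝ) + rK) := by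
    gcongr
  have h3 : (b⁻¹ * δ) ^ ((d : ℝ) + rK) * K (b⁻¹ • x) ≤ CK := by
    nlinarith [hK.nonneg (b⁻¹ • x)]
  have h4 : (b⁻¹ * δ) ^ ((d : ℝ) + rK) = (b ^ d)⁻¹ * (b ^ rK)⁻¹ * δ ^ ((d : ℝ) + rK) := by
    rw [Real.mul_rpow (by positivity) hδ.le, Real.inv_rpow hb.le, Real.rpow_add hb,
      Real.rpow_natCast, mul_inv]
  rw [h4] at h3
  unfold kb
  rw [Real.rpow_neg hδ.le]
  have h5 : 0 < b ^ rK := by positivity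
  have h6 : 0 < δ ^ ((d : ℝ) + rK) := by positivity
  rw [← div_eq_mul_inv, le_div_iff₀ h6]
  calc (b ^ d)⁻¹ * K (b⁻¹ • x) * δ ^ ((d : ℝ) + rK)
      = ((b ^ d)⁻¹ * (b ^ rK)⁻¹ * δ ^ ((d : ℝ) + rK) * K (b⁻¹ • x)) * b ^ rK := by
        field_simp
    _ ≤ CK * b ^ rK := by gcongr

/-- change of variables -/
theorem int_kb {b : ℝ} (hb : 0 < b) (F : EE d → ℝ) (x : EE d) :
    ∫ y, F y * kb K b (x - y) = ∫ v, F (x - b • v) * K v := by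
  have h1 : ∫ y, F y * kb K b (x - y) = ∫ u, F (x - u) * kb K b u := by
    have := integral_sub_left_eq_self (fun u => F (x - u) * kb K b u) (volume : Measure (EE d)) x
    rw [← this]
    simp
  rw [h1]
  have h2 := Measure.integral_comp_inv_smul_of_nonneg (volume : Measure (EE d))
    (fun v => F (x - b • v) * K v) hb.le
  simp only [finrank_euclideanSpace, Fintype.card_fin, smul_eq_mul] at h2
  have h3 : ∫ u, F (x - u) * kb K b u = (b ^ d)⁻¹ * ∫ u, F (x - b • b⁻¹ • u) * K (b⁻¹ • u) := by
    rw [← integral_const_mul]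
    congr 1
    ext u
    rw [smul_inv_smul₀ hb.ne']
    unfold kb; ring
  rw [h3, h2, ← mul_assoc, inv_mul_cancel₀ (by positivity), one_mul]

theorem kb_integrable (hK : Ker K rK CK L) {b : ℝ} (hb : 0 < b) : Integrable (kb K b) := by
  unfold kb
  exact (hK.integrable.comp_smul (inv_ne_zero hb.ne')).const_mul _

theorem kb_int (hK : Ker K rK CK L) {b : ℝ} (hb : 0 < b) (x : EE d) :
    ∫ y, kb K b (x - y) = 1 := by
  have := int_kb (K := K) hb (fun _ => 1) x
  simpa [hK.int1] using this

theorem kb_integrable' (hK : Ker K rK CK L) {b : ℝ} (hb : 0 < b) (x : EE d) :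
    Integrable (fun y => kb K b (x - y)) :=
  (hK.kb_integrable hb).comp_sub_left x

theorem kb_integrable_r (hK : Ker K rK CK L) {b : ℝ} (hb : 0 < b) (X : EE d) :
    Integrable (fun x => kb K b (x - X)) :=
  (hK.kb_integrable hb).comp_sub_right X

theorem kb_int_r (hK : Ker K rK CK L) {b : ℝ} (hb : 0 < b) (X : EE d) :
    ∫ x, kb K b (x - X) = 1 := by
  rw [integral_sub_right_eq_self (fun u => kb K b u) X]
  have := hK.kb_int hb (0 : EE d)
  have h2 := integral_sub_left_eq_self (fun u => kb K b u) (volume : Measure (EE d)) 0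
  rw [← h2]; exact this

theorem kb_lip (hK : Ker K rK CK L) {b : ℝ} (hb : 0 < b) (x y : EE d) :
    |kb K b x - kb K b y| ≤ L * (b ^ (d + 1))⁻¹ * ‖x - y‖ := by
  unfold kb
  rw [← mul_sub, abs_mul, abs_of_nonneg (by positivity : 0 ≤ (b ^ d)⁻¹)]
  have h := hK.lip.dist_le_mul (b⁻¹ • x) (b⁻¹ • y)
  rw [Real.dist_eq, dist_eq_norm, ← smul_sub, norm_smul, Real.norm_of_nonneg (by positivity)] at h
  calc (b ^ d)⁻¹ * |K (b⁻¹ • x) - K (b⁻¹ • y)| ≤ (b ^ d)⁻¹ * (L * (b⁻¹ * ‖x - y‖)) := by gcongr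
    _ = _ := by rw [pow_succ, mul_inv]; ring

/-- near mass -/
theorem near (hK : Ker K rK CK L) {b : ℕ → ℝ} (hb : ∀ n, 0 < b n) (hb0 : Tendsto b atTop (𝓝 0))
    {δ : ℝ} (hδ : 0 < δ) {ε : ℝ} (hε : 0 < ε) :
    ∀ᶠ n in atTop, ∀ x : EE d, 1 - ε ≤ ∫ y in ball x δ, kb K (b n) (x - y) := by
  have key : ∀ n, ∀ x : EE d, ∫ y in ball x δ, kb K (b n) (x - y)
      = ∫ v, (ball (0 : EE d) δ).indicator (fun _ => (1 : ℝ)) (b n • v) * K v := by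
    intro n x
    rw [← integral_indicator measurableSet_ball]
    have := int_kb (K := K) (hb n) ((ball x δ).indicator (fun _ => (1 : ℝ))) x
    have e : (ball x δ).indicator (fun y => kb K (b n) (x - y))
      = fun y => (ball x δ).indicator (fun _ => (1 : ℝ)) y * kb K (b n) (x - y) := by
      ext y; by_cases hy : y ∈ ball x δ <;> simp [hy]
    rw [e, this]
    congr 1
    ext v
    congr 1
    by_cases hv : ‖b n • v‖ < δ
    · rw [Set.indicator_of_mem, Set.indicator_of_mem]
      · simpa using hv
      · simpa [dist_eq_norm] using hv
    · rw [Set.indicator_of_notMem, Set.indicator_of_notMem]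
      · simpa using hv
      · simpa [dist_eq_norm] using hv
  have lim : Tendsto (fun n => ∫ v, (ball (0 : EE d) δ).indicator (fun _ => (1 : ℝ)) (b n • v) * K v)
      atTop (𝓝 (∫ v, K v)) := by
    refine tendsto_integral_of_dominated_convergence K ?_ hK.integrable ?_ ?_
    · intro n
      refine AEStronglyMeasurable.mul ?_ hK.integrable.aestronglyMeasurable
      exact ((measurable_const.indicator measurableSet_ball).comp
        (measurable_const_smul (b n))).aestronglyMeasurable
    · intro n
      refine Eventually.of_forall fun v => ?_
      rw [norm_mul, Real.norm_of_nonneg (hK.nonneg v)]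
      have : ‖(ball (0 : EE d) δ).indicator (fun _ => (1 : ℝ)) (b n • v)‖ ≤ 1 := by
        by_cases hv : b n • v ∈ ball (0 : EE d) δ <;> simp [Set.indicator, hv]
      nlinarith [hK.nonneg v]
    · refine Eventually.of_forall fun v => ?_
      have h0 : Tendsto (fun n => b n • v) atTop (𝓝 0) := by
        simpa using hb0.smul_const v
      have h1 : ∀ᶠ n in atTop, b n • v ∈ ball (0 : EE d) δ := h0 (ball_mem_nhds _ hδ)
      refine tendsto_const_nhds.congr' ?_
      filter_upwards [h1] with n hn
      rw [Set.indicator_of_mem hn, one_mul]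
  rw [hK.int1] at lim
  filter_upwards [lim.eventually (lt_mem_nhds (show 1 - ε < 1 by linarith))] with n hn x
  rw [key]; exact hn.le

/-- inner mass of a ball seen from one of its points -/
theorem inner (hK : Ker K rK CK L) {r : ℝ} (hr : 0 < r) :
    ∃ c0 > 0, ∀ b, 0 < b → b ≤ 1 → ∀ x0 x : EE d, x ∈ ball x0 r →
      c0 ≤ ∫ y in ball x0 r, kb K b (x - y) := by
  have h0 : ∀ᶠ v in 𝓝 (0 : EE d), K 0 / 2 < K v :=
    hK.lip.continuous.continuousAt.eventually (lt_mem_nhds (by linarith [hK.pos0]))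
  obtain ⟨ρ, hρ, hρK⟩ := Metric.eventually_nhds_iff_ball.1 h0
  set s := min ρ r with hs
  have hs0 : 0 < s := lt_min hρ hr
  have hvol : 0 < (volume : Measure (EE d)).real (ball (0 : EE d) (s / 2)) :=
    ENNReal.toReal_pos (measure_ball_pos _ _ (by positivity)).ne' measure_ball_lt_top.ne
  refine ⟨K 0 / 2 * (volume : Measure (EE d)).real (ball (0 : EE d) (s / 2)),
    mul_pos (by linarith [hK.pos0]) hvol, ?_⟩
  intro b hb hb1 x0 x hx
  rw [← integral_indicator measurableSet_ball]
  have e : (ball x0 r).indicator (fun y => kb K b (x - y))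
      = fun y => (ball x0 r).indicator (fun _ => (1 : ℝ)) y * kb K b (x - y) := by
    ext y; by_cases hy : y ∈ ball x0 r <;> simp [hy]
  rw [e, int_kb (K := K) hb]
  set v0 : EE d := (s / (2 * r)) • (x - x0) with hv0
  have hxn : ‖x - x0‖ < r := by simpa [dist_eq_norm] using hx
  have hv0n : ‖v0‖ ≤ s / 2 := by
    rw [hv0, norm_smul, Real.norm_of_nonneg (by positivity)]
    calc s / (2 * r) * ‖x - x0‖ ≤ s / (2 * r) * r := by gcongr
      _ = s / 2 := by field_simp
  have hvr : (volume : Measure (EE d)).real (ball v0 (s / 2))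
      = (volume : Measure (EE d)).real (ball (0 : EE d) (s / 2)) := by
    simp only [Measure.real, Measure.addHaar_ball_center]
  calc K 0 / 2 * (volume : Measure (EE d)).real (ball (0 : EE d) (s / 2))
      = ∫ v in ball v0 (s / 2), K 0 / 2 := by
        rw [setIntegral_const, hvr, smul_eq_mul, mul_comm]
    _ = ∫ v, (ball v0 (s / 2)).indicator (fun _ => K 0 / 2) v := by
        rw [integral_indicator measurableSet_ball]
    _ ≤ _ := by
        refine integral_mono_of_nonneg ?_ ?_ ?_
        · refine Eventually.of_forall fun v => ?_
          exact Set.indicator_nonneg (fun _ _ => by linarith [hK.pos0]) v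
        · refine (hK.integrable.norm.mono' ?_ ?_)
          · refine AEStronglyMeasurable.mul ?_ hK.integrable.aestronglyMeasurable
            exact ((measurable_const.indicator measurableSet_ball).comp
              (by fun_prop : Measurable fun v : EE d => x - b • v)).aestronglyMeasurable
          · refine Eventually.of_forall fun v => ?_
            rw [norm_mul]
            have : ‖(ball x0 r).indicator (fun _ => (1 : ℝ)) (x - b • v)‖ ≤ 1 := by
              by_cases hv : x - b • v ∈ ball x0 r <;> simp [Set.indicator, hv]
            nlinarith [norm_nonneg (K v)]
        · refine Eventually.of_forall fun v => ?_
          simp only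
          by_cases hv : v ∈ ball v0 (s / 2)
          · have hw : ‖v - v0‖ < s / 2 := by simpa [dist_eq_norm] using hv
            have hvn : v ∈ ball (0 : EE d) ρ := by
              rw [mem_ball_zero_iff]
              calc ‖v‖ = ‖(v - v0) + v0‖ := by simp
                _ ≤ ‖v - v0‖ + ‖v0‖ := norm_add_le _ _
                _ < s / 2 + s / 2 := by linarith
                _ = s := by ring
                _ ≤ ρ := min_le_left _ _
            have hin : x - b • v ∈ ball x0 r := by
              rw [mem_ball_iff_norm]
              have e1 : x - b • v - x0 = (1 - b * (s / (2 * r))) • (x - x0) - b • (v - v0) := by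
                rw [hv0]; module
              have hle : b * (s / (2 * r)) ≤ 1 := by
                have : s / (2 * r) ≤ 1 := by
                  rw [div_le_one (by positivity)]
                  linarith [min_le_right ρ r]
                have h0 : 0 ≤ s / (2 * r) := by positivity
                nlinarith
              calc ‖x - b • v - x0‖ ≤ ‖(1 - b * (s / (2 * r))) • (x - x0)‖ + ‖b • (v - v0)‖ := by
                    rw [e1]; exact norm_sub_le _ _
                _ = (1 - b * (s / (2 * r))) * ‖x - x0‖ + b * ‖v - v0‖ := by
                    rw [norm_smul, norm_smul, Real.norm_of_nonneg hb.le,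
                      Real.norm_of_nonneg (by linarith)]
                _ < (1 - b * (s / (2 * r))) * r + b * (s / 2) := by
                    refine add_lt_add_of_le_of_lt ?_ ?_
                    · exact mul_le_mul_of_nonneg_left hxn.le (by linarith)
                    · exact mul_lt_mul_of_pos_left hw hb
                _ = r := by field_simp; ring
            rw [Set.indicator_of_mem hv, Set.indicator_of_mem hin, one_mul]
            exact (hρK v hvn).le
          · rw [Set.indicator_of_notMem hv]
            exact mul_nonneg (Set.indicator_nonneg (fun _ _ => zero_le_one) _) (hK.nonneg v)

end Ker


open MeasureTheory Filter Metric
open scoped Topology ENNReal NNReal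

/-! ### The pathwise setting -/

structure Dat (d : ℕ) where
  eta : ℝ
  f : EE d → ℝ
  q0 : EE d → ℝ
  K : EE d → ℝ
  γ : ℕ → ℝ
  b : ℕ → ℝ
  lam : ℕ → ℝ
  X : ℕ → EE d
  g : ℕ → EE d → ℝ
  q : ℕ → EE d → ℝ
  c : ℝ
  Bf : ℝ
  Bq : ℝ
  rK : ℝ
  CK : ℝ
  L : ℝ≥0

/-- truncated weight -/
noncomputable def phiT {d : ℕ} (eta c l : ℝ) (f q : EE d → ℝ) (y : EE d) : ℝ :=
  if c * l * f y ≤ 2 * q y then (f y / q y) ^ eta else 0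

namespace Dat
variable {d : ℕ} (D : Dat d)

noncomputable def Phi (k : ℕ) (y : EE d) : ℝ := phiT D.eta D.c (D.lam k) D.f (D.q k) y

noncomputable def h (k : ℕ) (x : EE d) : ℝ :=
  ∫ y, D.Phi k y * D.q k y * kb D.K (D.b (k + 1)) (x - y)

noncomputable def Gh (n : ℕ) (x : EE d) : ℝ :=
  avg D.γ (fun k => D.Phi k (D.X (k + 1)) * kb D.K (D.b (k + 1)) (x - D.X (k + 1))) n

noncomputable def Hh (n : ℕ) (x : EE d) : ℝ := avg D.γ (fun k => D.h k x) n

noncomputable def Zh (n : ℕ) : ℝ := avg D.γ (fun k => D.Phi k (D.X (k + 1))) n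

noncomputable def z (n : ℕ) : ℝ := ∫ x, D.g n x

noncomputable def W (k : ℕ) : ℝ := (D.f (D.X (k + 1)) / D.q k (D.X (k + 1))) ^ D.eta

end Dat

/-- static assumptions -/
structure Stat {d : ℕ} (D : Dat d) : Prop where
  ker : Ker D.K D.rK D.CK D.L
  wt : Wt D.γ
  eta0 : 0 < D.eta
  eta1 : D.eta < 1
  f0 : ∀ x, 0 ≤ D.f x
  fB : ∀ x, D.f x ≤ D.Bf
  Bf0 : 0 < D.Bf
  fcont : Continuous D.f
  fint : Integrable D.f
  fint1 : ∫ x, D.f x = 1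
  q00 : ∀ x, 0 ≤ D.q0 x
  q0B : ∀ x, D.q0 x ≤ D.Bq
  Bq0 : 0 < D.Bq
  q0cont : Continuous D.q0
  q0int : Integrable D.q0
  q0int1 : ∫ x, D.q0 x = 1
  c0 : 0 < D.c
  cf : ∀ x, D.c * D.f x ≤ D.q0 x
  bpos : ∀ n, 0 < D.b n
  b1 : ∀ n, D.b n ≤ 1
  banti : Antitone D.b
  b0 : Tendsto D.b atTop (𝓝 0)
  lpos : ∀ n, 0 < D.lam n
  l1 : ∀ n, D.lam n ≤ 1 / 2
  lanti : Antitone D.lam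
  l0 : Tendsto D.lam atTop (𝓝 0)
  rate : Tendsto (fun n => D.γ n / (D.lam n * D.b n ^ d)) atTop (𝓝 0)

structure Traj {d : ℕ} (D : Dat d) : Prop extends Stat D where
  g0b : ∃ C, ∀ x, |D.g 0 x| ≤ C
  g0c : Continuous (D.g 0)
  g0i : Integrable (D.g 0)
  grec : ∀ n x, D.g (n + 1) x = (1 - D.γ (n + 1)) * D.g n x
    + D.γ (n + 1) * D.W n * kb D.K (D.b (n + 1)) (x - D.X (n + 1))
  qdef : ∀ n x, D.q n x = (1 - D.lam n) * (D.g n x / D.z n) + D.lam n * D.q0 x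
  qnn : ∀ n x, 0 ≤ D.q n x
  qint : ∀ n, ∫ x, D.q n x = 1
  noise : ∀ ε : ℝ, 0 < ε → ε ≤ 1 → ∀ R : ℝ, ∃ e : ℕ → ℝ,
    Tendsto (fun n => e n / D.lam n ^ (1 - D.eta)) atTop (𝓝 0) ∧
    ∀ᶠ n in atTop, (∀ x, ‖x‖ ≤ R → (1 - ε) * D.Hh n x - e n ≤ D.Gh n x ∧
      D.Gh n x ≤ (1 + ε) * D.Hh n x + e n) ∧ D.Zh n ≤ 1 + ε + e n

section phiT
variable {d : ℕ} {eta c l : ℝ} {f q : EE d → ℝ}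

theorem phiT_nonneg (hf : ∀ x, 0 ≤ f x) (hq : ∀ x, 0 ≤ q x) (y : EE d) :
    0 ≤ phiT eta c l f q y := by
  unfold phiT
  split_ifs
  · exact Real.rpow_nonneg (div_nonneg (hf y) (hq y)) _
  · exact le_rfl

theorem phiT_le_W (hf : ∀ x, 0 ≤ f x) (hq : ∀ x, 0 ≤ q x) (y : EE d) :
    phiT eta c l f q y ≤ (f y / q y) ^ eta := by
  unfold phiT
  split_ifs
  · exact le_rfl
  · exact Real.rpow_nonneg (div_nonneg (hf y) (hq y)) _

theorem phiT_eq (y : EE d) (h : c * l * f y ≤ 2 * q y) :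
    phiT eta c l f q y = (f y / q y) ^ eta := by
  unfold phiT; rw [if_pos h]

theorem phiT_le (heta : 0 < eta) (hf : ∀ x, 0 ≤ f x) (hq : ∀ x, 0 ≤ q x) (hc : 0 < c) (hl : 0 < l)
    (y : EE d) : phiT eta c l f q y ≤ (2 / (c * l)) ^ eta := by
  unfold phiT
  split_ifs with h
  · have hcl : 0 < c * l := mul_pos hc hl
    refine Real.rpow_le_rpow (div_nonneg (hf y) (hq y)) ?_ heta.le
    rcases (hq y).eq_or_lt with h0 | h0
    · rw [← h0, div_zero]; positivity
    · rw [div_le_div_iff₀ h0 hcl]; linarith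
  · positivity

theorem Wq_eq (heta : 0 < eta) (heta1 : eta < 1) (y : EE d) (hf : 0 ≤ f y) (hq : 0 ≤ q y) :
    (f y / q y) ^ eta * q y = f y ^ eta * q y ^ (1 - eta) := by
  rcases hq.eq_or_lt with h0 | h0
  · rw [← h0, div_zero, Real.zero_rpow heta.ne', Real.zero_rpow (by linarith : 1 - eta ≠ 0)]
    simp
  · rw [Real.div_rpow hf hq, div_mul_eq_mul_div, mul_div_assoc]
    congr 1
    rw [Real.rpow_sub h0, Real.rpow_one]

theorem phiT_q_le (heta : 0 < eta) (heta1 : eta < 1) (hf : ∀ x, 0 ≤ f x) (hq : ∀ x, 0 ≤ q x)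
    (y : EE d) : phiT eta c l f q y * q y ≤ f y ^ eta * q y ^ (1 - eta) := by
  rw [← Wq_eq heta heta1 y (hf y) (hq y)]
  exact mul_le_mul_of_nonneg_right (phiT_le_W hf hq y) (hq y)

theorem phiT_q_eq (heta : 0 < eta) (heta1 : eta < 1) (hf : ∀ x, 0 ≤ f x) (hq : ∀ x, 0 ≤ q x)
    (y : EE d) (h : c * l * f y ≤ 2 * q y) :
    phiT eta c l f q y * q y = f y ^ eta * q y ^ (1 - eta) := by
  rw [← Wq_eq heta heta1 y (hf y) (hq y), phiT_eq y h]

theorem phiT_q_am (heta : 0 < eta) (heta1 : eta < 1) (hf : ∀ x, 0 ≤ f x) (hq : ∀ x, 0 ≤ q x)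
    (y : EE d) : phiT eta c l f q y * q y ≤ eta * f y + (1 - eta) * q y :=
  (phiT_q_le heta heta1 hf hq y).trans
    (Real.geom_mean_le_arith_mean2_weighted heta.le (by linarith) (hf y) (hq y) (by ring))

theorem phiT_meas (hf : Measurable f) (hq : Measurable q) : Measurable (phiT eta c l f q) := by
  unfold phiT
  refine Measurable.ite ?_ ?_ measurable_const
  · exact measurableSet_le (hf.const_mul _) (hq.const_mul _)
  · exact (hf.div hq).pow_const _

theorem phiT_q_integrable (heta : 0 < eta) (heta1 : eta < 1) (hf : ∀ x, 0 ≤ f x)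
    (hq : ∀ x, 0 ≤ q x) (hfm : Measurable f) (hqm : Measurable q) (hfi : Integrable f)
    (hqi : Integrable q) : Integrable (fun y => phiT eta c l f q y * q y) := by
  refine Integrable.mono' ((hfi.const_mul eta).add (hqi.const_mul (1 - eta)))
    ((phiT_meas hfm hqm).mul hqm).aestronglyMeasurable (Eventually.of_forall fun y => ?_)
  rw [Real.norm_of_nonneg (mul_nonneg (phiT_nonneg hf hq y) (hq y))]
  exact phiT_q_am heta heta1 hf hq y

theorem phiT_q_int_le (heta : 0 < eta) (heta1 : eta < 1) (hf : ∀ x, 0 ≤ f x)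
    (hq : ∀ x, 0 ≤ q x) (hfm : Measurable f) (hqm : Measurable q) (hfi : Integrable f)
    (hqi : Integrable q) (hf1 : ∫ x, f x = 1) (hq1 : ∫ x, q x = 1) :
    ∫ y, phiT eta c l f q y * q y ≤ 1 := by
  calc ∫ y, phiT eta c l f q y * q y ≤ ∫ y, (eta * f y + (1 - eta) * q y) :=
        integral_mono (phiT_q_integrable heta heta1 hf hq hfm hqm hfi hqi)
          ((hfi.const_mul eta).add (hqi.const_mul (1 - eta)))
          (phiT_q_am heta heta1 hf hq)
    _ = 1 := by
        rw [integral_add (hfi.const_mul eta) (hqi.const_mul (1 - eta)), integral_const_mul,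
          integral_const_mul, hf1, hq1]
        ring

end phiT

namespace Traj
variable {d : ℕ} {D : Dat d}

theorem gcont (hP : Traj D) (n : ℕ) : Continuous (D.g n) := by
  induction n with
  | zero => exact hP.g0c
  | succ n ih =>
    have : D.g (n + 1) = fun x => (1 - D.γ (n + 1)) * D.g n x
      + D.γ (n + 1) * D.W n * kb D.K (D.b (n + 1)) (x - D.X (n + 1)) := funext (hP.grec n)
    rw [this]
    exact (continuous_const.mul ih).add (continuous_const.mul
      ((hP.ker.kb_cont _).comp (continuous_id.sub continuous_const)))

theorem gint (hP : Traj D) (n : ℕ) : Integrable (D.g n) := by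
  induction n with
  | zero => exact hP.g0i
  | succ n ih =>
    have : D.g (n + 1) = fun x => (1 - D.γ (n + 1)) * D.g n x
      + D.γ (n + 1) * D.W n * kb D.K (D.b (n + 1)) (x - D.X (n + 1)) := funext (hP.grec n)
    rw [this]
    exact (ih.const_mul _).add ((hP.ker.kb_integrable_r (hP.bpos _) _).const_mul _)

theorem qcont (hP : Traj D) (n : ℕ) : Continuous (D.q n) := by
  have : D.q n = fun x => (1 - D.lam n) * (D.g n x / D.z n) + D.lam n * D.q0 x :=
    funext (hP.qdef n)
  rw [this]
  exact (continuous_const.mul ((hP.gcont n).div_const _)).add (continuous_const.mul hP.q0cont)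

theorem qi (hP : Traj D) (n : ℕ) : Integrable (D.q n) := by
  by_contra h
  have := hP.qint n
  rw [integral_undef h] at this
  exact zero_ne_one this

theorem W_nonneg (hP : Traj D) (n : ℕ) : 0 ≤ D.W n :=
  Real.rpow_nonneg (div_nonneg (hP.f0 _) (hP.qnn _ _)) _

theorem z_succ (hP : Traj D) (n : ℕ) :
    D.z (n + 1) = (1 - D.γ (n + 1)) * D.z n + D.γ (n + 1) * D.W n := by
  unfold Dat.z
  rw [integral_congr_ae (Eventually.of_forall (hP.grec n)),
    integral_add ((hP.gint n).const_mul _)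
      ((hP.ker.kb_integrable_r (hP.bpos _) _).const_mul _), integral_const_mul,
    integral_const_mul, hP.ker.kb_int_r (hP.bpos _), mul_one]

theorem z_ne (hP : Traj D) (n : ℕ) : D.z n ≠ 0 := by
  intro h
  have h1 := hP.qint n
  rw [integral_congr_ae (Eventually.of_forall (hP.qdef n)), h] at h1
  simp only [div_zero, mul_zero, zero_add] at h1
  rw [integral_const_mul, hP.q0int1] at h1
  linarith [hP.l1 n]

theorem Phi_nonneg (hP : Traj D) (k : ℕ) (y : EE d) : 0 ≤ D.Phi k y :=
  phiT_nonneg hP.f0 (hP.qnn k) y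

theorem Phiq_nonneg (hP : Traj D) (k : ℕ) (y : EE d) : 0 ≤ D.Phi k y * D.q k y :=
  mul_nonneg (hP.Phi_nonneg k y) (hP.qnn k y)

theorem Phiq_int (hP : Traj D) (k : ℕ) : Integrable (fun y => D.Phi k y * D.q k y) :=
  phiT_q_integrable hP.eta0 hP.eta1 hP.f0 (hP.qnn k) hP.fcont.measurable
    (hP.qcont k).measurable hP.fint (hP.qi k)

theorem Phiq_int_le (hP : Traj D) (k : ℕ) : ∫ y, D.Phi k y * D.q k y ≤ 1 :=
  phiT_q_int_le hP.eta0 hP.eta1 hP.f0 (hP.qnn k) hP.fcont.measurable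
    (hP.qcont k).measurable hP.fint (hP.qi k) hP.fint1 (hP.qint k)

theorem Phiq_le (hP : Traj D) (k : ℕ) (y : EE d) :
    D.Phi k y * D.q k y ≤ D.f y ^ D.eta * D.q k y ^ (1 - D.eta) :=
  phiT_q_le hP.eta0 hP.eta1 hP.f0 (hP.qnn k) y

theorem h_integrable (hP : Traj D) (k : ℕ) (x : EE d) :
    Integrable (fun y => D.Phi k y * D.q k y * kb D.K (D.b (k + 1)) (x - y)) := by
  refine (hP.Phiq_int k).mul_bdd (c := D.CK * (D.b (k + 1) ^ d)⁻¹) ?_ ?_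
  · exact ((hP.ker.kb_cont _).comp (continuous_const.sub continuous_id)).aestronglyMeasurable
  · refine Eventually.of_forall fun y => ?_
    rw [Real.norm_of_nonneg (hP.ker.kb_nonneg (hP.bpos _) _)]
    exact hP.ker.kb_le (hP.bpos _) _

theorem hint_nonneg (hP : Traj D) (k : ℕ) (x y : EE d) :
    0 ≤ D.Phi k y * D.q k y * kb D.K (D.b (k + 1)) (x - y) :=
  mul_nonneg (hP.Phiq_nonneg k y) (hP.ker.kb_nonneg (hP.bpos _) _)

theorem h_nonneg (hP : Traj D) (k : ℕ) (x : EE d) : 0 ≤ D.h k x :=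
  integral_nonneg fun y => hP.hint_nonneg k x y

theorem h_le (hP : Traj D) (k : ℕ) (x : EE d) : D.h k x ≤ D.CK * (D.b (k + 1) ^ d)⁻¹ := by
  have hb := hP.bpos (k + 1)
  have hC := hP.ker.Cpos
  calc D.h k x ≤ ∫ y, D.Phi k y * D.q k y * (D.CK * (D.b (k + 1) ^ d)⁻¹) := by
        refine integral_mono (hP.h_integrable k x) ((hP.Phiq_int k).mul_const _) fun y => ?_
        exact mul_le_mul_of_nonneg_left (hP.ker.kb_le hb _) (hP.Phiq_nonneg k y)
    _ = (∫ y, D.Phi k y * D.q k y) * (D.CK * (D.b (k + 1) ^ d)⁻¹) := by rw [integral_mul_const]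
    _ ≤ 1 * (D.CK * (D.b (k + 1) ^ d)⁻¹) := by
        refine mul_le_mul_of_nonneg_right (hP.Phiq_int_le k) (by positivity)
    _ = _ := one_mul _

theorem Hh_nonneg (hP : Traj D) (n : ℕ) (x : EE d) : 0 ≤ D.Hh n x :=
  hP.wt.avg_nonneg n fun k _ => hP.h_nonneg k x

theorem bd_le (hP : Traj D) {m n : ℕ} (h : m ≤ n) : (D.b m ^ d)⁻¹ ≤ (D.b n ^ d)⁻¹ := by
  have := hP.bpos n
  have h2 := hP.banti h
  gcongr

theorem Hh_le (hP : Traj D) (n : ℕ) (x : EE d) : D.Hh n x ≤ D.CK * (D.b n ^ d)⁻¹ := by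
  have hb := hP.bpos n
  have hC := hP.ker.Cpos
  refine hP.wt.avg_le_bound n (by positivity) fun k hk => (hP.h_le k x).trans ?_
  exact mul_le_mul_of_nonneg_left (hP.bd_le hk) hC.le

theorem Hh_succ (n : ℕ) (x : EE d) :
    D.Hh (n + 1) x = (1 - D.γ (n + 1)) * D.Hh n x + D.γ (n + 1) * D.h n x := rfl

theorem Zh_nonneg (hP : Traj D) (n : ℕ) : 0 ≤ D.Zh n :=
  hP.wt.avg_nonneg n fun k _ => hP.Phi_nonneg k _

theorem Gh_nonneg (hP : Traj D) (n : ℕ) (x : EE d) : 0 ≤ D.Gh n x :=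
  hP.wt.avg_nonneg n fun k _ => mul_nonneg (hP.Phi_nonneg k _) (hP.ker.kb_nonneg (hP.bpos _) _)

theorem g_bdd (hP : Traj D) (n : ℕ) : ∃ C, 0 ≤ C ∧ ∀ x, |D.g n x| ≤ C := by
  induction n with
  | zero =>
    obtain ⟨C, hC⟩ := hP.g0b
    exact ⟨C, (abs_nonneg _).trans (hC 0), hC⟩
  | succ n ih =>
    obtain ⟨C, hC0, hC⟩ := ih
    have hb := hP.bpos (n + 1)
    have hCK := hP.ker.Cpos
    have hW := hP.W_nonneg n
    have hg := hP.wt.pos (n + 1)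
    have hg1 := hP.wt.half (n + 1)
    refine ⟨C + D.γ (n + 1) * D.W n * (D.CK * (D.b (n + 1) ^ d)⁻¹), by positivity, fun x => ?_⟩
    rw [hP.grec]
    refine (abs_add_le _ _).trans (add_le_add ?_ ?_)
    · rw [abs_mul, abs_of_nonneg (by linarith : 0 ≤ 1 - D.γ (n + 1))]
      nlinarith [hC x, abs_nonneg (D.g n x)]
    · rw [abs_of_nonneg (mul_nonneg (by positivity) (hP.ker.kb_nonneg hb _))]
      exact mul_le_mul_of_nonneg_left (hP.ker.kb_le hb _) (by positivity)

theorem Gh_bdd (hP : Traj D) (n : ℕ) : ∃ C, 0 ≤ C ∧ ∀ x, |D.Gh n x| ≤ C := by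
  induction n with
  | zero => exact ⟨0, le_rfl, fun x => by simp [Dat.Gh, avg]⟩
  | succ n ih =>
    obtain ⟨C, hC0, hC⟩ := ih
    have hb := hP.bpos (n + 1)
    have hCK := hP.ker.Cpos
    have hW := hP.Phi_nonneg n (D.X (n + 1))
    have hg := hP.wt.pos (n + 1)
    have hg1 := hP.wt.half (n + 1)
    refine ⟨C + D.γ (n + 1) * (D.Phi n (D.X (n + 1)) * (D.CK * (D.b (n + 1) ^ d)⁻¹)),
      by positivity, fun x => ?_⟩
    unfold Dat.Gh
    rw [avg_succ]
    refine (abs_add_le _ _).trans (add_le_add ?_ ?_)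
    · rw [abs_mul, abs_of_nonneg (by linarith : 0 ≤ 1 - D.γ (n + 1))]
      have := hC x
      unfold Dat.Gh at this
      nlinarith [abs_nonneg (avg D.γ (fun k => D.Phi k (D.X (k + 1)) *
        kb D.K (D.b (k + 1)) (x - D.X (k + 1))) n)]
    · have := hP.ker.kb_nonneg hb (x - D.X (n + 1))
      rw [abs_of_nonneg (by positivity)]
      have := hP.ker.kb_le hb (x - D.X (n + 1))
      gcongr

end Traj


open MeasureTheory Filter Metric
open scoped Topology ENNReal NNReal

/-- The goal -/
def UB {d : ℕ} (D : Dat d) : Prop :=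
  ∀ A : Set (EE d), IsCompact A → ∀ ε : ℝ, 0 < ε → ∀ᶠ n in atTop, ∀ x ∈ A,
    D.g n x ≤ D.f x + ε

namespace Traj
variable {d : ℕ} {D : Dat d}

theorem ub_of_bound (hP : Traj D) {u : ℕ → ℝ} (hu : Tendsto u atTop (𝓝 0))
    (h : ∀ᶠ n in atTop, ∀ x, D.g n x ≤ u n) : UB D := by
  intro A _ ε hε
  filter_upwards [h, hu.eventually (gt_mem_nhds hε)] with n h1 h2 x _
  linarith [h1 x, hP.f0 x]

theorem P_over (hP : Traj D) : Tendsto (fun n => PP D.γ n / (D.lam n * D.b n ^ d)) atTop (𝓝 0) := by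
  have h1 : Tendsto (fun n => (D.γ 0)⁻¹ * (D.γ n / (D.lam n * D.b n ^ d))) atTop (𝓝 0) := by
    simpa using hP.rate.const_mul (D.γ 0)⁻¹
  refine squeeze_zero (fun n => ?_) (fun n => ?_) h1
  · have := hP.wt.PP_pos n
    have := hP.lpos n
    have := hP.bpos n
    positivity
  · have := hP.lpos n
    have := hP.bpos n
    rw [← mul_div_assoc]
    exact div_le_div_of_nonneg_right (hP.wt.PP_le' n) (by positivity)

theorem lb_le (hP : Traj D) (n : ℕ) : D.lam n * D.b n ^ d ≤ D.lam n := by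
  have := hP.lpos n
  have := (hP.bpos n).le
  have := pow_le_one₀ (n := d) this (hP.b1 n)
  nlinarith

/-- `C * P_n ≤ lam_n` eventually -/
theorem ev_P (hP : Traj D) (C : ℝ) : ∀ᶠ n in atTop, C * PP D.γ n ≤ D.lam n := by
  have h1 : Tendsto (fun n => |C| * (PP D.γ n / (D.lam n * D.b n ^ d))) atTop (𝓝 0) := by
    simpa using hP.P_over.const_mul |C|
  filter_upwards [h1.eventually (gt_mem_nhds one_pos)] with n hn
  have h2 := hP.lpos n
  have h3 := hP.bpos n
  have h4 := hP.wt.PP_pos n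
  rw [← mul_div_assoc, div_lt_one (by positivity)] at hn
  have h5 := hP.lb_le n
  have h6 := le_abs_self C
  nlinarith

theorem ev_γ (hP : Traj D) (C : ℝ) : ∀ᶠ n in atTop, C * D.γ n ≤ D.lam n * D.b n ^ d := by
  have h1 : Tendsto (fun n => |C| * (D.γ n / (D.lam n * D.b n ^ d))) atTop (𝓝 0) := by
    simpa using hP.rate.const_mul |C|
  filter_upwards [h1.eventually (gt_mem_nhds one_pos)] with n hn
  have h2 := hP.lpos n
  have h3 := hP.bpos n
  have h4 := hP.wt.pos n
  rw [← mul_div_assoc, div_lt_one (by positivity)] at hn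
  have h6 := le_abs_self C
  nlinarith

theorem z_ge (hP : Traj D) {m n : ℕ} (h : m ≤ n) : PP D.γ n / PP D.γ m * D.z m ≤ D.z n :=
  hP.wt.rec_ge h fun k _ _ => by
    rw [hP.z_succ]
    have := mul_nonneg (hP.wt.pos (k + 1)).le (hP.W_nonneg k)
    linarith

/-- the degenerate case of negative normalisation -/
theorem s0 (hP : Traj D) (h : ∀ n, D.z n ≤ 0) : UB D := by
  have h1 : ∀ n, D.z 0 ≤ D.z n := by
    intro n
    have h2 := hP.z_ge (Nat.zero_le n)
    have h3 := hP.wt.div_le_one' (Nat.zero_le n)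
    nlinarith [h 0]
  have hu : Tendsto (fun n => 2 * D.lam n * |D.z 0| * D.Bq) atTop (𝓝 0) := by
    have := ((hP.l0.const_mul 2).mul_const |D.z 0|).mul_const D.Bq
    simpa using this
  refine hP.ub_of_bound hu (Eventually.of_forall fun n x => ?_)
  have hz : D.z n < 0 := lt_of_le_of_ne (h n) (hP.z_ne n)
  have h4 := hP.qnn n x
  rw [hP.qdef] at h4
  have hl := hP.l1 n
  have hl0 := hP.lpos n
  have e : D.g n x = (D.g n x / D.z n) * D.z n := (div_mul_cancel₀ _ hz.ne).symm
  set t := D.g n x / D.z n with ht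
  have h5 : - t ≤ 2 * D.lam n * D.Bq := by
    by_contra hcon
    push Not at hcon
    have h8 := mul_le_mul_of_nonneg_left (hP.q0B x) hl0.le
    have h9 : 0 < 2 * D.lam n * D.Bq := by have := hP.Bq0; positivity
    nlinarith
  rw [e]
  have h6 : -D.z n ≤ |D.z 0| := by rw [abs_of_nonpos (h 0)]; linarith [h1 n]
  have h7 : 0 ≤ 2 * D.lam n * D.Bq := by have := hP.Bq0; positivity
  calc t * D.z n = (-t) * (-D.z n) := by ring
    _ ≤ 2 * D.lam n * D.Bq * (-D.z n) := mul_le_mul_of_nonneg_right h5 (by linarith)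
    _ ≤ 2 * D.lam n * D.Bq * |D.z 0| := mul_le_mul_of_nonneg_left h6 h7
    _ = _ := by ring

theorem z_pos (hP : Traj D) {T : ℕ} (hT : 0 < D.z T) {n : ℕ} (h : T ≤ n) : 0 < D.z n :=
  lt_of_lt_of_le (mul_pos (div_pos (hP.wt.PP_pos n) (hP.wt.PP_pos T)) hT) (hP.z_ge h)

theorem g_rec_ge (hP : Traj D) (x : EE d) {m n : ℕ} (h : m ≤ n) :
    PP D.γ n / PP D.γ m * D.g m x ≤ D.g n x :=
  hP.wt.rec_ge (A := fun n => D.g n x) h fun k _ _ => by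
    have h1 := hP.grec k x
    have h2 := mul_nonneg (mul_nonneg (hP.wt.pos (k + 1)).le (hP.W_nonneg k))
      (hP.ker.kb_nonneg (hP.bpos (k + 1)) (x - D.X (k + 1)))
    linarith

theorem s2 (hP : Traj D) {T : ℕ} (hT : 0 < D.z T) :
    ∃ C1, 0 ≤ C1 ∧ ∀ n, T ≤ n → ∀ x, -(C1 * PP D.γ n * D.q0 x) ≤ D.g n x := by
  refine ⟨D.z T / PP D.γ T, (div_pos hT (hP.wt.PP_pos T)).le, fun n hn x => ?_⟩
  have h1 := hP.g_rec_ge x hn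
  have h4 := hP.qnn T x
  rw [hP.qdef] at h4
  have hl := hP.l1 T
  have hl0 := hP.lpos T
  have e : D.g T x = (D.g T x / D.z T) * D.z T := by field_simp
  set t := D.g T x / D.z T with ht
  have h5 : - t ≤ D.q0 x := by
    by_contra hcon
    push Not at hcon
    have := hP.q00 x
    nlinarith
  have h6 : -(D.z T * D.q0 x) ≤ D.g T x := by rw [e]; nlinarith
  have h7 := hP.wt.div_nonneg' T n
  calc -(D.z T / PP D.γ T * PP D.γ n * D.q0 x) = PP D.γ n / PP D.γ T * -(D.z T * D.q0 x) := by ring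
    _ ≤ PP D.γ n / PP D.γ T * D.g T x := mul_le_mul_of_nonneg_left h6 h7
    _ ≤ _ := h1

/-- no truncation at time n -/
def Good (D : Dat d) (n : ℕ) : Prop := ∀ x, D.lam n * D.q0 x ≤ 2 * D.q n x

theorem s3 (hP : Traj D) {n : ℕ} (hz : 0 < D.z n) {C1 : ℝ}
    (hg : ∀ x, -(C1 * PP D.γ n * D.q0 x) ≤ D.g n x)
    (h : 2 * C1 * PP D.γ n ≤ D.lam n * D.z n) : Good D n := by
  intro x
  rw [hP.qdef]
  have hl := hP.l1 n
  have hl0 := hP.lpos n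
  have h1 : -(D.lam n / 2 * D.q0 x) ≤ D.g n x / D.z n := by
    rw [le_div_iff₀ hz]
    have := hg x
    have := hP.q00 x
    nlinarith
  have h2 := hP.q00 x
  have h3 : 0 ≤ D.lam n / 2 * D.q0 x := by positivity
  nlinarith

theorem Good.cond (hP : Traj D) {n : ℕ} (h : Good D n) (y : EE d) :
    D.c * D.lam n * D.f y ≤ 2 * D.q n y := by
  have h1 := h y
  have h2 := hP.cf y
  have h3 := hP.lpos n
  nlinarith

theorem W_eq (hP : Traj D) {n : ℕ} (h : Good D n) : D.W n = D.Phi n (D.X (n + 1)) :=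
  (phiT_eq _ (h.cond hP _)).symm

theorem W_ge (hP : Traj D) (n : ℕ) : D.Phi n (D.X (n + 1)) ≤ D.W n :=
  phiT_le_W hP.f0 (hP.qnn n) _

theorem Gh_succ (n : ℕ) (x : EE d) : D.Gh (n + 1) x = (1 - D.γ (n + 1)) * D.Gh n x
    + D.γ (n + 1) * (D.Phi n (D.X (n + 1)) * kb D.K (D.b (n + 1)) (x - D.X (n + 1))) := rfl

theorem Zh_succ (n : ℕ) : D.Zh (n + 1) = (1 - D.γ (n + 1)) * D.Zh n
    + D.γ (n + 1) * D.Phi n (D.X (n + 1)) := rfl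

theorem s4 (hP : Traj D) : ∃ C3, 0 ≤ C3 ∧ ∀ n x, D.Gh n x - C3 * PP D.γ n ≤ D.g n x := by
  obtain ⟨C, hC0, hC⟩ := hP.g_bdd 0
  refine ⟨C, hC0, fun n x => ?_⟩
  have := hP.wt.rec_ge (A := fun n => D.g n x - D.Gh n x) (Nat.zero_le n) fun k _ _ => by
    rw [hP.grec, Gh_succ]
    have h1 := hP.W_ge k
    have h2 := hP.ker.kb_nonneg (hP.bpos (k + 1)) (x - D.X (k + 1))
    have h3 := hP.wt.pos (k + 1)
    have h4 := mul_le_mul_of_nonneg_left (mul_le_mul_of_nonneg_right h1 h2) h3.le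
    linarith
  have e : PP D.γ 0 = 1 := by simp [PP]
  have e2 : D.Gh 0 x = 0 := rfl
  simp only [e, e2, div_one, sub_zero] at this
  have h5 := (abs_le.1 (hC x)).1
  have h6 := hP.wt.PP_pos n
  nlinarith

theorem s4g (hP : Traj D) {m n : ℕ} (hmn : m ≤ n) (hg : ∀ k, m ≤ k → k < n → Good D k) (x : EE d) :
    D.g n x - D.Gh n x = PP D.γ n / PP D.γ m * (D.g m x - D.Gh m x) :=
  hP.wt.rec_eq (A := fun n => D.g n x - D.Gh n x) hmn fun k h1 h2 => by
    rw [hP.grec, Gh_succ, hP.W_eq (hg k h1 h2)]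
    ring

theorem s4z (hP : Traj D) {m n : ℕ} (hmn : m ≤ n) (hg : ∀ k, m ≤ k → k < n → Good D k) :
    D.z n - D.Zh n = PP D.γ n / PP D.γ m * (D.z m - D.Zh m) :=
  hP.wt.rec_eq (A := fun n => D.z n - D.Zh n) hmn fun k h1 h2 => by
    rw [hP.z_succ, Zh_succ, hP.W_eq (hg k h1 h2)]
    ring

theorem s5 (hP : Traj D) {T : ℕ} (hT : 0 < D.z T) : ∃ C4, 0 ≤ C4 ∧ ∀ n, T ≤ n → ∀ x,
    D.g n x ≤ D.CK * (D.z n / D.b n ^ d) + C4 * PP D.γ n := by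
  obtain ⟨C, hC0, hC⟩ := hP.g_bdd T
  have hPT := hP.wt.PP_pos T
  refine ⟨C / PP D.γ T, by positivity, fun n hn x => ?_⟩
  have := hP.wt.rec_le (A := fun n => D.g n x - D.CK * (D.b n ^ d)⁻¹ * D.z n) hn fun k h1 _ => by
    rw [hP.grec, hP.z_succ]
    have hz := hP.z_pos hT h1
    have h2 := hP.ker.kb_le (hP.bpos (k + 1)) (x - D.X (k + 1))
    have h3 := hP.W_nonneg k
    have h4 := hP.wt.pos (k + 1)
    have h5 := hP.wt.half (k + 1)
    have h6 := hP.bd_le (Nat.le_succ k)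
    have hCK := hP.ker.Cpos
    have h7 : D.γ (k + 1) * D.W k * kb D.K (D.b (k + 1)) (x - D.X (k + 1))
      ≤ D.γ (k + 1) * D.W k * (D.CK * (D.b (k + 1) ^ d)⁻¹) :=
      mul_le_mul_of_nonneg_left h2 (by positivity)
    have h8 : (1 - D.γ (k + 1)) * (D.CK * D.z k) * (D.b k ^ d)⁻¹
      ≤ (1 - D.γ (k + 1)) * (D.CK * D.z k) * (D.b (k + 1) ^ d)⁻¹ :=
      mul_le_mul_of_nonneg_left h6 (mul_nonneg (by linarith) (by positivity))
    linarith
  have h1 : D.g T x - D.CK * (D.b T ^ d)⁻¹ * D.z T ≤ C := by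
    have := (abs_le.1 (hC x)).2
    have hb := hP.bpos T
    have hCK := hP.ker.Cpos
    have : 0 ≤ D.CK * (D.b T ^ d)⁻¹ * D.z T := by positivity
    linarith
  have h2 := mul_le_mul_of_nonneg_left h1 (hP.wt.div_nonneg' T n)
  have e : C / PP D.γ T * PP D.γ n = PP D.γ n / PP D.γ T * C := by ring
  rw [e]
  have e2 : D.CK * (D.z n / D.b n ^ d) = D.CK * (D.b n ^ d)⁻¹ * D.z n := by ring
  rw [e2]
  linarith

theorem caseB (hP : Traj D) {T : ℕ} (hT : 0 < D.z T)
    (h : Tendsto (fun n => D.z n / D.b n ^ d) atTop (𝓝 0)) : UB D := by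
  obtain ⟨C4, _, h4⟩ := hP.s5 hT
  refine hP.ub_of_bound (u := fun n => D.CK * (D.z n / D.b n ^ d) + C4 * PP D.γ n) ?_ ?_
  · simpa using (h.const_mul D.CK).add (hP.wt.PP_lim.const_mul C4)
  · filter_upwards [eventually_ge_atTop T] with n hn x using h4 n hn x

theorem caseA (hP : Traj D) {T : ℕ} (hT : 0 < D.z T)
    (h : ¬ Tendsto (fun n => D.z n / D.b n ^ d) atTop (𝓝 0)) :
    ∃ δ > 0, ∃ᶠ n in atTop, δ * D.b n ^ d ≤ D.z n := by
  by_contra hcon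
  push Not at hcon
  apply h
  rw [Metric.tendsto_atTop']
  intro ε hε
  have h1 := hcon ε hε
  obtain ⟨N, hN⟩ := eventually_atTop.1 h1
  refine ⟨max N T, fun n hn => ?_⟩
  have hb : 0 < D.b n ^ d := pow_pos (hP.bpos n) d
  have h2 := hN n (le_trans (le_max_left _ _) hn.le)
  have h3 := hP.z_pos hT (le_trans (le_max_right _ _) hn.le)
  rw [Real.dist_0_eq_abs, abs_of_pos (by positivity), div_lt_iff₀ hb]
  exact h2

/-- lower bound for h on a ball -/
theorem h_low (hP : Traj D) {k : ℕ} (hg : Good D k) {S : Set (EE d)} (hS : MeasurableSet S)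
    {f0 s c0 : ℝ} (hf0 : 0 ≤ f0) (hs : 0 ≤ s) (hf : ∀ y ∈ S, f0 ≤ D.f y)
    (hq : ∀ y ∈ S, s ≤ D.q k y) {x : EE d}
    (hc : c0 ≤ ∫ y in S, kb D.K (D.b (k + 1)) (x - y)) :
    c0 * (f0 ^ D.eta * s ^ (1 - D.eta)) ≤ D.h k x := by
  have he := hP.eta0
  have he1 := hP.eta1
  have hA : 0 ≤ f0 ^ D.eta * s ^ (1 - D.eta) := by positivity
  calc c0 * (f0 ^ D.eta * s ^ (1 - D.eta))
      ≤ (∫ y in S, kb D.K (D.b (k + 1)) (x - y)) * (f0 ^ D.eta * s ^ (1 - D.eta)) :=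
        mul_le_mul_of_nonneg_right hc hA
    _ = ∫ y in S, f0 ^ D.eta * s ^ (1 - D.eta) * kb D.K (D.b (k + 1)) (x - y) := by
        rw [integral_const_mul, mul_comm]
    _ ≤ ∫ y in S, D.Phi k y * D.q k y * kb D.K (D.b (k + 1)) (x - y) := by
        refine setIntegral_mono_on
          (((hP.ker.kb_integrable' (hP.bpos _) x).const_mul _).integrableOn)
          (hP.h_integrable k x).integrableOn hS fun y hy => ?_
        refine mul_le_mul_of_nonneg_right ?_ (hP.ker.kb_nonneg (hP.bpos _) _)
        have e : D.Phi k y * D.q k y = D.f y ^ D.eta * D.q k y ^ (1 - D.eta) :=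
          phiT_q_eq he he1 hP.f0 (hP.qnn k) y (hg.cond hP y)
        rw [e]
        have h1 := hf y hy
        have h2 := hq y hy
        have h3 := hP.f0 y
        have h4 : 0 ≤ 1 - D.eta := by linarith
        gcongr
    _ ≤ D.h k x := setIntegral_le_integral (hP.h_integrable k x)
        (Eventually.of_forall fun y => hP.hint_nonneg k x y)

end Traj


open MeasureTheory Filter Metric
open scoped Topology ENNReal NNReal

theorem two_rpow_sub_pos {eta : ℝ} (h : 0 < eta) : 0 < (2 : ℝ) ^ eta - 1 := by
  have := Real.one_lt_rpow (by norm_num : (1 : ℝ) < 2) h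
  linarith

theorem step_scalar {eta c1 u γ : ℝ} (h0 : 0 < eta) (h1 : eta < 1) (hu : 0 < u)
    (huc : u ≤ c1 / 2) (hγ : 0 ≤ γ) (hγu : γ * c1 ≤ u) :
    u + (2 ^ eta - 1) * γ * (c1 / 2)
      ≤ ((1 - γ) * u ^ (1 / eta) + γ * (c1 * (u ^ (1 / eta)) ^ (1 - eta))) ^ eta := by
  have hp := two_rpow_sub_pos h0
  set m := u ^ (1 / eta) with hm
  have hm0 : 0 < m := Real.rpow_pos_of_pos hu _
  have hmu : m ^ eta = u := by
    rw [hm, ← Real.rpow_mul hu.le, one_div_mul_cancel h0.ne', Real.rpow_one]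
  have hm1 : m ^ (1 - eta) = m / u := by
    rw [Real.rpow_sub hm0, Real.rpow_one, hmu]
  set s := γ * (c1 / u - 1) with hs
  have hcu : 1 ≤ c1 / u := by rw [le_div_iff₀ hu]; linarith
  have hs0 : 0 ≤ s := mul_nonneg hγ (by linarith)
  have hs1 : s ≤ 1 := by
    have : γ * (c1 / u) ≤ 1 := by
      rw [← mul_div_assoc, div_le_one hu]; exact hγu
    rw [hs]; nlinarith
  have e : (1 - γ) * m + γ * (c1 * m ^ (1 - eta)) = m * (1 + s) := by
    rw [hm1, hs]; field_simp; ring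
  rw [e, Real.mul_rpow hm0.le (by linarith), hmu]
  have hconc : 1 + (2 ^ eta - 1) * s ≤ (1 + s) ^ eta := by
    have := (Real.concaveOn_rpow h0.le h1.le).2 (Set.mem_Ici.2 (zero_le_one' ℝ))
      (Set.mem_Ici.2 (zero_le_two : (0 : ℝ) ≤ 2)) (by linarith : 0 ≤ 1 - s) hs0 (by ring)
    simp only [smul_eq_mul, Real.one_rpow] at this
    have e2 : (1 - s) * 1 + s * 2 = 1 + s := by ring
    rw [e2] at this
    linarith
  have e3 : u * s = γ * (c1 - u) := by rw [hs]; field_simp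
  calc u + (2 ^ eta - 1) * γ * (c1 / 2) ≤ u + (2 ^ eta - 1) * (γ * (c1 - u)) := by
        have : γ * (c1 / 2) ≤ γ * (c1 - u) := mul_le_mul_of_nonneg_left (by linarith) hγ
        nlinarith
    _ = u * (1 + (2 ^ eta - 1) * s) := by rw [← e3]; ring
    _ ≤ _ := mul_le_mul_of_nonneg_left hconc hu.le

namespace Traj
variable {d : ℕ} {D : Dat d}

theorem l_pow_ge (hP : Traj D) (n : ℕ) {s : ℝ} (hs : s ≤ 1) : D.lam n ≤ D.lam n ^ s := by
  have := Real.rpow_le_rpow_of_exponent_ge (hP.lpos n) (by linarith [hP.l1 n]) hs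
  rwa [Real.rpow_one] at this

theorem ev_err (hP : Traj D) {e : ℕ → ℝ}
    (he : Tendsto (fun n => e n / D.lam n ^ (1 - D.eta)) atTop (𝓝 0)) (C : ℝ) {κ : ℝ}
    (hκ : 0 < κ) : ∀ᶠ k in atTop, e k + C * PP D.γ k ≤ κ * D.lam k ^ (1 - D.eta) := by
  filter_upwards [he.eventually (gt_mem_nhds (half_pos hκ)), hP.ev_P (2 / κ * C)] with k h1 h2
  have h3 : 0 < D.lam k ^ (1 - D.eta) := Real.rpow_pos_of_pos (hP.lpos k) _
  rw [div_lt_iff₀ h3] at h1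
  have h4 := hP.l_pow_ge k (s := 1 - D.eta) (by linarith [hP.eta0])
  have h5 : C * PP D.γ k ≤ κ / 2 * D.lam k := by
    have e : C * PP D.γ k = κ / 2 * (2 / κ * C * PP D.γ k) := by field_simp
    rw [e]; gcongr
  have h6 : κ / 2 * D.lam k ≤ κ / 2 * D.lam k ^ (1 - D.eta) := by gcongr
  linarith

theorem e_lim (hP : Traj D) {e : ℕ → ℝ}
    (he : Tendsto (fun n => e n / D.lam n ^ (1 - D.eta)) atTop (𝓝 0)) {κ : ℝ} (hκ : 0 < κ) :
    ∀ᶠ k in atTop, e k ≤ κ := by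
  filter_upwards [hP.ev_err he 0 hκ] with k hk
  have : D.lam k ^ (1 - D.eta) ≤ 1 :=
    Real.rpow_le_one (hP.lpos k).le (by linarith [hP.l1 k]) (by linarith [hP.eta1])
  nlinarith

theorem q_ge (hP : Traj D) {k : ℕ} (hz : 0 < D.z k) (hz4 : D.z k ≤ 4) {s : ℝ} (hs : 0 ≤ s)
    {x : EE d} (h : s ≤ D.g k x) : s / 8 ≤ D.q k x := by
  rw [hP.qdef]
  have h1 : s / 4 ≤ D.g k x / D.z k := by
    rw [le_div_iff₀ hz]; nlinarith
  have h2 := mul_nonneg (hP.lpos k).le (hP.q00 x)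
  nlinarith [hP.l1 k]

theorem p1 (hP : Traj D) {x0 : EE d} {r f0 : ℝ} (hr : 0 < r) (hf0 : 0 < f0)
    (hf : ∀ y ∈ ball x0 r, f0 ≤ D.f y) : ∃ cs > 0, ∃ τ > 0, ∃ n0 : ℕ, ∀ n, n0 ≤ n → ∀ k, n ≤ k →
      (∀ j, n ≤ j → j < k → Good D j ∧ 0 < D.z j ∧ D.z j ≤ 4) →
      τ ≤ SG D.γ k - SG D.γ n → ∀ x ∈ ball x0 r, cs ≤ D.g k x := by
  have he0 := hP.eta0
  have he1 := hP.eta1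
  have hη' := two_rpow_sub_pos he0
  obtain ⟨c0, hc0, hin⟩ := hP.ker.inner hr
  obtain ⟨C3, hC3, hs4⟩ := hP.s4
  obtain ⟨e, he, hnoise⟩ := hP.noise (1 / 2) (by norm_num) (by norm_num) (‖x0‖ + r)
  have hc := hP.c0
  set c3 : ℝ := c0 * (f0 ^ D.eta * (D.c * f0 / 2) ^ (1 - D.eta)) / 2 with hc3
  have hc3p : 0 < c3 := by positivity
  set c1 : ℝ := c0 * (f0 ^ D.eta * (1 / 32) ^ (1 - D.eta)) with hc1
  have hc1p : 0 < c1 := by positivity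
  have hev := hP.ev_err he C3 (show 0 < c3 / 4 by positivity)
  have hevγ := hP.ev_γ (c1 / c3 ^ D.eta)
  obtain ⟨n0, hn0⟩ := eventually_atTop.1 (hnoise.and (hev.and hevγ))
  refine ⟨(c1 / 2) ^ (1 / D.eta) / 4, by positivity, 3 / 2 + 1 / (2 ^ D.eta - 1), by positivity,
    n0, ?_⟩
  intro n hn k hk hgood hτ
  -- floor
  have hfloor : ∀ j, n ≤ j → j ≤ k → 1 ≤ SG D.γ j - SG D.γ n → ∀ x ∈ ball x0 r,
      c3 * D.lam j ^ (1 - D.eta) ≤ D.Hh j x := by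
    intro j hj hjk hS x hx
    have h1 : ∀ i, n ≤ i → i < j → 2 * c3 * D.lam j ^ (1 - D.eta) ≤ D.h i x := by
      intro i hi hij
      obtain ⟨hg, _, _⟩ := hgood i hi (hij.trans_le hjk)
      have hl := hP.lpos i
      have h2 := hP.h_low hg (measurableSet_ball (x := x0) (ε := r)) (s := D.lam i * (D.c * f0 / 2))
        hf0.le (by positivity) hf
        (fun y hy => by
          have h3 := hg.cond hP y
          have h4 := hf y hy
          have h5 : D.c * D.lam i * f0 ≤ D.c * D.lam i * D.f y := by gcongr
          linarith)
        (hin _ (hP.bpos (i + 1)) (hP.b1 _) x0 x hx)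
      refine le_trans ?_ h2
      rw [Real.mul_rpow hl.le (by positivity)]
      have h6 : D.lam j ^ (1 - D.eta) ≤ D.lam i ^ (1 - D.eta) :=
        Real.rpow_le_rpow (hP.lpos j).le (hP.lanti hij.le) (by linarith)
      calc 2 * c3 * D.lam j ^ (1 - D.eta) ≤ 2 * c3 * D.lam i ^ (1 - D.eta) := by gcongr
        _ = _ := by rw [hc3]; ring
    have h2 := hP.wt.le_avg (u := fun i => D.h i x) hj h1
    have h3 : 0 ≤ avg D.γ (fun i => D.h i x) n := hP.Hh_nonneg n x
    have h4 : PP D.γ j / PP D.γ n ≤ 1 / 2 := by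
      have h5 := hP.wt.PP_le_exp hj
      have hPn := hP.wt.PP_pos n
      rw [div_le_iff₀ hPn]
      have h6 : Real.exp (-(SG D.γ j - SG D.γ n)) ≤ 1 / 2 := by
        calc Real.exp (-(SG D.γ j - SG D.γ n)) ≤ Real.exp (-1) :=
              Real.exp_le_exp.2 (by linarith)
          _ ≤ 1 / 2 := by
            rw [Real.exp_neg, one_div]
            refine inv_anti₀ two_pos ?_
            have := Real.add_one_le_exp (1 : ℝ)
            linarith
      nlinarith
    have h5 := hP.wt.div_nonneg' n j
    have h7 : 0 < D.lam j ^ (1 - D.eta) := Real.rpow_pos_of_pos (hP.lpos j) _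
    have h8 : 0 < c3 * D.lam j ^ (1 - D.eta) := by positivity
    show _ ≤ avg D.γ (fun i => D.h i x) j
    nlinarith [mul_nonneg h5 h3]
  have hgH : ∀ j, n ≤ j → j ≤ k → 1 ≤ SG D.γ j - SG D.γ n → ∀ x ∈ ball x0 r,
      D.Hh j x / 4 ≤ D.g j x := by
    intro j hj hjk hS x hx
    have h1 := hfloor j hj hjk hS x hx
    obtain ⟨⟨h2, _⟩, h3, _⟩ := hn0 j (hn.trans hj)
    have hxn : ‖x‖ ≤ ‖x0‖ + r := by
      have := norm_le_norm_add_norm_sub' x x0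
      have h4 : ‖x - x0‖ < r := by simpa [dist_eq_norm] using hx
      linarith
    have h4 := (h2 x hxn).1
    have h5 := hs4 j x
    linarith
  -- growth
  have hclaim : ∀ j, n ≤ j → j ≤ k → ∀ x ∈ ball x0 r,
      min (c1 / 2) ((2 ^ D.eta - 1) * (c1 / 2) * (SG D.γ j - SG D.γ n - 3 / 2))
        ≤ D.Hh j x ^ D.eta := by
    intro j hj
    induction j, hj using Nat.le_induction with
    | base =>
      intro _ x _
      refine (min_le_right _ _).trans (le_trans ?_ (Real.rpow_nonneg (hP.Hh_nonneg _ _) _))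
      have : 0 < (2 ^ D.eta - 1) * (c1 / 2) := by positivity
      nlinarith
    | succ j hj ih =>
      intro hjk x hx
      have ih' := ih (by omega)
      by_cases hS : 1 ≤ SG D.γ j - SG D.γ n
      · set v := min (c1 / 2) ((2 ^ D.eta - 1) * (c1 / 2) * (SG D.γ j - SG D.γ n - 3 / 2)) with hv
        set F := c3 * D.lam j ^ (1 - D.eta) with hF
        have hl := hP.lpos j
        have hFp : 0 < F := by positivity
        set u := min (max v (F ^ D.eta)) (c1 / 2) with hu
        have hup : 0 < u := lt_min (lt_max_of_lt_right (by positivity)) (by positivity)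
        have huH : ∀ y ∈ ball x0 r, u ^ (1 / D.eta) ≤ D.Hh j y := by
          intro y hy
          have h1 : u ≤ D.Hh j y ^ D.eta := by
            refine (min_le_left _ _).trans (max_le (ih' y hy) ?_)
            exact Real.rpow_le_rpow hFp.le (hfloor j hj (by omega) hS y hy) he0.le
          calc u ^ (1 / D.eta) ≤ (D.Hh j y ^ D.eta) ^ (1 / D.eta) :=
                Real.rpow_le_rpow hup.le h1 (by positivity)
            _ = D.Hh j y := by
                rw [← Real.rpow_mul (hP.Hh_nonneg _ _), mul_one_div_cancel he0.ne', Real.rpow_one]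
        set m := u ^ (1 / D.eta) with hm
        have hm0 : 0 < m := Real.rpow_pos_of_pos hup _
        obtain ⟨hg, hz0, hz4⟩ := hgood j hj (by omega)
        have h1 := hP.h_low hg (measurableSet_ball (x := x0) (ε := r)) (s := m * (1 / 32))
          hf0.le (by positivity) hf
          (fun y hy => by
            have h3 := hgH j hj (by omega) hS y hy
            have h4 := huH y hy
            have h5 := hP.q_ge hz0 hz4 (s := m / 4) (by positivity) (x := y) (by linarith)
            linarith)
          (hin _ (hP.bpos (j + 1)) (hP.b1 _) x0 x hx)
        rw [Real.mul_rpow hm0.le (by norm_num)] at h1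
        have h2 : c1 * m ^ (1 - D.eta) ≤ D.h j x := by
          refine le_trans (le_of_eq ?_) h1
          rw [hc1]; ring
        have hγp := hP.wt.pos (j + 1)
        have hγh := hP.wt.half (j + 1)
        have hγu : D.γ (j + 1) * c1 ≤ u := by
          refine le_min (le_trans ?_ (le_max_right _ _)) (by nlinarith)
          obtain ⟨_, _, h3⟩ := hn0 j (hn.trans hj)
          have h4 := hP.lb_le j
          have h5 : D.lam j ≤ (D.lam j ^ (1 - D.eta)) ^ D.eta := by
            rw [← Real.rpow_mul hl.le]
            exact hP.l_pow_ge j (by nlinarith)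
          have h6 := hP.wt.anti (Nat.le_succ j)
          have h7 : 0 < c3 ^ D.eta := by positivity
          rw [hF, Real.mul_rpow hc3p.le (by positivity)]
          calc D.γ (j + 1) * c1 ≤ D.γ j * c1 := by gcongr
            _ = c3 ^ D.eta * (c1 / c3 ^ D.eta * D.γ j) := by field_simp
            _ ≤ c3 ^ D.eta * (D.lam j ^ (1 - D.eta)) ^ D.eta := by
                gcongr; linarith
        have h3 := step_scalar he0 he1 hup (min_le_right _ _) hγp.le hγu
        have h4 : (1 - D.γ (j + 1)) * m + D.γ (j + 1) * (c1 * m ^ (1 - D.eta))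
            ≤ D.Hh (j + 1) x := by
          rw [Hh_succ]
          have h5 := huH x hx
          have : 0 ≤ 1 - D.γ (j + 1) := by linarith
          gcongr
        have h5 := Real.rpow_le_rpow (add_nonneg (mul_nonneg (by linarith) hm0.le)
          (by positivity)) h4 he0.le
        refine le_trans ?_ (h3.trans h5)
        have huv : v ≤ u := le_min (le_max_left _ _) (min_le_left _ _)
        rw [SG_succ]
        have h6 : 0 ≤ (2 ^ D.eta - 1) * D.γ (j + 1) * (c1 / 2) := by positivity
        rcases le_total (c1 / 2) ((2 ^ D.eta - 1) * (c1 / 2) * (SG D.γ j - SG D.γ n - 3 / 2))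
          with h7 | h7
        · have : v = c1 / 2 := min_eq_left h7
          refine (min_le_left _ _).trans ?_
          linarith
        · have : v = (2 ^ D.eta - 1) * (c1 / 2) * (SG D.γ j - SG D.γ n - 3 / 2) := min_eq_right h7
          refine (min_le_right _ _).trans ?_
          linarith
      · push Not at hS
        refine (min_le_right _ _).trans (le_trans ?_ (Real.rpow_nonneg (hP.Hh_nonneg _ _) _))
        have : 0 < (2 ^ D.eta - 1) * (c1 / 2) := by positivity
        rw [SG_succ]
        nlinarith [hP.wt.half (j + 1)]
  intro x hx
  have h1 := hclaim k hk le_rfl x hx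
  have h0 : 0 < 1 / ((2 : ℝ) ^ D.eta - 1) := by positivity
  have h2 := hgH k hk le_rfl (by linarith) x hx
  have h3 : min (c1 / 2) ((2 ^ D.eta - 1) * (c1 / 2) * (SG D.γ k - SG D.γ n - 3 / 2)) = c1 / 2 := by
    apply min_eq_left
    have h4 : 1 / ((2 : ℝ) ^ D.eta - 1) ≤ SG D.γ k - SG D.γ n - 3 / 2 := by linarith
    calc c1 / 2 = (2 ^ D.eta - 1) * (c1 / 2) * (1 / (2 ^ D.eta - 1)) := by field_simp
      _ ≤ _ := by gcongr
  rw [h3] at h1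
  have h5 : (c1 / 2) ^ (1 / D.eta) ≤ D.Hh k x := by
    calc (c1 / 2) ^ (1 / D.eta) ≤ (D.Hh k x ^ D.eta) ^ (1 / D.eta) :=
          Real.rpow_le_rpow (by positivity) h1 (by positivity)
      _ = D.Hh k x := by
          rw [← Real.rpow_mul (hP.Hh_nonneg _ _), mul_one_div_cancel he0.ne', Real.rpow_one]
  linarith

end Traj


open MeasureTheory Filter Metric
open scoped Topology ENNReal NNReal

namespace Traj
variable {d : ℕ} {D : Dat d}

theorem exists_ball (hP : Traj D) : ∃ x0 : EE d, ∃ r > 0, ∃ f0 > 0, ∀ y ∈ ball x0 r, f0 ≤ D.f y := by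
  have : ∃ x0, 0 < D.f x0 := by
    by_contra hcon
    push Not at hcon
    have h0 : ∀ x, D.f x = 0 := fun x => le_antisymm (hcon x) (hP.f0 x)
    have := hP.fint1
    simp [h0] at this
  obtain ⟨x0, hx0⟩ := this
  have h1 : ∀ᶠ y in 𝓝 x0, D.f x0 / 2 < D.f y :=
    hP.fcont.continuousAt.eventually (lt_mem_nhds (by linarith))
  obtain ⟨r, hr, h⟩ := Metric.eventually_nhds_iff_ball.1 h1
  exact ⟨x0, r, hr, D.f x0 / 2, by positivity, fun y hy => (h y hy).le⟩

theorem Zh_ev (hP : Traj D) {ε : ℝ} (hε : 0 < ε) : ∀ᶠ n in atTop, D.Zh n ≤ 1 + ε := by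
  obtain ⟨e, he, hn⟩ := hP.noise (min (ε / 2) 1) (by positivity) (min_le_right _ _) 0
  filter_upwards [hn, hP.e_lim he (half_pos hε)] with n h1 h2
  have := h1.2
  have := min_le_left (ε / 2) 1
  linarith

/-- mass lower bound -/
theorem z_low (hP : Traj D) {n : ℕ} {C1 cs : ℝ} (hC1 : 0 ≤ C1)
    (hg : ∀ x, -(C1 * PP D.γ n * D.q0 x) ≤ D.g n x) {x0 : EE d} {r : ℝ}
    (hcs : 0 < cs) (h : ∀ x ∈ ball x0 r, cs ≤ D.g n x) :
    cs * (volume : Measure (EE d)).real (ball x0 r) - C1 * PP D.γ n ≤ D.z n := by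
  have hPn := hP.wt.PP_pos n
  have i1 : Integrable (fun x => (ball x0 r).indicator (fun _ => cs) x) :=
    (integrable_indicator_iff measurableSet_ball).2 (integrableOn_const measure_ball_lt_top.ne)
  have i2 : Integrable (fun x => C1 * PP D.γ n * D.q0 x) := hP.q0int.const_mul _
  have e1 : ∫ x, (ball x0 r).indicator (fun _ => cs) x
      = cs * (volume : Measure (EE d)).real (ball x0 r) := by
    rw [integral_indicator measurableSet_ball, setIntegral_const, smul_eq_mul, mul_comm]
  have e2 : ∫ x, C1 * PP D.γ n * D.q0 x = C1 * PP D.γ n := by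
    rw [integral_const_mul, hP.q0int1, mul_one]
  rw [← e1, ← e2, ← integral_sub i1 i2]
  refine integral_mono (i1.sub i2) (hP.gint n) fun x => ?_
  have h3 : 0 ≤ C1 * PP D.γ n * D.q0 x := mul_nonneg (by positivity) (hP.q00 x)
  by_cases hx : x ∈ ball x0 r
  · simp only [Set.indicator_of_mem hx]; linarith [h x hx]
  · simp only [Set.indicator_of_notMem hx]; linarith [hg x]

theorem s7a (hP : Traj D) {T : ℕ} (hT : 0 < D.z T) {δ : ℝ} (hδ : 0 < δ)
    (hA : ∃ᶠ n in atTop, δ * D.b n ^ d ≤ D.z n) :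
    ∃ᶠ n in atTop, min δ 1 * D.b n ^ d ≤ D.z n ∧ D.z n ≤ 2 := by
  obtain ⟨C1, hC1, hs2⟩ := hP.s2 hT
  have hbd : ∀ n, 0 < D.b n ^ d := fun n => pow_pos (hP.bpos n) d
  have hbd1 : ∀ n, D.b n ^ d ≤ 1 := fun n => pow_le_one₀ (hP.bpos n).le (hP.b1 n)
  have hZ := hP.Zh_ev (ε := 3 / 4) (by norm_num)
  obtain ⟨N1, hN1⟩ := eventually_atTop.1 ((hP.ev_P (2 * C1)).and hZ)
  rw [frequently_atTop] at hA ⊢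
  intro N
  obtain ⟨n, hn, hzn⟩ := hA (max N (max N1 T))
  have hnN : N ≤ n := (le_max_left _ _).trans hn
  have hnN1 : N1 ≤ n := ((le_max_left _ _).trans (le_max_right _ _)).trans hn
  have hnT : T ≤ n := ((le_max_right _ _).trans (le_max_right _ _)).trans hn
  by_cases h2 : D.z n ≤ 2
  · refine ⟨n, hnN, ?_, h2⟩
    refine le_trans (mul_le_mul_of_nonneg_right (min_le_left _ _) (hbd n).le) hzn
  · push Not at h2
    have hex : ∃ k, n ≤ k ∧ D.z k ≤ 2 := by
      by_contra hcon
      push Not at hcon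
      have hgood : ∀ k, n ≤ k → Good D k := by
        intro k hk
        refine hP.s3 (hP.z_pos hT (hnT.trans hk)) (hs2 k (hnT.trans hk)) ?_
        have h3 := (hN1 k (hnN1.trans hk)).1
        have h4 := hcon k hk
        nlinarith [hP.lpos k]
      have hlim : Tendsto (fun k => PP D.γ k / PP D.γ n * (D.z n - D.Zh n)) atTop (𝓝 0) := by
        simpa using (hP.wt.PP_lim.div_const (PP D.γ n)).mul_const (D.z n - D.Zh n)
      obtain ⟨k, hk1, hk2⟩ := ((hlim.eventually (gt_mem_nhds (show (0 : ℝ) < 1 / 4 by norm_num))).and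
        (eventually_ge_atTop n)).exists
      have h5 := hP.s4z hk2 fun j h1 _ => hgood j h1
      have h6 := (hN1 k (hnN1.trans hk2)).2
      have h7 := hcon k hk2
      linarith
    classical
    set k := Nat.find hex with hk
    obtain ⟨hnk, hzk⟩ := Nat.find_spec hex
    have hkn : n ≠ k := by
      intro h
      rw [← hk, ← h] at hzk
      linarith
    have hlt : n < k := lt_of_le_of_ne hnk hkn
    obtain ⟨j, hj⟩ : ∃ j, k = j + 1 := ⟨k - 1, by omega⟩
    have hmin := Nat.find_min hex (m := j) (by omega)
    have hzj : 2 < D.z j := by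
      by_contra hcon
      push Not at hcon
      exact hmin ⟨by omega, hcon⟩
    refine ⟨k, hnN.trans hnk, ?_, hzk⟩
    have h3 := hP.z_succ j
    rw [← hj] at h3
    have h4 := mul_nonneg (hP.wt.pos k).le (hP.W_nonneg j)
    have h5 := hP.wt.half k
    have h6 : 1 ≤ D.z k := by nlinarith
    refine le_trans ?_ h6
    have := min_le_right δ 1
    have h0 : 0 < min δ 1 := lt_min hδ one_pos
    nlinarith [hbd k, hbd1 k]

theorem s7 (hP : Traj D) {T : ℕ} (hT : 0 < D.z T) {δ : ℝ} (hδ : 0 < δ)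
    (hA : ∃ᶠ n in atTop, δ * D.b n ^ d ≤ D.z n) :
    ∃ n1, T ≤ n1 ∧ ∀ n, n1 ≤ n → Good D n ∧ 0 < D.z n ∧ D.z n ≤ 4 := by
  obtain ⟨x0, r, hr, f0, hf0, hf⟩ := hP.exists_ball
  obtain ⟨cs, hcs, τ, hτ, n0, hp1⟩ := hP.p1 hr hf0 hf
  obtain ⟨C1, hC1, hs2⟩ := hP.s2 hT
  have hA' := hP.s7a hT hδ hA
  set δ' := min δ 1 with hδ'
  have hδ'0 : 0 < δ' := lt_min hδ one_pos
  have hbd : ∀ n, 0 < D.b n ^ d := fun n => pow_pos (hP.bpos n) d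
  set V := cs * (volume : Measure (EE d)).real (ball x0 r) with hV
  have hVp : 0 < V := mul_pos hcs
    (ENNReal.toReal_pos (measure_ball_pos _ _ hr).ne' measure_ball_lt_top.ne)
  have hγ0 := hP.wt.pos 0
  have hPsmall : ∀ᶠ n in atTop, C1 * PP D.γ n < V / 2 := by
    have : Tendsto (fun n => C1 * PP D.γ n) atTop (𝓝 0) := by
      simpa using hP.wt.PP_lim.const_mul C1
    exact this.eventually (gt_mem_nhds (by positivity))
  obtain ⟨N1, hN1⟩ := eventually_atTop.1 ((hP.Zh_ev (ε := 3 / 4) (by norm_num)).and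
    ((hP.ev_γ (2 * C1 * (D.γ 0)⁻¹ * Real.exp (2 * τ) / δ')).and
      (hPsmall.and (hP.ev_P (2 * C1 / (V / 2))))))
  obtain ⟨n, ⟨hz1, hz2⟩, hn⟩ := (hA'.and_eventually
    (eventually_ge_atTop (max n0 (max N1 T)))).exists
  have hnn0 : n0 ≤ n := (le_max_left _ _).trans hn
  have hnN1 : N1 ≤ n := ((le_max_left _ _).trans (le_max_right _ _)).trans hn
  have hnT : T ≤ n := ((le_max_right _ _).trans (le_max_right _ _)).trans hn
  refine ⟨n, hnT, fun j => ?_⟩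
  induction j using Nat.strong_induction_on with
  | _ j ih =>
    intro hj
    have hzp := hP.z_pos hT (hnT.trans hj)
    obtain ⟨hZ, hγj, hPs, hPl⟩ := hN1 j (hnN1.trans hj)
    have hprev : ∀ i, n ≤ i → i < j → Good D i ∧ 0 < D.z i ∧ D.z i ≤ 4 :=
      fun i h1 h2 => ih i h2 h1
    have hz4 : D.z j ≤ 4 := by
      have h1 := hP.s4z hj fun i h1 h2 => (hprev i h1 h2).1
      have h2 := hP.Zh_nonneg n
      have h3 := hP.wt.div_le_one' hj
      have h4 := hP.wt.div_nonneg' n j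
      nlinarith
    refine ⟨?_, hzp, hz4⟩
    refine hP.s3 hzp (hs2 j (hnT.trans hj)) ?_
    have hlj := hP.lpos j
    have hPj := hP.wt.PP_pos j
    have hPn := hP.wt.PP_pos n
    by_cases hS : τ ≤ SG D.γ j - SG D.γ n
    · have h1 := hp1 n hnn0 j hj hprev hS
      have h2 := hP.z_low hC1 (hs2 j (hnT.trans hj)) hcs h1
      have h3 : V / 2 ≤ D.z j := by linarith
      calc 2 * C1 * PP D.γ j = (2 * C1 / (V / 2) * PP D.γ j) * (V / 2) := by field_simp
        _ ≤ D.lam j * (V / 2) := by gcongr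
        _ ≤ D.lam j * D.z j := by gcongr
    · push Not at hS
      have h1 := hP.z_ge hj
      have h2 := hP.wt.ratio_le hj
      have h3 := hP.wt.exp_le_PP hj
      have h4 : PP D.γ n ≤ PP D.γ j * Real.exp (2 * τ) := by
        have h5 : Real.exp (-(2 * τ)) ≤ Real.exp (-(2 * (SG D.γ j - SG D.γ n))) :=
          Real.exp_le_exp.2 (by linarith)
        have h6 : PP D.γ n * Real.exp (-(2 * τ)) ≤ PP D.γ j := by nlinarith
        have h7 : Real.exp (-(2 * τ)) * Real.exp (2 * τ) = 1 := by
          rw [← Real.exp_add]; simp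
        calc PP D.γ n = PP D.γ n * Real.exp (-(2 * τ)) * Real.exp (2 * τ) := by
              rw [mul_assoc, h7, mul_one]
          _ ≤ _ := by gcongr
      have hγn := hP.wt.pos n
      have hγjp := hP.wt.pos j
      have h8 : D.γ n ≤ D.γ j * Real.exp (2 * τ) := by
        have h9 : D.γ n * PP D.γ j ≤ (D.γ j * Real.exp (2 * τ)) * PP D.γ j := by
          calc D.γ n * PP D.γ j ≤ D.γ j * PP D.γ n := h2
            _ ≤ D.γ j * (PP D.γ j * Real.exp (2 * τ)) := by gcongr
            _ = _ := by ring
        exact le_of_mul_le_mul_right h9 hPj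
      have h10 := hP.wt.PP_le' n
      have h11 : 2 * C1 * PP D.γ n ≤ D.lam j * (δ' * D.b j ^ d) := by
        calc 2 * C1 * PP D.γ n ≤ 2 * C1 * ((D.γ 0)⁻¹ * (D.γ j * Real.exp (2 * τ))) := by
              have : (D.γ 0)⁻¹ * D.γ n ≤ (D.γ 0)⁻¹ * (D.γ j * Real.exp (2 * τ)) := by gcongr
              have := h10.trans this
              gcongr
          _ = δ' * (2 * C1 * (D.γ 0)⁻¹ * Real.exp (2 * τ) / δ' * D.γ j) := by field_simp
          _ ≤ δ' * (D.lam j * D.b j ^ d) := by gcongr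
          _ = _ := by ring
      have h12 : D.b j ^ d ≤ D.b n ^ d := pow_le_pow_left₀ (hP.bpos j).le (hP.banti hj) d
      have h13 : δ' * D.b j ^ d ≤ D.z n := le_trans (by gcongr) hz1
      calc 2 * C1 * PP D.γ j = (2 * C1 * PP D.γ n) * (PP D.γ j / PP D.γ n) := by field_simp
        _ ≤ (D.lam j * (δ' * D.b j ^ d)) * (PP D.γ j / PP D.γ n) := by gcongr
        _ ≤ (D.lam j * D.z n) * (PP D.γ j / PP D.γ n) := by gcongr
        _ = D.lam j * (PP D.γ j / PP D.γ n * D.z n) := by ring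
        _ ≤ _ := by gcongr

end Traj


open MeasureTheory Filter Metric
open scoped Topology ENNReal NNReal

structure Late {d : ℕ} (D : Dat d) (n1 : ℕ) (C1 : ℝ) : Prop extends Traj D where
  good : ∀ n, n1 ≤ n → Traj.Good D n
  zp : ∀ n, n1 ≤ n → 0 < D.z n
  z4 : ∀ n, n1 ≤ n → D.z n ≤ 4
  C10 : 0 ≤ C1
  glow : ∀ n, n1 ≤ n → ∀ x, -(C1 * PP D.γ n * D.q0 x) ≤ D.g n x

namespace Late
variable {d : ℕ} {D : Dat d} {n1 : ℕ} {C1 : ℝ}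

theorem z_up (hL : Late D n1 C1) {ε : ℝ} (hε : 0 < ε) : ∀ᶠ n in atTop, D.z n ≤ 1 + ε := by
  have hlim : Tendsto (fun k => PP D.γ k / PP D.γ n1 * (D.z n1 - D.Zh n1)) atTop (𝓝 0) := by
    simpa using (hL.wt.PP_lim.div_const (PP D.γ n1)).mul_const (D.z n1 - D.Zh n1)
  filter_upwards [hlim.eventually (gt_mem_nhds (half_pos hε)), hL.toTraj.Zh_ev (half_pos hε),
    eventually_ge_atTop n1] with n h1 h2 h3
  have := hL.toTraj.s4z h3 fun j h _ => hL.good j h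
  linarith

theorem gH (hL : Late D n1 C1) {ε : ℝ} (hε : 0 < ε) (hε1 : ε ≤ 1) (R : ℝ) :
    ∀ᶠ n in atTop, ∀ x, ‖x‖ ≤ R → (1 - ε) * D.Hh n x - ε ≤ D.g n x ∧
      D.g n x ≤ (1 + ε) * D.Hh n x + ε := by
  obtain ⟨e, he, hn⟩ := hL.noise ε hε hε1 R
  obtain ⟨A, hA0, hA⟩ := hL.toTraj.g_bdd n1
  obtain ⟨B, hB0, hB⟩ := hL.toTraj.Gh_bdd n1
  have hlim : Tendsto (fun k => PP D.γ k / PP D.γ n1 * (A + B)) atTop (𝓝 0) := by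
    simpa using (hL.wt.PP_lim.div_const (PP D.γ n1)).mul_const (A + B)
  filter_upwards [hlim.eventually (gt_mem_nhds (half_pos hε)), hL.toTraj.e_lim he (half_pos hε),
    eventually_ge_atTop n1, hn] with n h1 h2 h3 h4 x hx
  have h5 := hL.toTraj.s4g h3 (fun j h _ => hL.good j h) x
  have h6 : |D.g n x - D.Gh n x| ≤ ε / 2 := by
    rw [h5, abs_mul, abs_of_nonneg (hL.wt.div_nonneg' n1 n)]
    refine le_trans ?_ h1.le
    refine mul_le_mul_of_nonneg_left ?_ (hL.wt.div_nonneg' n1 n)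
    exact (abs_sub _ _).trans (add_le_add (hA x) (hB x))
  have h7 := abs_le.1 h6
  have h8 := h4.1 x hx
  constructor <;> linarith

theorem s8 (hL : Late D n1 C1) {x0 : EE d} {r f0 : ℝ} (hr : 0 < r) (hf0 : 0 < f0)
    (hf : ∀ y ∈ ball x0 r, f0 ≤ D.f y) :
    ∃ cs > 0, ∀ᶠ n in atTop, ∀ x ∈ ball x0 r, cs ≤ D.g n x := by
  obtain ⟨cs, hcs, τ, hτ, n0, hp1⟩ := hL.toTraj.p1 hr hf0 hf
  refine ⟨cs, hcs, ?_⟩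
  filter_upwards [(tendsto_atTop_add_const_right _ (-SG D.γ (max n0 n1)) hL.wt.SG_lim).eventually
    (eventually_ge_atTop τ), eventually_ge_atTop (max n0 n1)] with n h1 h2
  refine hp1 (max n0 n1) (le_max_left _ _) n h2 (fun j hj _ => ?_) (by linarith)
  have := (le_max_right _ _).trans hj
  exact ⟨hL.good j this, hL.zp j this, hL.z4 j this⟩

/-- eventual lower bounds near a point -/
def LB (D : Dat d) (x0 : EE d) (m : ℝ) : Prop :=
  0 < m ∧ ∃ ρ > 0, ∀ᶠ n in atTop, ∀ x ∈ ball x0 ρ, m ≤ D.g n x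

theorem norm_le_of_ball {x0 x : EE d} {r : ℝ} (hx : x ∈ ball x0 r) : ‖x‖ ≤ ‖x0‖ + r := by
  have := norm_le_norm_add_norm_sub' x x0
  have h4 : ‖x - x0‖ < r := by simpa [dist_eq_norm] using hx
  linarith

theorem lb_step (hL : Late D n1 C1) {x0 : EE d} {m f0 t : ℝ} (hm : LB D x0 m) (hf0 : 0 < f0)
    (hf : f0 < D.f x0) (ht : 0 < t) (htm : t < f0 ^ D.eta * m ^ (1 - D.eta)) : LB D x0 t := by
  obtain ⟨hm0, ρ, hρ, hmn⟩ := hm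
  have he0 := hL.eta0
  have he1 := hL.eta1
  have hcont : Tendsto (fun ε : ℝ => (1 - ε) * ((1 - ε) * ((1 - ε) *
      (f0 ^ D.eta * ((1 - ε) / (1 + ε) * m) ^ (1 - D.eta)))) - ε) (𝓝 0)
      (𝓝 (f0 ^ D.eta * m ^ (1 - D.eta))) := by
    have : ContinuousAt (fun ε : ℝ => (1 - ε) * ((1 - ε) * ((1 - ε) *
      (f0 ^ D.eta * ((1 - ε) / (1 + ε) * m) ^ (1 - D.eta)))) - ε) 0 := by
      have h1 : ContinuousAt (fun ε : ℝ => (1 - ε) / (1 + ε) * m) 0 := by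
        refine ContinuousAt.mul (ContinuousAt.div (by fun_prop) (by fun_prop) (by norm_num))
          continuousAt_const
      have h2 := h1.rpow_const (p := 1 - D.eta) (Or.inr (by linarith))
      fun_prop
    have h3 := this.tendsto
    simpa using h3
  have hex : ∃ ε : ℝ, 0 < ε ∧ ε < 1 ∧ t < (1 - ε) * ((1 - ε) * ((1 - ε) *
      (f0 ^ D.eta * ((1 - ε) / (1 + ε) * m) ^ (1 - D.eta)))) - ε := by
    have h1 := (hcont.eventually (lt_mem_nhds htm)).filter_mono
      (nhdsWithin_le_nhds : 𝓝[>] (0 : ℝ) ≤ 𝓝 0)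
    have h2 : ∀ᶠ ε in 𝓝[>] (0 : ℝ), ε < 1 :=
      (gt_mem_nhds (zero_lt_one' ℝ)).filter_mono nhdsWithin_le_nhds
    obtain ⟨ε, ⟨h3, h4⟩, h5⟩ := ((h1.and h2).and self_mem_nhdsWithin).exists
    exact ⟨ε, h5, h4, h3⟩
  obtain ⟨ε, hε0, hε1, hεt⟩ := hex
  set s := (1 - ε) / (1 + ε) * m with hs
  have h1ε : 0 < 1 - ε := by linarith
  have hs0 : 0 ≤ s := by positivity
  set a := (1 - ε) * (f0 ^ D.eta * s ^ (1 - D.eta)) with ha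
  have ha0 : 0 ≤ a := by positivity
  have hfn : ∀ᶠ y in 𝓝 x0, f0 < D.f y := hL.fcont.continuousAt.eventually (lt_mem_nhds hf)
  obtain ⟨ρ1, hρ1, hfball⟩ := Metric.eventually_nhds_iff_ball.1 hfn
  set ρ' := min ρ ρ1 / 2 with hρ'
  have hρ'0 : 0 < ρ' := by positivity
  have hnear := hL.ker.near (b := fun n => D.b (n + 1)) (fun n => hL.bpos _)
    (hL.b0.comp (tendsto_add_atTop_nat 1)) hρ'0 hε0
  obtain ⟨k0, hk0⟩ := eventually_atTop.1 (hmn.and (hnear.and ((hL.z_up hε0).and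
    (hL.l0.eventually (gt_mem_nhds hε0)))))
  set k1 := max k0 n1 with hk1
  have hhlow : ∀ k, k1 ≤ k → ∀ x ∈ ball x0 ρ', a ≤ D.h k x := by
    intro k hk x hx
    obtain ⟨hg, hne, hz, hl⟩ := hk0 k ((le_max_left _ _).trans hk)
    have hkn := (le_max_right k0 n1).trans hk
    have hsub : ∀ y ∈ ball x ρ', y ∈ ball x0 (min ρ ρ1) := by
      intro y hy
      rw [mem_ball] at *
      have := dist_triangle y x x0
      rw [hρ'] at hx hy
      linarith
    refine hL.toTraj.h_low (hL.good k hkn) (measurableSet_ball (x := x) (ε := ρ')) hf0.le hs0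
      (fun y hy => (hfball y (ball_subset_ball (min_le_right _ _) (hsub y hy))).le) (fun y hy => ?_)
      (hne x)
    have h1 := hg y (ball_subset_ball (min_le_left _ _) (hsub y hy))
    rw [hL.qdef]
    have hzp := hL.zp k hkn
    have h2 : m / (1 + ε) ≤ D.g k y / D.z k := div_le_div₀ (hm0.le.trans h1) h1 hzp hz
    have h3 : 0 ≤ m / (1 + ε) := by positivity
    have h4 := mul_nonneg (hL.lpos k).le (hL.q00 y)
    have h5 : s = (1 - ε) * (m / (1 + ε)) := by rw [hs]; ring
    rw [h5]
    nlinarith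
  refine ⟨ht, ρ', hρ'0, ?_⟩
  have hlim : Tendsto (fun k => PP D.γ k / PP D.γ k1) atTop (𝓝 0) := by
    simpa using (hL.wt.PP_lim.div_const (PP D.γ k1))
  filter_upwards [hlim.eventually (gt_mem_nhds hε0), eventually_ge_atTop k1,
    hL.gH hε0 hε1.le (‖x0‖ + ρ')] with n h1 h2 h3 x hx
  have h4 := hL.wt.le_avg (u := fun k => D.h k x) (C := a) h2 fun k hk _ => hhlow k hk x hx
  have h5 : 0 ≤ avg D.γ (fun k => D.h k x) k1 := hL.toTraj.Hh_nonneg k1 x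
  have h6 : (1 - ε) * a ≤ D.Hh n x := by
    show _ ≤ avg D.γ (fun k => D.h k x) n
    have h7 := mul_nonneg (hL.wt.div_nonneg' k1 n) h5
    nlinarith
  have h8 := (h3 x (norm_le_of_ball hx)).1
  have h9 := mul_le_mul_of_nonneg_left h6 h1ε.le
  linarith

theorem pow_lt_of_lt {a b e : ℝ} (ha : 0 < a) (hab : a < b) (he0 : 0 < e) :
    a < b ^ e * a ^ (1 - e) := by
  calc a = a ^ e * a ^ (1 - e) := by rw [← Real.rpow_add ha]; simp
    _ < _ := mul_lt_mul_of_pos_right (Real.rpow_lt_rpow ha.le hab he0) (Real.rpow_pos_of_pos ha _)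

theorem pow_lt_of_gt {a b e : ℝ} (ha : 0 < a) (hb : 0 < b) (hab : b < a) (he0 : 0 < e) :
    b ^ e * a ^ (1 - e) < a := by
  calc b ^ e * a ^ (1 - e) < a ^ e * a ^ (1 - e) :=
        mul_lt_mul_of_pos_right (Real.rpow_lt_rpow hb.le hab he0) (Real.rpow_pos_of_pos ha _)
    _ = a := by rw [← Real.rpow_add ha]; simp

theorem LB.mono {x0 : EE d} {m m' : ℝ} (h : LB D x0 m) (h0 : 0 < m') (hm : m' ≤ m) :
    LB D x0 m' := by
  obtain ⟨_, ρ, hρ, h⟩ := h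
  exact ⟨h0, ρ, hρ, h.mono fun n hn x hx => hm.trans (hn x hx)⟩

theorem s9 (hL : Late D n1 C1) {x0 : EE d} {m : ℝ} (hm : 0 < m) (hmf : m < D.f x0) :
    LB D x0 m := by
  by_contra hcon
  have he0 := hL.eta0
  have he1 := hL.eta1
  have hub : ∀ t, LB D x0 t → t ≤ m := by
    intro t ht
    by_contra h
    push Not at h
    exact hcon (ht.mono hm h.le)
  have hne : ∃ t, LB D x0 t := by
    have h1 : ∀ᶠ y in 𝓝 x0, D.f x0 / 2 < D.f y :=
      hL.fcont.continuousAt.eventually (lt_mem_nhds (by linarith))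
    obtain ⟨r, hr, h⟩ := Metric.eventually_nhds_iff_ball.1 h1
    obtain ⟨cs, hcs, h2⟩ := hL.s8 hr (show 0 < D.f x0 / 2 by linarith) fun y hy => (h y hy).le
    exact ⟨cs, hcs, r, hr, h2⟩
  obtain ⟨t0, ht0⟩ := hne
  have hbdd : BddAbove {t | LB D x0 t} := ⟨m, fun t ht => hub t ht⟩
  set s := sSup {t | LB D x0 t} with hs
  have hs0 : 0 < s := lt_of_lt_of_le ht0.1 (le_csSup hbdd ht0)
  have hsm : s ≤ m := csSup_le ⟨t0, ht0⟩ fun t ht => hub t ht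
  have hsf : s < D.f x0 := hsm.trans_lt hmf
  obtain ⟨f0, hf0, hf0'⟩ := exists_between hsf
  have h1 := pow_lt_of_lt hs0 hf0 he0
  have hcont : Tendsto (fun m : ℝ => f0 ^ D.eta * m ^ (1 - D.eta)) (𝓝 s)
      (𝓝 (f0 ^ D.eta * s ^ (1 - D.eta))) :=
    ((Real.continuousAt_rpow_const s (1 - D.eta) (Or.inl hs0.ne')).tendsto).const_mul _
  obtain ⟨ε, hε, hball⟩ := Metric.eventually_nhds_iff_ball.1 (hcont.eventually (lt_mem_nhds h1))
  obtain ⟨t, ht, hst⟩ := exists_lt_of_lt_csSup ⟨t0, ht0⟩ (show s - ε < s by linarith)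
  have hts : t ≤ s := le_csSup hbdd ht
  have h2 := hball t (by rw [mem_ball, Real.dist_eq, abs_lt]; constructor <;> linarith)
  obtain ⟨t', h3, h4⟩ := exists_between h2
  have h5 := hL.lb_step ht (hs0.trans hf0) hf0' (hs0.trans h3) h4
  have h6 : t' ≤ s := le_csSup hbdd h5
  linarith

theorem s10 (hL : Late D n1 C1) {ε : ℝ} (hε : 0 < ε) : ∀ᶠ n in atTop, 1 - ε ≤ D.z n := by
  set u : ℕ → EE d → ℝ≥0∞ := fun n x => ENNReal.ofReal (D.g n x + C1 * PP D.γ n * D.q0 x) with hu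
  have hum : ∀ n, Measurable (u n) := fun n =>
    (((hL.toTraj.gcont n).measurable).add (hL.q0cont.measurable.const_mul _)).ennreal_ofReal
  have h1 := lintegral_liminf_le (μ := (volume : Measure (EE d))) (u := atTop) hum
  have h2 : ∀ x, ENNReal.ofReal (D.f x) ≤ liminf (fun n => u n x) atTop := by
    intro x
    refine le_of_forall_lt_imp_le_of_dense fun a ha => ?_
    have hatop : a ≠ ⊤ := ne_top_of_lt ha
    rw [ENNReal.lt_ofReal_iff_toReal_lt hatop] at ha
    obtain ⟨m, hm1, hm2⟩ := exists_between ha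
    have hm0 : 0 < m := lt_of_le_of_lt ENNReal.toReal_nonneg hm1
    obtain ⟨_, ρ, hρ, hlow⟩ := hL.s9 hm0 hm2
    refine le_liminf_of_le (by isBoundedDefault) ?_
    filter_upwards [hlow] with n hn
    have h3 := hn x (mem_ball_self hρ)
    rw [← ENNReal.ofReal_toReal hatop]
    refine ENNReal.ofReal_le_ofReal ?_
    have : 0 ≤ C1 * PP D.γ n * D.q0 x :=
      mul_nonneg (mul_nonneg hL.C10 (hL.wt.PP_pos n).le) (hL.q00 x)
    linarith
  have h3 : (1 : ℝ≥0∞) ≤ liminf (fun n => ∫⁻ x, u n x) atTop := by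
    calc (1 : ℝ≥0∞) = ENNReal.ofReal (∫ x, D.f x) := by rw [hL.fint1]; simp
      _ = ∫⁻ x, ENNReal.ofReal (D.f x) :=
          ofReal_integral_eq_lintegral_ofReal hL.fint (Eventually.of_forall hL.f0)
      _ ≤ ∫⁻ x, liminf (fun n => u n x) atTop := lintegral_mono h2
      _ ≤ _ := h1
  have h4 : ENNReal.ofReal (1 - ε / 2) < liminf (fun n => ∫⁻ x, u n x) atTop := by
    refine lt_of_lt_of_le ?_ h3
    rw [← ENNReal.ofReal_one]
    exact (ENNReal.ofReal_lt_ofReal_iff one_pos).2 (by linarith)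
  have h5 := eventually_lt_of_lt_liminf h4
  have hlim : Tendsto (fun n => C1 * PP D.γ n) atTop (𝓝 0) := by
    simpa using hL.wt.PP_lim.const_mul C1
  filter_upwards [h5, eventually_ge_atTop n1, hlim.eventually (gt_mem_nhds (half_pos hε))]
    with n h6 h7 h8
  have i1 : Integrable (fun x => D.g n x + C1 * PP D.γ n * D.q0 x) :=
    (hL.toTraj.gint n).add (hL.q0int.const_mul _)
  have e : ∫⁻ x, u n x = ENNReal.ofReal (D.z n + C1 * PP D.γ n) := by
    rw [hu, ← ofReal_integral_eq_lintegral_ofReal i1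
      (Eventually.of_forall fun x => by have := hL.glow n h7 x; simp only [Pi.zero_apply]; linarith),
      integral_add (hL.toTraj.gint n) (hL.q0int.const_mul _), integral_const_mul, hL.q0int1, mul_one]
    rfl
  rw [e] at h6
  have h9 := (ENNReal.ofReal_lt_ofReal_iff'.1 h6).1
  linarith

end Late


open MeasureTheory Filter Metric
open scoped Topology ENNReal NNReal

theorem Traj.h_up {d : ℕ} {D : Dat d} (hP : Traj D) {k : ℕ} {x : EE d} {ρ A : ℝ} (hρ : 0 < ρ)
    (hA : 0 ≤ A) (h : ∀ y ∈ ball x ρ, D.Phi k y * D.q k y ≤ A) :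
    D.h k x ≤ A + D.CK * D.b (k + 1) ^ D.rK * ρ ^ (-((d : ℝ) + D.rK)) := by
  have hb := hP.bpos (k + 1)
  set Fr := D.CK * D.b (k + 1) ^ D.rK * ρ ^ (-((d : ℝ) + D.rK)) with hFr
  have hC := hP.ker.Cpos
  have hFr0 : 0 ≤ Fr := by positivity
  calc D.h k x ≤ ∫ y, (A * kb D.K (D.b (k + 1)) (x - y) + D.Phi k y * D.q k y * Fr) := by
        refine integral_mono (hP.h_integrable k x)
          (((hP.ker.kb_integrable' hb x).const_mul A).add ((hP.Phiq_int k).mul_const Fr)) fun y => ?_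
        have h1 := hP.Phiq_nonneg k y
        have h2 := hP.ker.kb_nonneg hb (x - y)
        by_cases hy : y ∈ ball x ρ
        · have := mul_le_mul_of_nonneg_right (h y hy) h2
          have := mul_nonneg h1 hFr0
          simp only
          linarith
        · have h3 : kb D.K (D.b (k + 1)) (x - y) ≤ Fr := by
            refine hP.ker.kb_far hb hρ ?_
            rw [mem_ball, not_lt, dist_comm, dist_eq_norm] at hy
            exact hy
          have := mul_le_mul_of_nonneg_left h3 h1
          have := mul_nonneg hA h2
          simp only
          linarith
    _ = A + (∫ y, D.Phi k y * D.q k y) * Fr := by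
        rw [integral_add ((hP.ker.kb_integrable' hb x).const_mul A) ((hP.Phiq_int k).mul_const Fr),
          integral_const_mul, integral_mul_const, hP.ker.kb_int hb, mul_one]
    _ ≤ A + 1 * Fr := by
        have := mul_le_mul_of_nonneg_right (hP.Phiq_int_le k) hFr0
        linarith
    _ = _ := by rw [one_mul]

theorem absorb {C C' e : ℝ} (hC : 0 ≤ C) (he0 : 0 < e) :
    ∃ U : ℝ, 1 ≤ U ∧ ∀ u, U ≤ u → C * u ^ (1 - e) + C' ≤ u := by
  refine ⟨max 1 (max ((2 * C) ^ e⁻¹) (2 * C')), le_max_left _ _, fun u hu => ?_⟩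
  have h1 : 1 ≤ u := (le_max_left _ _).trans hu
  have h2 : (2 * C) ^ e⁻¹ ≤ u := (le_max_left _ _).trans ((le_max_right _ _).trans hu)
  have h3 : 2 * C' ≤ u := (le_max_right _ _).trans ((le_max_right _ _).trans hu)
  have hu0 : 0 < u := by linarith
  have h4 : 2 * C ≤ u ^ e := by
    have := Real.rpow_le_rpow (by positivity) h2 he0.le
    rwa [← Real.rpow_mul (by positivity), inv_mul_cancel₀ he0.ne', Real.rpow_one] at this
  have h5 : u ^ e * u ^ (1 - e) = u := by rw [← Real.rpow_add hu0]; simp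
  have h6 := mul_le_mul_of_nonneg_right h4 (Real.rpow_nonneg hu0.le (1 - e))
  linarith

namespace Late
variable {d : ℕ} {D : Dat d} {n1 : ℕ} {C1 : ℝ}

theorem q_up (hL : Late D n1 C1) {k : ℕ} {ζ M ε : ℝ} {y : EE d} (hζ : 0 < ζ) (hz : ζ ≤ D.z k)
    (hM : 0 ≤ M) (hg : D.g k y ≤ M) (hl : D.lam k * D.Bq ≤ ε) : D.q k y ≤ M / ζ + ε := by
  rw [hL.qdef]
  have h1 : D.g k y / D.z k ≤ M / ζ :=
    (div_le_div_of_nonneg_right hg (hζ.trans_le hz).le).trans (div_le_div_of_nonneg_left hM hζ hz)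
  have h2 : 0 ≤ M / ζ := by positivity
  have h3 := mul_le_mul_of_nonneg_left (hL.q0B y) (hL.lpos k).le
  have h4 := hL.lpos k
  have h5 := hL.l1 k
  nlinarith

theorem ev_lB (hL : Late D n1 C1) {ε : ℝ} (hε : 0 < ε) : ∀ᶠ k in atTop, D.lam k * D.Bq ≤ ε := by
  have : Tendsto (fun k => D.lam k * D.Bq) atTop (𝓝 0) := by simpa using hL.l0.mul_const D.Bq
  exact (this.eventually (gt_mem_nhds hε)).mono fun _ h => h.le

theorem s11a (hL : Late D n1 C1) (x0 : EE d) : ∃ S p : ℝ, 0 < S ∧ 0 ≤ p ∧ ∀ᶠ n in atTop,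
    ∀ x ∈ ball x0 1, D.Hh n x ≤ S * (1 - dist x x0) ^ (-p) := by
  have he0 := hL.eta0
  have he1 := hL.eta1
  have hr := hL.ker.rpos
  have hC := hL.ker.Cpos
  have hBf := hL.Bf0
  set p : ℝ := d * (d + D.rK) / D.rK with hp
  have hp0 : 0 ≤ p := by positivity
  obtain ⟨k0, hk0⟩ := eventually_atTop.1 ((hL.gH one_pos le_rfl (‖x0‖ + 1)).and
    ((hL.s10 (half_pos one_pos)).and (hL.ev_lB one_pos)))
  have hq : ∀ k, k0 ≤ k → ∀ y ∈ ball x0 1, D.q k y ≤ 4 * D.Hh k y + 4 := by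
    intro k hk y hy
    obtain ⟨h1, h2, h3⟩ := hk0 k hk
    have h4 := hL.toTraj.Hh_nonneg k y
    have h5 := hL.q_up (y := y) (ζ := 1 / 2) (M := 2 * D.Hh k y + 1) (by norm_num) (by linarith)
      (by linarith) (by linarith [(h1 y (norm_le_of_ball hy)).2]) h3
    linarith
  set C := D.Bf ^ D.eta * (8 * 2 ^ p) ^ (1 - D.eta) with hCd
  have hC0 : 0 ≤ C := by positivity
  obtain ⟨U, hU1, hU⟩ := absorb (C' := D.CK * 2 ^ ((d : ℝ) + D.rK)) hC0 he0
  have hbk := hL.bpos k0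
  set S := max U (D.CK * (D.b k0 ^ d)⁻¹) with hS
  have hSU : U ≤ S := le_max_left _ _
  have hS1 : 1 ≤ S := hU1.trans hSU
  have hSb : D.CK * (D.b k0 ^ d)⁻¹ ≤ S := le_max_right _ _
  have hSC : D.CK ≤ S := by
    refine le_trans ?_ hSb
    have : 1 ≤ (D.b k0 ^ d)⁻¹ := (one_le_inv₀ (by positivity)).2 (pow_le_one₀ hbk.le (hL.b1 _))
    nlinarith
  refine ⟨S, p, by linarith, hp0, ?_⟩
  filter_upwards [eventually_ge_atTop k0] with n hn
  have hphi : ∀ x ∈ ball x0 1, 1 ≤ (1 - dist x x0) ^ (-p) := by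
    intro x hx
    rw [mem_ball] at hx
    exact Real.one_le_rpow_of_pos_of_le_one_of_nonpos (by linarith)
      (by linarith [dist_nonneg (x := x) (y := x0)]) (by linarith)
  induction n, hn using Nat.le_induction with
  | base =>
    intro x hx
    have := hL.toTraj.Hh_le k0 x
    have := hphi x hx
    nlinarith
  | succ n hn ih =>
    intro x hx
    have hb := hL.bpos (n + 1)
    by_cases hc : D.CK * (D.b (n + 1) ^ d)⁻¹ ≤ S * (1 - dist x x0) ^ (-p)
    · exact (hL.toTraj.Hh_le _ x).trans hc
    push Not at hc
    have hx1 : dist x x0 < 1 := hx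
    set Dx := 1 - dist x x0 with hDx
    have hDx0 : 0 < Dx := by linarith
    have hkey : D.b (n + 1) ^ D.rK ≤ Dx ^ ((d : ℝ) + D.rK) := by
      by_contra hcon
      push Not at hcon
      have h1 := Real.rpow_le_rpow (z := d / D.rK) (by positivity) hcon.le (by positivity)
      rw [← Real.rpow_mul hDx0.le, ← Real.rpow_mul hb.le,
        show D.rK * (d / D.rK) = (d : ℝ) by field_simp,
        show ((d : ℝ) + D.rK) * (d / D.rK) = p by rw [hp]; ring, Real.rpow_natCast] at h1
      have h2 : (D.b (n + 1) ^ d)⁻¹ ≤ Dx ^ (-p) := by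
        rw [Real.rpow_neg hDx0.le]
        exact inv_anti₀ (by positivity) h1
      have h3 : 0 ≤ (D.b (n + 1) ^ d)⁻¹ := by positivity
      have h4 := mul_le_mul hSC h2 h3 (by linarith)
      linarith
    set u := S * Dx ^ (-p) with hu
    have hφ := hphi x hx
    have huU : U ≤ u := by rw [hu]; nlinarith
    have hu1 : 1 ≤ u := hU1.trans huU
    have h2p : (1 : ℝ) ≤ 2 ^ p := Real.one_le_rpow (by norm_num) hp0
    have hh : D.h n x ≤ u := by
      have h1 := hL.toTraj.h_up (k := n) (x := x) (ρ := Dx / 2) (A := C * u ^ (1 - D.eta))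
        (by positivity) (by positivity) (fun y hy => ?_)
      · refine h1.trans ((hU u huU).trans' ?_)
        have h2 : D.CK * D.b (n + 1) ^ D.rK * (Dx / 2) ^ (-((d : ℝ) + D.rK))
            ≤ D.CK * Dx ^ ((d : ℝ) + D.rK) * (Dx / 2) ^ (-((d : ℝ) + D.rK)) := by gcongr
        have h3 : D.CK * Dx ^ ((d : ℝ) + D.rK) * (Dx / 2) ^ (-((d : ℝ) + D.rK))
            = D.CK * 2 ^ ((d : ℝ) + D.rK) := by
          rw [Real.div_rpow hDx0.le (by norm_num), Real.rpow_neg hDx0.le, Real.rpow_neg (by norm_num)]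
          have : Dx ^ ((d : ℝ) + D.rK) ≠ 0 := by positivity
          field_simp
        linarith
      · have hyx : dist y x < Dx / 2 := hy
        have h2 := dist_triangle y x x0
        have hy1 : dist y x0 ≤ 1 - Dx / 2 := by linarith
        have hyb : y ∈ ball x0 1 := by rw [mem_ball]; linarith
        have h3 := hq n hn y hyb
        have h4 := ih y hyb
        have h5 : (1 - dist y x0) ^ (-p) ≤ (Dx / 2) ^ (-p) :=
          Real.rpow_le_rpow_of_nonpos (by positivity) (by linarith) (by linarith)
        have h6 : (Dx / 2) ^ (-p) = 2 ^ p * Dx ^ (-p) := by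
          rw [Real.div_rpow hDx0.le (by norm_num), Real.rpow_neg (by norm_num : (0 : ℝ) ≤ 2),
            div_inv_eq_mul, mul_comm]
        have h7 : D.Hh n y ≤ 2 ^ p * u := by
          calc D.Hh n y ≤ S * (2 ^ p * Dx ^ (-p)) := by
                refine h4.trans (mul_le_mul_of_nonneg_left (by rw [← h6]; exact h5) (by linarith))
            _ = _ := by rw [hu]; ring
        have h8 : D.q n y ≤ 8 * 2 ^ p * u := by nlinarith
        calc D.Phi n y * D.q n y ≤ D.f y ^ D.eta * D.q n y ^ (1 - D.eta) := hL.toTraj.Phiq_le n y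
          _ ≤ D.Bf ^ D.eta * (8 * 2 ^ p * u) ^ (1 - D.eta) := by
            refine mul_le_mul (Real.rpow_le_rpow (hL.f0 y) (hL.fB y) he0.le)
              (Real.rpow_le_rpow (hL.qnn n y) h8 (by linarith))
              (Real.rpow_nonneg (hL.qnn n y) _) (by positivity)
          _ = C * u ^ (1 - D.eta) := by
            rw [Real.mul_rpow (by positivity) (by positivity), hCd]; ring
    rw [Traj.Hh_succ]
    have h9 := ih x hx
    have h10 := hL.wt.pos (n + 1)
    have h11 := hL.wt.half (n + 1)
    nlinarith

/-- eventual upper bounds near a point -/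
def UBd (D : Dat d) (x0 : EE d) (m : ℝ) : Prop :=
  0 < m ∧ ∃ ρ > 0, ∀ᶠ n in atTop, ∀ x ∈ ball x0 ρ, D.g n x ≤ m

theorem UBd.mono {x0 : EE d} {m m' : ℝ} (h : UBd D x0 m) (hm : m ≤ m') : UBd D x0 m' := by
  obtain ⟨h0, ρ, hρ, h⟩ := h
  exact ⟨h0.trans_le hm, ρ, hρ, h.mono fun n hn x hx => (hn x hx).trans hm⟩

theorem s11 (hL : Late D n1 C1) (x0 : EE d) : ∃ m, UBd D x0 m := by
  obtain ⟨S, p, hS, hp, h⟩ := hL.s11a x0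
  refine ⟨2 * (S * 2 ^ p) + 1, by positivity, 1 / 2, by norm_num, ?_⟩
  filter_upwards [h, hL.gH one_pos le_rfl (‖x0‖ + 1)] with n h1 h2 x hx
  have hx1 : dist x x0 < 1 / 2 := hx
  have hxb : x ∈ ball x0 1 := by rw [mem_ball]; linarith
  have h3 := (h2 x (norm_le_of_ball hxb)).2
  have h4 := h1 x hxb
  have h5 : (1 - dist x x0) ^ (-p) ≤ (1 / 2 : ℝ) ^ (-p) :=
    Real.rpow_le_rpow_of_nonpos (by positivity) (by linarith) (by linarith)
  have h6 : (1 / 2 : ℝ) ^ (-p) = 2 ^ p := by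
    rw [one_div, Real.inv_rpow (by norm_num), Real.rpow_neg (by norm_num), inv_inv]
  rw [h6] at h5
  have h7 := mul_le_mul_of_nonneg_left h5 hS.le
  linarith

theorem ub_step (hL : Late D n1 C1) {x0 : EE d} {m f1 t : ℝ} (hm : UBd D x0 m)
    (hf : D.f x0 < f1) (htm : f1 ^ D.eta * m ^ (1 - D.eta) < t) : UBd D x0 t := by
  obtain ⟨hm0, ρ, hρ, hmn⟩ := hm
  have he0 := hL.eta0
  have he1 := hL.eta1
  have hf1 : 0 < f1 := (hL.f0 x0).trans_lt hf
  have ht : 0 < t := lt_of_le_of_lt (by positivity) htm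
  have hcont : Tendsto (fun ε : ℝ => (1 + ε) *
      (f1 ^ D.eta * ((1 + ε) * m + ε) ^ (1 - D.eta) + ε + ε) + ε) (𝓝 0)
      (𝓝 (f1 ^ D.eta * m ^ (1 - D.eta))) := by
    have : ContinuousAt (fun ε : ℝ => (1 + ε) *
      (f1 ^ D.eta * ((1 + ε) * m + ε) ^ (1 - D.eta) + ε + ε) + ε) 0 := by
      have h1 : ContinuousAt (fun ε : ℝ => (1 + ε) * m + ε) 0 := by fun_prop
      have h2 := h1.rpow_const (p := 1 - D.eta) (Or.inr (by linarith))
      fun_prop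
    have h3 := this.tendsto
    simpa using h3
  have hex : ∃ ε : ℝ, 0 < ε ∧ ε < 1 ∧ (1 + ε) *
      (f1 ^ D.eta * ((1 + ε) * m + ε) ^ (1 - D.eta) + ε + ε) + ε < t := by
    have h1 := (hcont.eventually (gt_mem_nhds htm)).filter_mono
      (nhdsWithin_le_nhds : 𝓝[>] (0 : ℝ) ≤ 𝓝 0)
    have h2 : ∀ᶠ ε in 𝓝[>] (0 : ℝ), ε < 1 :=
      (gt_mem_nhds (zero_lt_one' ℝ)).filter_mono nhdsWithin_le_nhds
    obtain ⟨ε, ⟨h3, h4⟩, h5⟩ := ((h1.and h2).and self_mem_nhdsWithin).exists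
    exact ⟨ε, h5, h4, h3⟩
  obtain ⟨ε, hε0, hε1, hεt⟩ := hex
  set a0 := f1 ^ D.eta * ((1 + ε) * m + ε) ^ (1 - D.eta) with ha0
  have ha00 : 0 ≤ a0 := by positivity
  have hfn : ∀ᶠ y in 𝓝 x0, D.f y < f1 := hL.fcont.continuousAt.eventually (gt_mem_nhds hf)
  obtain ⟨ρ1, hρ1, hfball⟩ := Metric.eventually_nhds_iff_ball.1 hfn
  set ρ' := min ρ ρ1 / 2 with hρ'
  have hρ'0 : 0 < ρ' := by positivity
  have hfar : ∀ᶠ k in atTop, D.CK * D.b (k + 1) ^ D.rK * ρ' ^ (-((d : ℝ) + D.rK)) < ε := by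
    have h1 : Tendsto (fun k => D.b (k + 1)) atTop (𝓝 0) := hL.b0.comp (tendsto_add_atTop_nat 1)
    have h2 := h1.rpow_const (p := D.rK) (Or.inr hL.ker.rpos.le)
    rw [Real.zero_rpow hL.ker.rpos.ne'] at h2
    have h3 : Tendsto (fun k => D.CK * D.b (k + 1) ^ D.rK * ρ' ^ (-((d : ℝ) + D.rK))) atTop (𝓝 0) := by
      simpa using (h2.const_mul D.CK).mul_const _
    exact h3.eventually (gt_mem_nhds hε0)
  have hδ : 0 < 1 - (1 + ε)⁻¹ := by
    have : (1 + ε)⁻¹ < 1 := inv_lt_one_of_one_lt₀ (by linarith)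
    linarith
  obtain ⟨k0, hk0⟩ := eventually_atTop.1 (hmn.and (hfar.and ((hL.s10 hδ).and (hL.ev_lB hε0))))
  have hhup : ∀ k, k0 ≤ k → ∀ x ∈ ball x0 ρ', D.h k x ≤ a0 + ε := by
    intro k hk x hx
    obtain ⟨hg, hfr, hz, hl⟩ := hk0 k hk
    have hsub : ∀ y ∈ ball x ρ', y ∈ ball x0 (min ρ ρ1) := by
      intro y hy
      rw [mem_ball] at *
      have := dist_triangle y x x0
      rw [hρ'] at hx hy
      linarith
    refine (hL.toTraj.h_up (A := a0) hρ'0 ha00 fun y hy => ?_).trans (by linarith)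
    have h1 := hg y (ball_subset_ball (min_le_left _ _) (hsub y hy))
    have h2 := (hfball y (ball_subset_ball (min_le_right _ _) (hsub y hy))).le
    have h3 := hL.q_up (ζ := (1 + ε)⁻¹) (by positivity) (by linarith) hm0.le h1 hl
    rw [div_inv_eq_mul, mul_comm] at h3
    refine (hL.toTraj.Phiq_le k y).trans ?_
    exact mul_le_mul (Real.rpow_le_rpow (hL.f0 y) h2 he0.le)
      (Real.rpow_le_rpow (hL.qnn k y) h3 (by linarith))
      (Real.rpow_nonneg (hL.qnn k y) _) (by positivity)
  refine ⟨ht, ρ', hρ'0, ?_⟩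
  have hlim : Tendsto (fun k => PP D.γ k / PP D.γ k0 * (D.CK * (D.b k0 ^ d)⁻¹)) atTop (𝓝 0) := by
    simpa using (hL.wt.PP_lim.div_const (PP D.γ k0)).mul_const (D.CK * (D.b k0 ^ d)⁻¹)
  filter_upwards [hlim.eventually (gt_mem_nhds hε0), eventually_ge_atTop k0,
    hL.gH hε0 hε1.le (‖x0‖ + ρ')] with n h1 h2 h3 x hx
  have h4 := hL.wt.avg_le (u := fun k => D.h k x) (C := a0 + ε) h2 fun k hk _ => hhup k hk x hx
  have h5 : avg D.γ (fun k => D.h k x) k0 ≤ D.CK * (D.b k0 ^ d)⁻¹ := hL.toTraj.Hh_le k0 x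
  have h6 : D.Hh n x ≤ a0 + ε + ε := by
    show avg D.γ (fun k => D.h k x) n ≤ _
    have h7 := mul_le_mul_of_nonneg_left h5 (hL.wt.div_nonneg' k0 n)
    have h8 := mul_nonneg (hL.wt.div_nonneg' k0 n) (by linarith : 0 ≤ a0 + ε)
    nlinarith
  have h8 := (h3 x (norm_le_of_ball hx)).2
  have h9 := mul_le_mul_of_nonneg_left h6 (by linarith : 0 ≤ 1 + ε)
  linarith

theorem s12 (hL : Late D n1 C1) {x0 : EE d} {m : ℝ} (hmf : D.f x0 < m) : UBd D x0 m := by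
  by_contra hcon
  have he0 := hL.eta0
  have he1 := hL.eta1
  have hlb : ∀ t, UBd D x0 t → m ≤ t := by
    intro t ht
    by_contra h
    push Not at h
    exact hcon (ht.mono h.le)
  obtain ⟨t0, ht0⟩ := hL.s11 x0
  have hbdd : BddBelow {t | UBd D x0 t} := ⟨m, fun t ht => hlb t ht⟩
  set s := sInf {t | UBd D x0 t} with hs
  have hsm : m ≤ s := le_csInf ⟨t0, ht0⟩ fun t ht => hlb t ht
  have hsf : D.f x0 < s := hmf.trans_le hsm
  have hs0 : 0 < s := (hL.f0 x0).trans_lt hsf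
  obtain ⟨f1, hf1, hf1'⟩ := exists_between hsf
  have h1 := pow_lt_of_gt hs0 ((hL.f0 x0).trans_lt hf1) hf1' he0
  have hcont : Tendsto (fun m : ℝ => f1 ^ D.eta * m ^ (1 - D.eta)) (𝓝 s)
      (𝓝 (f1 ^ D.eta * s ^ (1 - D.eta))) :=
    ((Real.continuousAt_rpow_const s (1 - D.eta) (Or.inl hs0.ne')).tendsto).const_mul _
  obtain ⟨ε, hε, hball⟩ := Metric.eventually_nhds_iff_ball.1 (hcont.eventually (gt_mem_nhds h1))
  obtain ⟨t, ht, hst⟩ := exists_lt_of_csInf_lt ⟨t0, ht0⟩ (show s < s + ε by linarith)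
  have hts : s ≤ t := csInf_le hbdd ht
  have h2 := hball t (by rw [mem_ball, Real.dist_eq, abs_lt]; constructor <;> linarith)
  obtain ⟨t', h3, h4⟩ := exists_between h2
  have h5 := hL.ub_step ht hf1 h3
  have h6 : s ≤ t' := csInf_le hbdd h5
  linarith

theorem s13 (hL : Late D n1 C1) : UB D := by
  intro A hA ε hε
  refine hA.induction_on (p := fun A => ∀ᶠ n in atTop, ∀ x ∈ A, D.g n x ≤ D.f x + ε) ?_ ?_ ?_ ?_
  · simp
  · intro s t hst h
    exact h.mono fun n hn x hx => hn x (hst hx)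
  · intro s t hs ht
    filter_upwards [hs, ht] with n h1 h2 x hx
    exact hx.elim (h1 x) (h2 x)
  · intro x0 _
    obtain ⟨_, ρ, hρ, h⟩ := hL.s12 (show D.f x0 < D.f x0 + ε / 2 by linarith)
    have hfn : ∀ᶠ y in 𝓝 x0, D.f x0 - ε / 2 < D.f y :=
      hL.fcont.continuousAt.eventually (lt_mem_nhds (by linarith))
    refine ⟨ball x0 ρ ∩ {y | D.f x0 - ε / 2 < D.f y},
      nhdsWithin_le_nhds (inter_mem (ball_mem_nhds _ hρ) hfn), ?_⟩
    filter_upwards [h] with n hn x hx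
    have h1 := hn x hx.1
    have h2 : D.f x0 - ε / 2 < D.f x := hx.2
    linarith

end Late

theorem Traj.ub {d : ℕ} {D : Dat d} (hP : Traj D) : UB D := by
  by_cases h : ∀ n, D.z n ≤ 0
  · exact hP.s0 h
  push Not at h
  obtain ⟨T, hT⟩ := h
  by_cases hB : Tendsto (fun n => D.z n / D.b n ^ d) atTop (𝓝 0)
  · exact hP.caseB hT hB
  obtain ⟨δ, hδ, hA⟩ := hP.caseA hT hB
  obtain ⟨n1, hn1, h7⟩ := hP.s7 hT hδ hA
  obtain ⟨C1, hC1, h2⟩ := hP.s2 hT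
  have hL : Late D n1 C1 :=
    { hP with
      good := fun n hn => (h7 n hn).1
      zp := fun n hn => (h7 n hn).2.1
      z4 := fun n hn => (h7 n hn).2.2
      C10 := hC1
      glow := fun n hn => h2 n (hn1.trans hn) }
  exact hL.s13


open MeasureTheory Filter Metric
open scoped Topology ENNReal NNReal

/-! ### Disintegration -/

theorem disint {Ω Ω' : Type*} [MeasurableSpace Ω] [MeasurableSpace Ω'] {d : ℕ} (μ : Measure Ω)
    [IsProbabilityMeasure μ] {T : Ω → Ω'} (hT : Measurable T) {Y : Ω → EE d} (hY : Measurable Y)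
    {r : Ω' × EE d → ℝ≥0∞} (hr : Measurable r)
    (h : ∀ A : Set Ω', MeasurableSet A → ∀ φ : BoundedContinuousFunction (EE d) ℝ≥0,
      ∫⁻ ω in T ⁻¹' A, (φ (Y ω) : ℝ≥0∞) ∂μ
        = ∫⁻ ω in T ⁻¹' A, (∫⁻ y, r (T ω, y) * (φ y : ℝ≥0∞)) ∂μ)
    {G : Ω' × EE d → ℝ≥0∞} (hG : Measurable G) :
    ∫⁻ ω, G (T ω, Y ω) ∂μ = ∫⁻ ω, (∫⁻ y, r (T ω, y) * G (T ω, y)) ∂μ := by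
  set ν1 := μ.map (fun ω => (T ω, Y ω)) with hν1
  set ν2 := ((μ.map T).prod (volume : Measure (EE d))).withDensity r with hν2
  have hTY : Measurable (fun ω => (T ω, Y ω)) := hT.prodMk hY
  have : IsProbabilityMeasure ν1 := Measure.isProbabilityMeasure_map hTY.aemeasurable
  have : IsProbabilityMeasure (μ.map T) := Measure.isProbabilityMeasure_map hT.aemeasurable
  have key : ν1 = ν2 := by
    refine Measure.ext_prod fun {A B} hA hB => ?_
    have hAu : MeasurableSet (A ×ˢ (Set.univ : Set (EE d))) := hA.prod MeasurableSet.univ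
    have e : (ν1.restrict (A ×ˢ Set.univ)).map Prod.snd
        = (ν2.restrict (A ×ˢ Set.univ)).map Prod.snd := by
      have : IsFiniteMeasure ((ν1.restrict (A ×ˢ (Set.univ : Set (EE d)))).map Prod.snd) := by
        infer_instance
      refine ext_of_forall_lintegral_eq_of_IsFiniteMeasure fun φ => ?_
      have hφ : Measurable (fun y => (φ y : ℝ≥0∞)) :=
        (ENNReal.continuous_coe.comp φ.continuous).measurable
      have hφ2 : Measurable (fun p : Ω' × EE d => (φ p.2 : ℝ≥0∞)) := hφ.comp measurable_snd
      rw [lintegral_map hφ measurable_snd, lintegral_map hφ measurable_snd, hν1,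
        setLIntegral_map hAu hφ2 hTY, hν2, restrict_withDensity hAu,
        lintegral_withDensity_eq_lintegral_mul _ hr hφ2,
        ← Measure.prod_restrict, Measure.restrict_univ,
        lintegral_prod _ (hr.mul hφ2).aemeasurable,
        setLIntegral_map hA (Measurable.lintegral_prod_right' (hr.mul hφ2)) hT]
      have e4 : (fun ω => (T ω, Y ω)) ⁻¹' A ×ˢ (Set.univ : Set (EE d)) = T ⁻¹' A := by
        ext ω; simp
      rw [e4]
      exact h A hA φ
    have e2 := congrArg (fun m => m B) e
    simp only [Measure.map_apply measurable_snd hB,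
      Measure.restrict_apply (measurable_snd hB)] at e2
    have e3 : (Prod.snd ⁻¹' B ∩ A ×ˢ (Set.univ : Set (EE d))) = A ×ˢ B := by
      ext p; simp [and_comm]
    rwa [e3] at e2
  have h1 : ∫⁻ p, G p ∂ν1 = ∫⁻ ω, G (T ω, Y ω) ∂μ := lintegral_map hG hTY
  have h2 : ∫⁻ p, G p ∂ν2 = ∫⁻ ω, (∫⁻ y, r (T ω, y) * G (T ω, y)) ∂μ := by
    rw [hν2, lintegral_withDensity_eq_lintegral_mul _ hr hG,
      lintegral_prod _ (hr.mul hG).aemeasurable,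
      lintegral_map (Measurable.lintegral_prod_right' (hr.mul hG)) hT]
    rfl
  rw [← h1, key, h2]

/-! ### Abstract adaptive sampling and exponential inequality -/

structure Proc {Ω : Type*} {m0 : MeasurableSpace Ω} (μ : Measure Ω) {d : ℕ}
    (F : ℕ → MeasurableSpace Ω) (X : ℕ → Ω → EE d) (q : ℕ → Ω → EE d → ℝ) : Prop where
  le : ∀ n, F n ≤ m0
  mono : ∀ n, F n ≤ F (n + 1)
  Xm : ∀ n, Measurable[F (n + 1)] (X (n + 1))
  qm : ∀ n, @Measurable (Ω × EE d) ℝ ((F n).prod inferInstance) _ (fun p => q n p.1 p.2)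
  qnn : ∀ᵐ ω ∂μ, ∀ n x, 0 ≤ q n ω x
  qint : ∀ᵐ ω ∂μ, ∀ n, ∫ x, q n ω x = 1
  dis : ∀ n (G : Ω × EE d → ℝ≥0∞), @Measurable (Ω × EE d) ℝ≥0∞ ((F n).prod inferInstance) _ G →
    ∫⁻ ω, G (ω, X (n + 1) ω) ∂μ = ∫⁻ ω, (∫⁻ y, ENNReal.ofReal (q n ω y) * G (ω, y)) ∂μ

section meas
variable {Ω : Type*} [m : MeasurableSpace Ω] {d : ℕ}

theorem sec_meas {G : Ω × EE d → ℝ} (h : Measurable G) (ω : Ω) : Measurable (fun y => G (ω, y)) :=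
  h.comp measurable_prodMk_left

theorem par_meas {G H : Ω × EE d → ℝ} (h : Measurable G) (h' : Measurable H) :
    Measurable (fun ω => ∫ y, G (ω, y) * H (ω, y)) :=
  (StronglyMeasurable.integral_prod_right' (h.mul h').stronglyMeasurable).measurable

theorem eval_meas {G : Ω × EE d → ℝ} (h : Measurable G) {Y : Ω → EE d} (hY : Measurable Y) :
    Measurable (fun ω => G (ω, Y ω)) := h.comp (measurable_id.prodMk hY)

theorem expo_meas {A B : Ω → ℝ} {G : Ω × EE d → ℝ} (hA : Measurable A) (hB : Measurable B)
    (hG : Measurable G) (s t : ℝ) :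
    Measurable (fun p : Ω × EE d => ENNReal.ofReal (Real.exp (A p.1 + (s * G p - t * B p.1)))) :=
  (Real.measurable_exp.comp ((hA.comp measurable_fst).add
    ((hG.const_mul s).sub ((hB.comp measurable_fst).const_mul t)))).ennreal_ofReal

end meas

theorem inner_bound {d : ℕ} {Ψ q : EE d → ℝ} (hΨm : Measurable Ψ) (hqn : ∀ x, 0 ≤ q x)
    (hq1 : ∫ x, q x = 1) {M θ σ : ℝ} (hθ : 0 ≤ θ) (hθM : θ * M ≤ 1) (hσ : σ = 1 ∨ σ = -1)
    (hΨ0 : ∀ y, 0 ≤ Ψ y) (hΨ1 : ∀ y, Ψ y ≤ M) (A : ℝ) :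
    ∫⁻ y, ENNReal.ofReal (q y) * ENNReal.ofReal (Real.exp (A + (σ * θ * Ψ y
      - (σ * θ + θ ^ 2 * M) * ∫ y, Ψ y * q y))) ≤ ENNReal.ofReal (Real.exp A) := by
  have hqi : Integrable q := by
    by_contra h
    rw [integral_undef h] at hq1
    exact zero_ne_one hq1
  have hM0 : 0 ≤ M := (hΨ0 0).trans (hΨ1 0)
  have hi : Integrable (fun y => Ψ y * q y) := by
    refine hqi.bdd_mul (c := M) hΨm.aestronglyMeasurable (Eventually.of_forall fun y => ?_)
    rw [Real.norm_of_nonneg (hΨ0 y)]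
    exact hΨ1 y
  set κ := σ * θ + θ ^ 2 * M with hκ
  set p := ∫ y, Ψ y * q y with hp
  have hσ2 : σ ^ 2 = 1 := by rcases hσ with h | h <;> rw [h] <;> norm_num
  have hσa : |σ| = 1 := by rcases hσ with h | h <;> rw [h] <;> norm_num
  have hexp : ∀ y, Real.exp (σ * θ * Ψ y) ≤ 1 + κ * Ψ y := by
    intro y
    have h0 := hΨ0 y
    have h1 := hΨ1 y
    have h2 : |σ * θ * Ψ y| ≤ 1 := by
      rw [abs_mul, abs_mul, hσa, abs_of_nonneg hθ, abs_of_nonneg h0, one_mul]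
      exact (mul_le_mul_of_nonneg_left h1 hθ).trans hθM
    have h3 := (abs_le.1 (Real.abs_exp_sub_one_sub_id_le h2)).2
    have h4 : (σ * θ * Ψ y) ^ 2 ≤ θ ^ 2 * M * Ψ y := by
      have : (σ * θ * Ψ y) ^ 2 = θ ^ 2 * (Ψ y * Ψ y) := by
        rw [mul_pow, mul_pow, hσ2]; ring
      rw [this, mul_assoc]
      exact mul_le_mul_of_nonneg_left (mul_le_mul_of_nonneg_right h1 h0) (sq_nonneg _)
    rw [hκ]
    nlinarith
  have e : ∀ y, ENNReal.ofReal (q y) * ENNReal.ofReal (Real.exp (A + (σ * θ * Ψ y - κ * p)))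
      = ENNReal.ofReal (Real.exp (A - κ * p)) * ENNReal.ofReal (Real.exp (σ * θ * Ψ y) * q y) := by
    intro y
    rw [← ENNReal.ofReal_mul (hqn y), ← ENNReal.ofReal_mul (Real.exp_pos _).le]
    congr 1
    rw [show A + (σ * θ * Ψ y - κ * p) = (A - κ * p) + σ * θ * Ψ y by ring, Real.exp_add]
    ring
  simp_rw [e]
  rw [lintegral_const_mul' _ _ ENNReal.ofReal_ne_top]
  have hb : ∫⁻ y, ENNReal.ofReal (Real.exp (σ * θ * Ψ y) * q y) ≤ ENNReal.ofReal (1 + κ * p) := by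
    have hi2 : Integrable (fun y => q y + κ * (Ψ y * q y)) := hqi.add (hi.const_mul κ)
    have e2 : ∫ y, (q y + κ * (Ψ y * q y)) = 1 + κ * p := by
      rw [integral_add hqi (hi.const_mul κ), integral_const_mul, hq1]
    rw [← e2, ofReal_integral_eq_lintegral_ofReal hi2]
    · refine lintegral_mono fun y => ENNReal.ofReal_le_ofReal ?_
      have := mul_le_mul_of_nonneg_right (hexp y) (hqn y)
      linarith
    · refine Eventually.of_forall fun y => ?_
      have h1 := mul_le_mul_of_nonneg_right ((Real.exp_pos _).le.trans (hexp y)) (hqn y)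
      simp only [Pi.zero_apply]
      linarith
  calc _ ≤ ENNReal.ofReal (Real.exp (A - κ * p)) * ENNReal.ofReal (Real.exp (κ * p)) := by
        refine mul_le_mul_right (hb.trans (ENNReal.ofReal_le_ofReal ?_)) _
        linarith [Real.add_one_le_exp (κ * p)]
    _ = ENNReal.ofReal (Real.exp A) := by
        rw [← ENNReal.ofReal_mul (Real.exp_pos _).le, ← Real.exp_add]
        congr 2; ring

namespace Proc
variable {Ω : Type*} {m0 : MeasurableSpace Ω} {μ : Measure Ω} {d : ℕ}
    {F : ℕ → MeasurableSpace Ω} {X : ℕ → Ω → EE d} {q : ℕ → Ω → EE d → ℝ}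

/-- exponent -/
noncomputable def ex (X : ℕ → Ω → EE d) (q : ℕ → Ω → EE d → ℝ) (Ψ : ℕ → Ω → EE d → ℝ)
    (s t : ℝ) (n : ℕ) (ω : Ω) : ℝ :=
  ∑ k ∈ Finset.range n, (s * Ψ k ω (X (k + 1) ω) - t * ∫ y, Ψ k ω y * q k ω y)

theorem term_meas (hP : Proc μ F X q) {Ψ : ℕ → Ω → EE d → ℝ} {k : ℕ}
    (hΨ : @Measurable (Ω × EE d) ℝ ((F k).prod inferInstance) _ (fun p => Ψ k p.1 p.2)) (s t : ℝ) :
    Measurable[F (k + 1)] (fun ω => s * Ψ k ω (X (k + 1) ω) - t * ∫ y, Ψ k ω y * q k ω y) := by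
  have h1 : Measurable[F (k + 1)] (fun ω => Ψ k ω (X (k + 1) ω)) := by
    refine @eval_meas Ω (F (k + 1)) d (fun p => Ψ k p.1 p.2) ?_ (X (k + 1)) (hP.Xm k)
    exact hΨ.mono (sup_le_sup (MeasurableSpace.comap_mono (hP.mono k)) le_rfl) le_rfl
  have h2 : Measurable[F (k + 1)] (fun ω => ∫ y, Ψ k ω y * q k ω y) :=
    (@par_meas Ω (F k) d (fun p => Ψ k p.1 p.2) (fun p => q k p.1 p.2) hΨ (hP.qm k)).mono
      (hP.mono k) le_rfl
  exact (h1.const_mul s).sub (h2.const_mul t)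

theorem ex_meas (hP : Proc μ F X q) {Ψ : ℕ → Ω → EE d → ℝ}
    (hΨ : ∀ k, @Measurable (Ω × EE d) ℝ ((F k).prod inferInstance) _ (fun p => Ψ k p.1 p.2))
    (s t : ℝ) (n : ℕ) : Measurable[F n] (ex X q Ψ s t n) := by
  induction n with
  | zero =>
    unfold ex
    simp only [Finset.range_zero, Finset.sum_empty]
    exact measurable_const
  | succ n ih =>
    unfold ex
    simp only [Finset.sum_range_succ]
    exact (ih.mono (hP.mono n) le_rfl).add (hP.term_meas (hΨ n) s t)

theorem chern [IsProbabilityMeasure μ] (hP : Proc μ F X q) {Ψ : ℕ → Ω → EE d → ℝ}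
    (hΨ : ∀ k, @Measurable (Ω × EE d) ℝ ((F k).prod inferInstance) _ (fun p => Ψ k p.1 p.2))
    {M θ σ : ℝ} (hθ : 0 ≤ θ) (hθM : θ * M ≤ 1) (hσ : σ = 1 ∨ σ = -1) (n : ℕ)
    (hb : ∀ᵐ ω ∂μ, ∀ k, k < n → ∀ y, 0 ≤ Ψ k ω y ∧ Ψ k ω y ≤ M) :
    ∫⁻ ω, ENNReal.ofReal (Real.exp (ex X q Ψ (σ * θ) (σ * θ + θ ^ 2 * M) n ω)) ∂μ ≤ 1 := by
  induction n with
  | zero => simp [ex]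
  | succ n ih =>
    have ih := ih (hb.mono fun ω h k hk => h k (by omega))
    refine le_trans ?_ ih
    set κ := σ * θ + θ ^ 2 * M with hκ
    have e := hP.dis n (fun p => ENNReal.ofReal (Real.exp (ex X q Ψ (σ * θ) κ n p.1
      + (σ * θ * Ψ n p.1 p.2 - κ * ∫ y, Ψ n p.1 y * q n p.1 y))))
      (@expo_meas Ω (F n) d (ex X q Ψ (σ * θ) κ n) (fun ω => ∫ y, Ψ n ω y * q n ω y)
        (fun p => Ψ n p.1 p.2) (hP.ex_meas hΨ _ _ n)
        (@par_meas Ω (F n) d (fun p => Ψ n p.1 p.2) (fun p => q n p.1 p.2) (hΨ n) (hP.qm n))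
        (hΨ n) (σ * θ) κ)
    have e2 : ∀ ω, ex X q Ψ (σ * θ) κ (n + 1) ω = ex X q Ψ (σ * θ) κ n ω
      + (σ * θ * Ψ n ω (X (n + 1) ω) - κ * ∫ y, Ψ n ω y * q n ω y) := fun ω => by
      unfold ex
      rw [Finset.sum_range_succ]
    simp_rw [e2]
    simp only at e
    rw [e]
    refine lintegral_mono_ae ?_
    filter_upwards [hb, hP.qnn, hP.qint] with ω h1 h2 h3
    exact inner_bound (@sec_meas Ω (F n) d (fun p => Ψ n p.1 p.2) (hΨ n) ω) (h2 n) (h3 n) hθ hθM hσ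
      (fun y => (h1 n (by omega) y).1) (fun y => (h1 n (by omega) y).2) _

theorem tail [IsProbabilityMeasure μ] (hP : Proc μ F X q) {Ψ : ℕ → Ω → EE d → ℝ}
    (hΨ : ∀ k, @Measurable (Ω × EE d) ℝ ((F k).prod inferInstance) _ (fun p => Ψ k p.1 p.2))
    {M ε s : ℝ} (hM : 0 < M) (hε : 0 < ε) (hε1 : ε ≤ 1) (n : ℕ)
    (hb : ∀ᵐ ω ∂μ, ∀ k, k < n → ∀ y, 0 ≤ Ψ k ω y ∧ Ψ k ω y ≤ M) :
    μ {ω | ¬ ((1 - ε) * (∑ k ∈ Finset.range n, ∫ y, Ψ k ω y * q k ω y) - s * M / ε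
        ≤ ∑ k ∈ Finset.range n, Ψ k ω (X (k + 1) ω) ∧
      ∑ k ∈ Finset.range n, Ψ k ω (X (k + 1) ω) ≤
        (1 + ε) * (∑ k ∈ Finset.range n, ∫ y, Ψ k ω y * q k ω y) + s * M / ε)}
      ≤ ENNReal.ofReal (2 * Real.exp (-s)) := by
  have hθ : 0 < ε / M := by positivity
  have hθM : ε / M * M ≤ 1 := by rw [div_mul_cancel₀ _ hM.ne']; exact hε1
  have one : ∀ σ : ℝ, σ = 1 ∨ σ = -1 → μ {ω | s ≤ ex X q Ψ (σ * (ε / M))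
      (σ * (ε / M) + (ε / M) ^ 2 * M) n ω} ≤ ENNReal.ofReal (Real.exp (-s)) := by
    intro σ hσ
    have h1 := hP.chern hΨ hθ.le hθM hσ n hb
    have hm : AEMeasurable (fun ω => ENNReal.ofReal (Real.exp (ex X q Ψ (σ * (ε / M))
      (σ * (ε / M) + (ε / M) ^ 2 * M) n ω))) μ :=
      (Real.measurable_exp.comp ((hP.ex_meas hΨ _ _ n).mono (hP.le n) le_rfl)).ennreal_ofReal.aemeasurable
    have h2 := meas_ge_le_lintegral_div hm (ε := ENNReal.ofReal (Real.exp s))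
      (by simp [Real.exp_pos]) ENNReal.ofReal_ne_top
    refine (measure_mono fun ω hω => ?_).trans (h2.trans ?_)
    · exact ENNReal.ofReal_le_ofReal (Real.exp_le_exp.2 hω)
    · rw [Real.exp_neg, ENNReal.ofReal_inv_of_pos (Real.exp_pos s), ← one_div]
      exact ENNReal.div_le_div_right h1 _
  have hu : {ω | ¬ ((1 - ε) * (∑ k ∈ Finset.range n, ∫ y, Ψ k ω y * q k ω y) - s * M / ε
        ≤ ∑ k ∈ Finset.range n, Ψ k ω (X (k + 1) ω) ∧
      ∑ k ∈ Finset.range n, Ψ k ω (X (k + 1) ω) ≤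
        (1 + ε) * (∑ k ∈ Finset.range n, ∫ y, Ψ k ω y * q k ω y) + s * M / ε)} ⊆
      {ω | s ≤ ex X q Ψ ((-1) * (ε / M)) ((-1) * (ε / M) + (ε / M) ^ 2 * M) n ω} ∪
      {ω | s ≤ ex X q Ψ (1 * (ε / M)) (1 * (ε / M) + (ε / M) ^ 2 * M) n ω} := by
    intro ω hω
    simp only [Set.mem_ofPred_eq, not_and_or, not_le] at hω
    have e3 : ∀ s t : ℝ, ex X q Ψ s t n ω = s * (∑ k ∈ Finset.range n, Ψ k ω (X (k + 1) ω))
        - t * (∑ k ∈ Finset.range n, ∫ y, Ψ k ω y * q k ω y) := by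
      intro s t
      unfold ex
      rw [Finset.sum_sub_distrib, Finset.mul_sum, Finset.mul_sum]
    set S := ∑ k ∈ Finset.range n, Ψ k ω (X (k + 1) ω)
    set H := ∑ k ∈ Finset.range n, ∫ y, Ψ k ω y * q k ω y
    have es : ε / M * (s * M / ε) = s := by field_simp
    rcases hω with hω | hω
    · left
      simp only [Set.mem_ofPred_eq]
      rw [e3, show (-1) * (ε / M) * S - ((-1) * (ε / M) + (ε / M) ^ 2 * M) * H
        = ε / M * ((1 - ε) * H - S) by field_simp; ring]
      have := mul_le_mul_of_nonneg_left (show s * M / ε ≤ (1 - ε) * H - S by linarith) hθ.le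
      linarith
    · right
      simp only [Set.mem_ofPred_eq]
      rw [e3, show 1 * (ε / M) * S - (1 * (ε / M) + (ε / M) ^ 2 * M) * H
        = ε / M * (S - (1 + ε) * H) by field_simp]
      have := mul_le_mul_of_nonneg_left (show s * M / ε ≤ S - (1 + ε) * H by linarith) hθ.le
      linarith
  refine (measure_mono hu).trans ((measure_union_le _ _).trans
    ((add_le_add (one _ (Or.inr rfl)) (one _ (Or.inl rfl))).trans ?_))
  rw [← ENNReal.ofReal_add (Real.exp_pos _).le (Real.exp_pos _).le]
  exact ENNReal.ofReal_le_ofReal (by linarith)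

end Proc


open MeasureTheory Filter Metric
open scoped Topology ENNReal NNReal

/-- the trajectory data at a sample point -/
noncomputable def Dat.at {Ω : Type*} {d : ℕ} (S : Dat d) (X : ℕ → Ω → EE d)
    (g q : ℕ → Ω → EE d → ℝ) (ω : Ω) : Dat d :=
  { S with X := fun n => X n ω, g := fun n => g n ω, q := fun n => q n ω }

theorem phiT_meas2 {Ω : Type*} [MeasurableSpace Ω] {d : ℕ} {eta c l : ℝ} {f : EE d → ℝ}
    {q : Ω → EE d → ℝ} (hf : Measurable f) (hq : Measurable (fun p : Ω × EE d => q p.1 p.2)) :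
    Measurable (fun p : Ω × EE d => phiT eta c l f (q p.1) p.2) := by
  unfold phiT
  have hf2 : Measurable (fun p : Ω × EE d => f p.2) := hf.comp measurable_snd
  refine Measurable.ite ?_ ?_ measurable_const
  · exact measurableSet_le (hf2.const_mul _) (hq.const_mul _)
  · exact (hf2.div hq).pow_const _

theorem psi_meas {Ω : Type*} [MeasurableSpace Ω] {d : ℕ} {eta c l a : ℝ} {f k : EE d → ℝ}
    {q : Ω → EE d → ℝ} (hf : Measurable f) (hk : Measurable k)
    (hq : Measurable (fun p : Ω × EE d => q p.1 p.2)) :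
    Measurable (fun p : Ω × EE d => a * (phiT eta c l f (q p.1) p.2 * k p.2)) :=
  ((phiT_meas2 hf hq).mul (hk.comp measurable_snd)).const_mul a

/-- grid points -/
noncomputable def gpt {d : ℕ} (n : ℕ) (k : Fin d → ℤ) : EE d :=
  WithLp.toLp 2 (fun i => (k i : ℝ) / (n : ℝ) ^ 2)

noncomputable def gset (d n R : ℕ) : Finset (Fin d → ℤ) :=
  Fintype.piFinset (fun _ => Finset.Icc (-((R * n ^ 2 + 1 : ℕ) : ℤ)) ((R * n ^ 2 + 1 : ℕ) : ℤ))

theorem gset_card (d n R : ℕ) : (gset d n R).card = (2 * (R * n ^ 2 + 1) + 1) ^ d := by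
  unfold gset
  rw [Fintype.card_piFinset_const, Int.card_Icc]
  congr 1
  omega

theorem gset_cover {d n R : ℕ} (hd : 1 ≤ d) (hn : 1 ≤ n) {x : EE d} (hx : ‖x‖ ≤ R) :
    ∃ k ∈ gset d n R, ‖x - gpt n k‖ ≤ d / (n : ℝ) ^ 2 := by
  have hn0 : (0 : ℝ) < (n : ℝ) ^ 2 := by positivity
  refine ⟨fun i => ⌊x i * (n : ℝ) ^ 2⌋, ?_, ?_⟩
  · rw [gset, Fintype.mem_piFinset]
    intro i
    have h1 : |x i| ≤ R := by
      have := (PiLp.norm_apply_le x i).trans hx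
      rwa [Real.norm_eq_abs] at this
    have h2 := abs_le.1 h1
    rw [Finset.mem_Icc]
    constructor
    · rw [Int.le_floor]
      push_cast
      nlinarith
    · have : ⌊x i * (n : ℝ) ^ 2⌋ ≤ ((R * n ^ 2 : ℕ) : ℤ) := by
        rw [← Int.floor_natCast (R := ℝ) (R * n ^ 2)]
        refine Int.floor_le_floor ?_
        push_cast
        nlinarith
      refine this.trans ?_
      push_cast
      linarith
  · have h3 : ∀ i, |(x - gpt n (fun i => ⌊x i * (n : ℝ) ^ 2⌋)) i| ≤ 1 / (n : ℝ) ^ 2 := by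
      intro i
      have e : (x - gpt n (fun i => ⌊x i * (n : ℝ) ^ 2⌋)) i
          = (x i * (n : ℝ) ^ 2 - ⌊x i * (n : ℝ) ^ 2⌋) / (n : ℝ) ^ 2 := by
        simp only [gpt, PiLp.sub_apply]
        field_simp
      rw [e, abs_of_nonneg (div_nonneg (by linarith [Int.floor_le (x i * (n : ℝ) ^ 2)]) hn0.le)]
      exact div_le_div_of_nonneg_right (by linarith [Int.lt_floor_add_one (x i * (n : ℝ) ^ 2)]) hn0.le
    have h4 : ‖x - gpt n (fun i => ⌊x i * (n : ℝ) ^ 2⌋)‖ ^ 2 ≤ (d / (n : ℝ) ^ 2) ^ 2 := by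
      rw [EuclideanSpace.norm_sq_eq]
      calc _ ≤ ∑ _i : Fin d, (1 / (n : ℝ) ^ 2) ^ 2 := by
            refine Finset.sum_le_sum fun i _ => ?_
            exact pow_le_pow_left₀ (norm_nonneg _) (h3 i) 2
        _ = d * (1 / (n : ℝ) ^ 2) ^ 2 := by simp
        _ ≤ _ := by
            rw [div_pow, div_pow, one_pow, mul_one_div]
            refine div_le_div_of_nonneg_right ?_ (by positivity)
            have : (1 : ℝ) ≤ d := by exact_mod_cast hd
            nlinarith
    exact (abs_le_of_sq_le_sq h4 (by positivity)).trans' (le_abs_self _)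

section noise
variable {Ω : Type*} {m0 : MeasurableSpace Ω} {μ : Measure Ω} [IsProbabilityMeasure μ] {d : ℕ}
    {F : ℕ → MeasurableSpace Ω} {X : ℕ → Ω → EE d} {g q : ℕ → Ω → EE d → ℝ} {S : Dat d}

noncomputable def phiB (S : Dat d) (n : ℕ) : ℝ := (2 / (S.c * S.lam n)) ^ S.eta

theorem phiB_pos (hS : Stat S) (n : ℕ) : 0 < phiB S n := by
  have := hS.c0
  have := hS.lpos n
  unfold phiB
  positivity

theorem phiB_mono (hS : Stat S) {k n : ℕ} (h : k ≤ n) : phiB S k ≤ phiB S n := by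
  have h1 := hS.c0
  have h2 := hS.lpos n
  have h3 := hS.lpos k
  unfold phiB
  refine Real.rpow_le_rpow (by positivity) ?_ hS.eta0.le
  exact div_le_div_of_nonneg_left (by norm_num) (by positivity)
    (mul_le_mul_of_nonneg_left (hS.lanti h) h1.le)

noncomputable def mB (S : Dat d) (n : ℕ) : ℝ :=
  S.γ n * (phiB S n * (max S.CK 1 * (S.b n ^ d)⁻¹))

theorem mB_pos (hS : Stat S) (n : ℕ) : 0 < mB S n := by
  have := hS.wt.pos n
  have := phiB_pos hS n
  have := hS.bpos n
  have : 0 < max S.CK 1 := lt_max_of_lt_right one_pos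
  unfold mB
  positivity

/-- common exponential estimate -/
theorem tail_gen (hS : Stat S) (hP : Proc μ F X q) (kk : ℕ → EE d → ℝ) (hkm : ∀ k, Measurable (kk k))
    (hk0 : ∀ k y, 0 ≤ kk k y) (hk1 : ∀ k y, kk k y ≤ max S.CK 1 * (S.b (k + 1) ^ d)⁻¹)
    {ε s : ℝ} (hε : 0 < ε) (hε1 : ε ≤ 1) (n : ℕ) :
    μ {ω | ¬ ((1 - ε) * avg S.γ (fun k => ∫ y, (S.at X g q ω).Phi k y * q k ω y * kk k y) n
        - s * mB S n / ε
        ≤ avg S.γ (fun k => (S.at X g q ω).Phi k (X (k + 1) ω) * kk k (X (k + 1) ω)) n ∧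
      avg S.γ (fun k => (S.at X g q ω).Phi k (X (k + 1) ω) * kk k (X (k + 1) ω)) n ≤
        (1 + ε) * avg S.γ (fun k => ∫ y, (S.at X g q ω).Phi k y * q k ω y * kk k y) n
        + s * mB S n / ε)} ≤ ENNReal.ofReal (2 * Real.exp (-s)) := by
  have hPP := hS.wt.PP_pos n
  set Ψ : ℕ → Ω → EE d → ℝ := fun k ω y =>
    S.γ (k + 1) / PP S.γ (k + 1) * (phiT S.eta S.c (S.lam k) S.f (q k ω) y * kk k y) with hΨ
  have hm := mB_pos hS n
  have hM : 0 < mB S n / PP S.γ n := by positivity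
  have ht := hP.tail (Ψ := Ψ)
    (fun k => @psi_meas Ω (F k) d _ _ _ _ _ _ _ hS.fcont.measurable (hkm k) (hP.qm k))
    (M := mB S n / PP S.γ n) (s := s) hM hε hε1 n (by
      filter_upwards [hP.qnn] with ω hω k hk y
      have h1 := phiT_nonneg (eta := S.eta) (c := S.c) (l := S.lam k) hS.f0 (hω k) y
      have h2 := phiT_le hS.eta0 hS.f0 (hω k) hS.c0 (hS.lpos k) y
      have h3 := hk0 k y
      have h4 := hS.wt.pos (k + 1)
      have h5 := hS.wt.PP_pos (k + 1)
      refine ⟨by simp only [hΨ]; positivity, ?_⟩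
      have h6 : S.γ (k + 1) / PP S.γ (k + 1) ≤ S.γ n / PP S.γ n := by
        rw [div_le_div_iff₀ h5 hPP]
        exact hS.wt.ratio_le hk
      have h7 : (S.b (k + 1) ^ d)⁻¹ ≤ (S.b n ^ d)⁻¹ := by
        have := hS.bpos n
        have := hS.banti (show k + 1 ≤ n from hk)
        gcongr
      have h8 : kk k y ≤ max S.CK 1 * (S.b n ^ d)⁻¹ :=
        (hk1 k y).trans (mul_le_mul_of_nonneg_left h7 (le_max_of_le_right zero_le_one))
      have h9 := h2.trans (phiB_mono hS hk.le)
      have h10 : mB S n / PP S.γ n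
          = S.γ n / PP S.γ n * (phiB S n * (max S.CK 1 * (S.b n ^ d)⁻¹)) := by
        unfold mB; ring
      rw [h10]
      simp only [hΨ]
      have := phiB_pos hS n
      have := hS.wt.pos n
      gcongr)
  refine (measure_mono fun ω hω => ?_).trans ht
  refine fun hcon => hω ?_
  have e1 : ∀ k, ∫ y, Ψ k ω y * q k ω y = S.γ (k + 1) / PP S.γ (k + 1) *
      ∫ y, (S.at X g q ω).Phi k y * q k ω y * kk k y := by
    intro k
    rw [← integral_const_mul]
    refine integral_congr_ae (Eventually.of_forall fun y => ?_)
    simp only [hΨ, Dat.Phi, Dat.at]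
    ring
  have e2 : ∀ k, Ψ k ω (X (k + 1) ω) = S.γ (k + 1) / PP S.γ (k + 1) *
      ((S.at X g q ω).Phi k (X (k + 1) ω) * kk k (X (k + 1) ω)) := fun k => rfl
  simp_rw [e1, e2] at hcon
  rw [hS.wt.avg_eq_sum, hS.wt.avg_eq_sum]
  have e3 : s * (mB S n / PP S.γ n) / ε * PP S.γ n = s * mB S n / ε := by field_simp
  obtain ⟨h1, h2⟩ := hcon
  have h1' := mul_le_mul_of_nonneg_left h1 hPP.le
  have h2' := mul_le_mul_of_nonneg_left h2 hPP.le
  constructor <;> linarith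

/-- Lipschitz constant -/
noncomputable def lB (S : Dat d) (n : ℕ) : ℝ := phiB S n * (S.L * (S.b n ^ (d + 1))⁻¹)

theorem lB_nonneg (hS : Stat S) (n : ℕ) : 0 ≤ lB S n := by
  have := phiB_pos hS n
  have := hS.bpos n
  unfold lB
  positivity

theorem kb_lip' (hS : Stat S) {k n : ℕ} (hk : k < n) (x x' y : EE d) :
    |kb S.K (S.b (k + 1)) (x - y) - kb S.K (S.b (k + 1)) (x' - y)|
      ≤ S.L * (S.b n ^ (d + 1))⁻¹ * ‖x - x'‖ := by
  have h := hS.ker.kb_lip (hS.bpos (k + 1)) (x - y) (x' - y)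
  rw [sub_sub_sub_cancel_right] at h
  refine h.trans ?_
  have h1 := hS.bpos n
  have h2 := hS.banti (show k + 1 ≤ n from hk)
  gcongr

theorem Gh_lip (hS : Stat S) {ω : Ω} (hq : ∀ n x, 0 ≤ q n ω x) (n : ℕ) (x x' : EE d) :
    |(S.at X g q ω).Gh n x - (S.at X g q ω).Gh n x'| ≤ lB S n * ‖x - x'‖ := by
  refine hS.wt.avg_sub_le n (mul_nonneg (lB_nonneg hS n) (norm_nonneg _)) fun k hk => ?_
  rw [← mul_sub, abs_mul]
  have h1 : 0 ≤ (S.at X g q ω).Phi k ((S.at X g q ω).X (k + 1)) := phiT_nonneg hS.f0 (hq k) _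
  have h2 : (S.at X g q ω).Phi k ((S.at X g q ω).X (k + 1)) ≤ phiB S n :=
    (phiT_le hS.eta0 hS.f0 (hq k) hS.c0 (hS.lpos k) _).trans (phiB_mono hS hk.le)
  have h3 := kb_lip' hS hk x x' (X (k + 1) ω)
  rw [abs_of_nonneg h1, lB, mul_assoc]
  exact mul_le_mul h2 h3 (abs_nonneg _) (phiB_pos hS n).le

theorem h_lip (hS : Stat S) {ω : Ω} (hq : ∀ n x, 0 ≤ q n ω x) (hq1 : ∀ n, ∫ x, q n ω x = 1)
    (hqm : ∀ n, Measurable (q n ω)) {k n : ℕ} (hk : k < n) (x x' : EE d) :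
    |(S.at X g q ω).h k x - (S.at X g q ω).h k x'| ≤ lB S n * ‖x - x'‖ := by
  have hqi : Integrable (q k ω) := by
    by_contra h
    have := hq1 k
    rw [integral_undef h] at this
    exact zero_ne_one this
  have hPi : Integrable (fun y => (S.at X g q ω).Phi k y * q k ω y) :=
    phiT_q_integrable hS.eta0 hS.eta1 hS.f0 (hq k) hS.fcont.measurable (hqm k) hS.fint hqi
  have hi : ∀ x, Integrable (fun y => (S.at X g q ω).Phi k y * q k ω y
      * kb S.K (S.b (k + 1)) (x - y)) := by
    intro x
    refine hPi.mul_bdd (c := S.CK * (S.b (k + 1) ^ d)⁻¹) ?_ ?_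
    · exact ((hS.ker.kb_cont _).comp (continuous_const.sub continuous_id)).aestronglyMeasurable
    · refine Eventually.of_forall fun y => ?_
      rw [Real.norm_of_nonneg (hS.ker.kb_nonneg (hS.bpos _) _)]
      exact hS.ker.kb_le (hS.bpos _) _
  have e : (S.at X g q ω).h k x - (S.at X g q ω).h k x' =
      ∫ y, ((S.at X g q ω).Phi k y * q k ω y * kb S.K (S.b (k + 1)) (x - y)
        - (S.at X g q ω).Phi k y * q k ω y * kb S.K (S.b (k + 1)) (x' - y)) :=
    (integral_sub (hi x) (hi x')).symm
  rw [e]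
  refine abs_integral_le_integral_abs.trans ?_
  calc _ ≤ ∫ y, q k ω y * (lB S n * ‖x - x'‖) := by
        refine integral_mono ((hi x).sub (hi x')).abs (hqi.mul_const _) fun y => ?_
        simp only
        have h1 : 0 ≤ (S.at X g q ω).Phi k y := phiT_nonneg hS.f0 (hq k) _
        have h2 : (S.at X g q ω).Phi k y ≤ phiB S n :=
          (phiT_le hS.eta0 hS.f0 (hq k) hS.c0 (hS.lpos k) _).trans (phiB_mono hS hk.le)
        have h3 := kb_lip' hS hk x x' y
        rw [← mul_sub, abs_mul, abs_mul, abs_of_nonneg h1, abs_of_nonneg (hq k y), lB, mul_assoc,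
          mul_left_comm, mul_assoc (phiB S n)]
        refine mul_le_mul_of_nonneg_left ?_ (hq k y)
        exact mul_le_mul h2 h3 (abs_nonneg _) (phiB_pos hS n).le
    _ = lB S n * ‖x - x'‖ := by rw [integral_mul_const, hq1, one_mul]

theorem Hh_lip (hS : Stat S) {ω : Ω} (hq : ∀ n x, 0 ≤ q n ω x) (hq1 : ∀ n, ∫ x, q n ω x = 1)
    (hqm : ∀ n, Measurable (q n ω)) (n : ℕ) (x x' : EE d) :
    |(S.at X g q ω).Hh n x - (S.at X g q ω).Hh n x'| ≤ lB S n * ‖x - x'‖ :=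
  hS.wt.avg_sub_le n (mul_nonneg (lB_nonneg hS n) (norm_nonneg _)) fun _ hk =>
    h_lip hS hq hq1 hqm hk x x'

noncomputable def eB (S : Dat d) (ε : ℝ) (n : ℕ) : ℝ :=
  ((2 * d + 2 : ℕ) * Real.log n) * mB S n / ε + 3 * (lB S n * (d / (n : ℝ) ^ 2))

theorem phiB_div (hS : Stat S) (n : ℕ) :
    phiB S n / S.lam n ^ (1 - S.eta) = (2 / S.c) ^ S.eta / S.lam n := by
  have h1 := hS.c0
  have h2 := hS.lpos n
  have h3 : S.lam n ^ S.eta * S.lam n ^ (1 - S.eta) = S.lam n := by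
    rw [← Real.rpow_add h2]; simp
  unfold phiB
  rw [← div_div, Real.div_rpow (by positivity) h2.le, div_div, h3]

theorem eB_lim (hd : 1 ≤ d) (hS : Stat S)
    (r1 : Tendsto (fun n : ℕ => S.γ n * Real.log n / (S.lam n * S.b n ^ d)) atTop (𝓝 0))
    (r2 : Tendsto (fun n : ℕ => (n : ℝ)⁻¹ / (S.lam n * S.b n ^ d)) atTop (𝓝 0)) (ε : ℝ) :
    Tendsto (fun n => eB S ε n / S.lam n ^ (1 - S.eta)) atTop (𝓝 0) := by
  have e : ∀ n, eB S ε n / S.lam n ^ (1 - S.eta) =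
      ((2 * d + 2 : ℕ) * (2 / S.c) ^ S.eta * max S.CK 1 / ε) *
        (S.γ n * Real.log n / (S.lam n * S.b n ^ d)) +
      (3 * (2 / S.c) ^ S.eta * S.L * d) * (((n : ℝ) ^ 2)⁻¹ / (S.lam n * S.b n ^ (d + 1))) := by
    intro n
    have h2 := (hS.lpos n).ne'
    have h3 : S.b n ^ d ≠ 0 := pow_ne_zero _ (hS.bpos n).ne'
    have h4 : S.b n ^ (d + 1) ≠ 0 := pow_ne_zero _ (hS.bpos n).ne'
    have h1 : eB S ε n / S.lam n ^ (1 - S.eta) = (phiB S n / S.lam n ^ (1 - S.eta)) *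
      (((2 * d + 2 : ℕ) * Real.log n) * (S.γ n * (max S.CK 1 * (S.b n ^ d)⁻¹)) / ε +
        3 * (S.L * (S.b n ^ (d + 1))⁻¹ * (d / (n : ℝ) ^ 2))) := by
      unfold eB mB lB; ring
    rw [h1, phiB_div hS, div_eq_mul_inv (S.γ n * Real.log n), mul_inv, div_eq_mul_inv _ (S.lam n * _),
      mul_inv]
    ring
  simp_rw [e]
  have r3 : Tendsto (fun n : ℕ => ((n : ℝ) ^ 2)⁻¹ / (S.lam n * S.b n ^ (d + 1))) atTop (𝓝 0) := by
    have r4 := r2.pow 2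
    rw [zero_pow two_ne_zero] at r4
    refine squeeze_zero (fun n => ?_) (fun n => ?_) r4
    · have := hS.lpos n
      have := hS.bpos n
      positivity
    · have h1 := hS.lpos n
      have h2 := hS.bpos n
      have h3 : S.lam n ≤ 1 := (hS.l1 n).trans (by norm_num)
      have h4 := hS.b1 n
      rw [div_pow, inv_pow]
      refine div_le_div_of_nonneg_left (by positivity) (by positivity) ?_
      rw [mul_pow, ← pow_mul]
      refine mul_le_mul (by nlinarith) ?_ (by positivity) h1.le
      exact pow_le_pow_of_le_one h2.le h4 (by omega)
  simpa using (r1.const_mul _).add (r3.const_mul (3 * (2 / S.c) ^ S.eta * S.L * d))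

theorem noise_fixed (hd : 1 ≤ d) (hS : Stat S) (hP : Proc μ F X q) {ε : ℝ} (hε : 0 < ε)
    (hε1 : ε ≤ 1) (R : ℕ) : ∀ᵐ ω ∂μ, ∀ᶠ n in atTop,
    (∀ x, ‖x‖ ≤ R → (1 - ε) * (S.at X g q ω).Hh n x - eB S ε n ≤ (S.at X g q ω).Gh n x ∧
      (S.at X g q ω).Gh n x ≤ (1 + ε) * (S.at X g q ω).Hh n x + eB S ε n) ∧
    (S.at X g q ω).Zh n ≤ 1 + ε + eB S ε n := by
  set s : ℕ → ℝ := fun n => (2 * d + 2 : ℕ) * Real.log n with hs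
  set E : ℕ → EE d → Set Ω := fun n x =>
    {ω | ¬ ((1 - ε) * (S.at X g q ω).Hh n x - s n * mB S n / ε ≤ (S.at X g q ω).Gh n x ∧
      (S.at X g q ω).Gh n x ≤ (1 + ε) * (S.at X g q ω).Hh n x + s n * mB S n / ε)} with hE
  have hEm : ∀ n x, μ (E n x) ≤ ENNReal.ofReal (2 * Real.exp (-s n)) := fun n x =>
    tail_gen hS hP (fun k y => kb S.K (S.b (k + 1)) (x - y))
      (fun k => ((hS.ker.kb_cont _).comp (continuous_const.sub continuous_id)).measurable)
      (fun k y => hS.ker.kb_nonneg (hS.bpos _) _)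
      (fun k y => (hS.ker.kb_le (hS.bpos _) _).trans (mul_le_mul_of_nonneg_right (le_max_left _ _)
        (inv_nonneg.2 (pow_nonneg (hS.bpos _).le _)))) hε hε1 n
  set Z : ℕ → Set Ω := fun n =>
    {ω | ¬ ((1 - ε) * avg S.γ (fun k => ∫ y, (S.at X g q ω).Phi k y * q k ω y * 1) n
        - s n * mB S n / ε
        ≤ avg S.γ (fun k => (S.at X g q ω).Phi k (X (k + 1) ω) * 1) n ∧
      avg S.γ (fun k => (S.at X g q ω).Phi k (X (k + 1) ω) * 1) n ≤
        (1 + ε) * avg S.γ (fun k => ∫ y, (S.at X g q ω).Phi k y * q k ω y * 1) n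
        + s n * mB S n / ε)} with hZ
  have hZm : ∀ n, μ (Z n) ≤ ENNReal.ofReal (2 * Real.exp (-s n)) := fun n =>
    tail_gen hS hP (fun k y => 1) (fun k => measurable_const) (fun k y => zero_le_one)
      (fun k y => by
        have h1 : 1 ≤ (S.b (k + 1) ^ d)⁻¹ := by
          have := hS.bpos (k + 1)
          exact (one_le_inv₀ (by positivity)).2 (pow_le_one₀ this.le (hS.b1 _))
        have h2 : 1 ≤ max S.CK 1 := le_max_right _ _
        nlinarith) hε hε1 n
  set B : ℕ → Set Ω := fun n => (⋃ k ∈ gset d n R, E n (gpt n k)) ∪ Z n with hB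
  have hBm : ∀ n : ℕ, 1 ≤ n → μ (B n) ≤ ENNReal.ofReal (4 * (2 * R + 3) ^ d * ((n : ℝ) ^ 2)⁻¹) := by
    intro n hn
    have hn0 : (0 : ℝ) < n := by exact_mod_cast hn
    have hn1 : (1 : ℝ) ≤ n := by exact_mod_cast hn
    have hexp : Real.exp (-s n) = ((n : ℝ) ^ (2 * d + 2))⁻¹ := by
      rw [Real.exp_neg, hs]
      simp only
      rw [mul_comm, Real.exp_mul, Real.exp_log hn0, Real.rpow_natCast]
    have h1 : μ (B n) ≤ (((gset d n R).card + 1 : ℕ) : ℝ≥0∞) * ENNReal.ofReal (2 * Real.exp (-s n)) := by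
      refine (measure_union_le _ _).trans ?_
      rw [Nat.cast_add, Nat.cast_one, add_mul, one_mul]
      refine add_le_add ?_ (hZm n)
      refine (measure_biUnion_finset_le _ _).trans ((Finset.sum_le_sum fun k _ => hEm n _).trans ?_)
      rw [Finset.sum_const, nsmul_eq_mul]
    refine h1.trans ?_
    rw [← ENNReal.ofReal_natCast, ← ENNReal.ofReal_mul (Nat.cast_nonneg _), hexp]
    refine ENNReal.ofReal_le_ofReal ?_
    rw [gset_card]
    push_cast
    have h2 : (2 * ((R : ℝ) * n ^ 2 + 1) + 1) ^ d ≤ (2 * R + 3) ^ d * (n : ℝ) ^ (2 * d) := by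
      rw [pow_mul, ← mul_pow]
      refine pow_le_pow_left₀ (by positivity) ?_ d
      nlinarith [one_le_pow₀ (n := 2) hn1]
    have h3 : (1 : ℝ) ≤ (2 * R + 3) ^ d * (n : ℝ) ^ (2 * d) := by
      have h4 : (1 : ℝ) ≤ (2 * R + 3) ^ d :=
        one_le_pow₀ (by linarith [Nat.cast_nonneg (α := ℝ) R])
      have h5 : (1 : ℝ) ≤ (n : ℝ) ^ (2 * d) := one_le_pow₀ hn1
      nlinarith
    calc _ ≤ (2 * ((2 * R + 3) ^ d * (n : ℝ) ^ (2 * d))) * (2 * ((n : ℝ) ^ (2 * d + 2))⁻¹) := by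
          refine mul_le_mul_of_nonneg_right (by linarith) (by positivity)
      _ = _ := by
          rw [pow_add]
          field_simp
          norm_num
  have hsum : ∑' n, μ (B (n + 1)) ≠ ⊤ := by
    have h1 : Summable (fun n : ℕ => 4 * (2 * (R : ℝ) + 3) ^ d * (((n + 1 : ℕ) : ℝ) ^ 2)⁻¹) :=
      Summable.mul_left _ ((summable_nat_add_iff (f := fun n : ℕ => ((n : ℝ) ^ 2)⁻¹) 1).2
        (Real.summable_nat_pow_inv.2 (by norm_num)))
    exact ne_top_of_le_ne_top h1.tsum_ofReal_ne_top
      (ENNReal.tsum_le_tsum fun n => hBm (n + 1) (by omega))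
  filter_upwards [ae_eventually_notMem hsum, hP.qnn, hP.qint] with ω h1 hq hq1
  have h2 : ∀ᶠ n in atTop, ω ∉ B n := by
    rw [← eventually_map (m := fun n => n + 1) (P := fun n => ω ∉ B n), map_add_atTop_eq_nat] at h1
    exact h1
  have hqm : ∀ n, Measurable (q n ω) := fun n =>
    @sec_meas Ω (F n) d (fun p => q n p.1 p.2) (hP.qm n) ω
  filter_upwards [h2, eventually_ge_atTop 1] with n hn hn1
  have hnR : (1 : ℝ) ≤ n := by exact_mod_cast hn1
  have hl0 : 0 ≤ lB S n * (d / (n : ℝ) ^ 2) := mul_nonneg (lB_nonneg hS n) (by positivity)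
  simp only [hB, Set.mem_union, Set.mem_iUnion, not_or, not_exists] at hn
  have he : eB S ε n = s n * mB S n / ε + 3 * (lB S n * (d / (n : ℝ) ^ 2)) := rfl
  constructor
  · intro x hx
    obtain ⟨k, hk, hkx⟩ := gset_cover hd hn1 hx
    have h3 := hn.1 k hk
    simp only [hE, Set.mem_ofPred_eq, not_not] at h3
    have h4 := (Gh_lip (X := X) (g := g) hS hq n x (gpt n k)).trans
      (mul_le_mul_of_nonneg_left hkx (lB_nonneg hS n))
    have h5 := (Hh_lip (X := X) (g := g) hS hq hq1 hqm n x (gpt n k)).trans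
      (mul_le_mul_of_nonneg_left hkx (lB_nonneg hS n))
    have h6 := abs_le.1 h4
    have h7 := abs_le.1 h5
    rw [he]
    generalize (S.at X g q ω).Gh n x = G at *
    generalize (S.at X g q ω).Gh n (gpt n k) = G' at *
    generalize (S.at X g q ω).Hh n x = H at *
    generalize (S.at X g q ω).Hh n (gpt n k) = H' at *
    constructor <;> nlinarith
  · have h3 := hn.2
    simp only [hZ, Set.mem_ofPred_eq, not_not] at h3
    have h4 := h3.2
    simp only [mul_one] at h4
    have h5 : avg S.γ (fun k => ∫ y, (S.at X g q ω).Phi k y * q k ω y) n ≤ 1 := by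
      refine hS.wt.avg_le_bound n zero_le_one fun k _ => ?_
      have hqi : Integrable (q k ω) := by
        by_contra h
        have := hq1 k
        rw [integral_undef h] at this
        exact zero_ne_one this
      exact phiT_q_int_le hS.eta0 hS.eta1 hS.f0 (hq k) hS.fcont.measurable (hqm k) hS.fint hqi
        hS.fint1 (hq1 k)
    have h6 : (S.at X g q ω).Zh n = avg S.γ (fun k => (S.at X g q ω).Phi k (X (k + 1) ω)) n := rfl
    rw [h6, he]
    nlinarith

theorem noise_all (hd : 1 ≤ d) (hS : Stat S) (hP : Proc μ F X q)
    (r1 : Tendsto (fun n : ℕ => S.γ n * Real.log n / (S.lam n * S.b n ^ d)) atTop (𝓝 0))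
    (r2 : Tendsto (fun n : ℕ => (n : ℝ)⁻¹ / (S.lam n * S.b n ^ d)) atTop (𝓝 0)) :
    ∀ᵐ ω ∂μ, ∀ ε : ℝ, 0 < ε → ε ≤ 1 → ∀ R : ℝ, ∃ e : ℕ → ℝ,
    Tendsto (fun n => e n / S.lam n ^ (1 - S.eta)) atTop (𝓝 0) ∧
    ∀ᶠ n in atTop, (∀ x, ‖x‖ ≤ R →
      (1 - ε) * (S.at X g q ω).Hh n x - e n ≤ (S.at X g q ω).Gh n x ∧
      (S.at X g q ω).Gh n x ≤ (1 + ε) * (S.at X g q ω).Hh n x + e n) ∧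
      (S.at X g q ω).Zh n ≤ 1 + ε + e n := by
  have h : ∀ᵐ ω ∂μ, ∀ m R : ℕ, ∀ᶠ n in atTop,
    (∀ x, ‖x‖ ≤ R → (1 - 1 / ((m : ℝ) + 1)) * (S.at X g q ω).Hh n x - eB S (1 / ((m : ℝ) + 1)) n
        ≤ (S.at X g q ω).Gh n x ∧
      (S.at X g q ω).Gh n x ≤ (1 + 1 / ((m : ℝ) + 1)) * (S.at X g q ω).Hh n x
        + eB S (1 / ((m : ℝ) + 1)) n) ∧
    (S.at X g q ω).Zh n ≤ 1 + 1 / ((m : ℝ) + 1) + eB S (1 / ((m : ℝ) + 1)) n := by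
    rw [ae_all_iff]
    intro m
    rw [ae_all_iff]
    intro R
    refine noise_fixed hd hS hP (by positivity) ?_ R
    rw [div_le_one (by positivity)]
    linarith [Nat.cast_nonneg (α := ℝ) m]
  filter_upwards [h, hP.qnn] with ω hω hq ε hε hε1 R
  obtain ⟨m, hm⟩ := exists_nat_one_div_lt hε
  obtain ⟨R', hR'⟩ := exists_nat_ge R
  refine ⟨eB S (1 / ((m : ℝ) + 1)), eB_lim hd hS r1 r2 _, ?_⟩
  filter_upwards [hω m R'] with n hn
  refine ⟨fun x hx => ?_, by linarith [hn.2]⟩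
  have h1 := hn.1 x (hx.trans hR')
  have h2 : 0 ≤ (S.at X g q ω).Hh n x :=
    hS.wt.avg_nonneg n fun k _ => integral_nonneg fun y =>
      mul_nonneg (mul_nonneg (phiT_nonneg hS.f0 (hq k) y) (hq k y))
        (hS.ker.kb_nonneg (hS.bpos _) _)
  generalize 1 / ((m : ℝ) + 1) = ε' at *
  constructor <;> nlinarith

end noise


open MeasureTheory Filter Metric
open scoped Topology ENNReal NNReal

section step
variable {Ω : Type*} {m m0 : MeasurableSpace Ω} {μ : Measure Ω}
  [IsProbabilityMeasure μ] {d : ℕ} {Y : Ω → EE d} {q : Ω → EE d → ℝ}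

theorem step_nonneg
    (hqc : ∀ ω, Continuous (q ω)) (hqi : ∀ ω, Integrable (q ω))
    (hpol : ∀ φ : EE d → ℝ, Continuous φ → (∃ C, ∀ x, |φ x| ≤ C) →
      (μ[fun ω => φ (Y ω) | m]) =ᵐ[μ] (fun ω => ∫ y, φ y * q ω y)) :
    ∀ᵐ ω ∂μ, ∀ x, 0 ≤ q ω x := by
  let φ : ℕ → ℕ → EE d → ℝ := fun i j y =>
    max 0 (1 - (j : ℝ) * dist y (TopologicalSpace.denseSeq (EE d) i))
  have hφ0 : ∀ i j y, 0 ≤ φ i j y := fun i j y => le_max_left _ _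
  have hφ1 : ∀ i j y, φ i j y ≤ 1 := fun i j y => by
    refine max_le zero_le_one ?_
    have : 0 ≤ (j : ℝ) * dist y (TopologicalSpace.denseSeq (EE d) i) := by positivity
    linarith
  have hφc : ∀ i j, Continuous (φ i j) := fun i j => by
    show Continuous (fun y => max 0 (1 - (j : ℝ) * dist y (TopologicalSpace.denseSeq (EE d) i)))
    fun_prop
  have hφb : ∀ i j, ∀ y, |φ i j y| ≤ 1 := fun i j y => by
    rw [abs_of_nonneg (hφ0 i j y)]; exact hφ1 i j y
  have hall : ∀ᵐ ω ∂μ, ∀ i j, 0 ≤ ∫ y, φ i j y * q ω y := by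
    rw [ae_all_iff]; intro i
    rw [ae_all_iff]; intro j
    have h1 := hpol (φ i j) (hφc i j) ⟨1, hφb i j⟩
    have h2 : 0 ≤ᵐ[μ] μ[fun ω => φ i j (Y ω) | m] :=
      condExp_nonneg (Eventually.of_forall fun ω => hφ0 i j (Y ω))
    filter_upwards [h1, h2] with ω h1 h2
    rw [← h1]; exact h2
  filter_upwards [hall] with ω hω x
  by_contra! hneg
  obtain ⟨δ, hδ, hball⟩ := Metric.mem_nhds_iff.1 ((hqc ω).continuousAt.eventually_lt_const hneg)
  obtain ⟨j, hj⟩ := exists_nat_gt (2 / δ)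
  have hj0 : (0 : ℝ) < j := lt_trans (by positivity) hj
  have hj1 : 2 / (j : ℝ) < δ := by
    rw [div_lt_iff₀ hj0]; rw [div_lt_iff₀ hδ] at hj; linarith
  obtain ⟨i, hi⟩ := (TopologicalSpace.denseRange_denseSeq (EE d)).exists_dist_lt x
    (show (0 : ℝ) < 1 / j by positivity)
  set z := TopologicalSpace.denseSeq (EE d) i with hz
  have hzneg : q ω z < 0 := by
    apply hball
    rw [mem_ball, dist_comm]
    refine hi.trans (lt_trans ?_ hj1)
    gcongr; norm_num
  have hle : ∀ y, φ i j y * q ω y ≤ 0 := by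
    intro y
    by_cases hy : dist y z < 1 / j
    · have : q ω y < 0 := by
        apply hball
        rw [mem_ball]
        calc dist y x ≤ dist y z + dist z x := dist_triangle _ _ _
          _ < 1 / j + 1 / j := by rw [dist_comm z x]; linarith
          _ = 2 / j := by ring
          _ < δ := hj1
      exact mul_nonpos_of_nonneg_of_nonpos (hφ0 i j y) this.le
    · have : φ i j y = 0 := by
        apply max_eq_left
        push Not at hy
        rw [div_le_iff₀ hj0] at hy
        linarith
      rw [this, zero_mul]
  have hz1 : φ i j z = 1 := by
    show max 0 (1 - (j : ℝ) * dist z z) = 1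
    simp
  have hpos := integral_pos_of_integrable_nonneg_nonzero (μ := (volume : Measure (EE d)))
    (f := fun y => -(φ i j y * q ω y)) (x := z)
    ((hφc i j).mul (hqc ω)).neg
    ((hqi ω).bdd_mul (hφc i j).aestronglyMeasurable
      (Eventually.of_forall fun y => by rw [Real.norm_eq_abs]; exact hφb i j y)).neg
    (fun y => by simpa using hle y) (by simp only [hz1]; simpa using hzneg.ne)
  rw [integral_neg] at hpos
  have := hω i j
  linarith

theorem step_int1 (hm : m ≤ m0)
    (hpol : ∀ φ : EE d → ℝ, Continuous φ → (∃ C, ∀ x, |φ x| ≤ C) →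
      (μ[fun ω => φ (Y ω) | m]) =ᵐ[μ] (fun ω => ∫ y, φ y * q ω y)) :
    ∀ᵐ ω ∂μ, ∫ y, q ω y = 1 := by
  have h := hpol (fun _ => 1) continuous_const ⟨1, by simp⟩
  rw [condExp_const hm] at h
  filter_upwards [h] with ω h
  simpa using h.symm

theorem step_meas (hqc : ∀ ω, Continuous (q ω)) (had : ∀ x, Measurable[m] fun ω => q ω x) :
    @Measurable (Ω × EE d) ℝ (m.prod inferInstance) _ (fun p => q p.1 p.2) := by
  have h := @measurable_uncurry_of_continuous_of_measurable Ω ℝ (EE d) _ _ _ _ _ _ _ _ _ m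
    (fun x ω => q ω x) hqc had
  exact h.comp (@measurable_swap Ω (EE d) m _)

theorem step_dis (hm : m ≤ m0) (hY : Measurable Y)
    (hqc : ∀ ω, Continuous (q ω)) (hqi : ∀ ω, Integrable (q ω))
    (had : ∀ x, Measurable[m] fun ω => q ω x)
    (hpol : ∀ φ : EE d → ℝ, Continuous φ → (∃ C, ∀ x, |φ x| ≤ C) →
      (μ[fun ω => φ (Y ω) | m]) =ᵐ[μ] (fun ω => ∫ y, φ y * q ω y))
    (G : Ω × EE d → ℝ≥0∞) (hG : @Measurable (Ω × EE d) ℝ≥0∞ (m.prod inferInstance) _ G) :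
    ∫⁻ ω, G (ω, Y ω) ∂μ = ∫⁻ ω, (∫⁻ y, ENNReal.ofReal (q ω y) * G (ω, y)) ∂μ := by
  have hqm := step_meas hqc had
  refine @disint Ω Ω m0 m d μ _ id (fun s hs => hm s hs) Y hY
    (fun p => ENNReal.ofReal (q p.1 p.2)) (ENNReal.measurable_ofReal.comp hqm) ?_ G hG
  intro A hA φ
  rw [Set.preimage_id]
  have hnn := step_nonneg hqc hqi hpol
  have hφc : Continuous (fun y => (φ y : ℝ)) := NNReal.continuous_coe.comp φ.continuous
  obtain ⟨C, hC⟩ : ∃ C, ∀ x, |(φ x : ℝ)| ≤ C := by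
    obtain ⟨C, hC⟩ := φ.bounded
    refine ⟨C + φ 0, fun x => ?_⟩
    have := hC x 0
    rw [NNReal.dist_eq] at this
    rw [abs_of_nonneg (NNReal.coe_nonneg (φ x))]
    linarith [le_abs_self ((φ x : ℝ) - φ 0)]
  have h1 := hpol _ hφc ⟨C, hC⟩
  have hint : Integrable (fun ω => (φ (Y ω) : ℝ)) μ :=
    Integrable.of_bound (hφc.measurable.comp hY).aestronglyMeasurable C
      (Eventually.of_forall fun ω => by rw [Real.norm_eq_abs]; exact hC _)
  have h2 := setIntegral_condExp hm hint hA
  have hA0 := hm A hA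
  have hce : Integrable (fun ω => ∫ y, (φ y : ℝ) * q ω y) μ :=
    (integrable_condExp (m := m) (f := fun ω => (φ (Y ω) : ℝ))).congr h1
  rw [setIntegral_congr_ae hA0 (h1.mono fun ω h _ => h)] at h2
  have e1 := ofReal_integral_eq_lintegral_ofReal (hint.restrict (s := A))
    (Eventually.of_forall fun ω => NNReal.coe_nonneg (φ (Y ω)))
  have e2 := ofReal_integral_eq_lintegral_ofReal (hce.restrict (s := A))
    ((ae_restrict_of_ae hnn).mono fun ω h => integral_nonneg fun y => mul_nonneg (NNReal.coe_nonneg (φ y)) (h y))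
  rw [h2, e1] at e2
  simp only [ENNReal.ofReal_coe_nnreal] at e2
  rw [e2]
  refine lintegral_congr_ae ((ae_restrict_of_ae hnn).mono fun ω h => ?_)
  show ENNReal.ofReal (∫ y, (φ y : ℝ) * q ω y) = ∫⁻ y, ENNReal.ofReal (q ω y) * (φ y : ℝ≥0∞)
  rw [ofReal_integral_eq_lintegral_ofReal
    ((hqi ω).bdd_mul hφc.aestronglyMeasurable
      (Eventually.of_forall fun y => by rw [Real.norm_eq_abs]; exact hC y))
    (Eventually.of_forall fun y => mul_nonneg (NNReal.coe_nonneg (φ y)) (h y))]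
  refine lintegral_congr fun y => ?_
  rw [ENNReal.ofReal_mul (NNReal.coe_nonneg (φ y)), ENNReal.ofReal_coe_nnreal, mul_comm]

end step


open MeasureTheory Filter Metric
open scoped Topology ENNReal NNReal

theorem rate_log {γ b lam : ℕ → ℝ} {d : ℕ} {η Cγ : ℝ} (hη1 : η < 1)
    (hγpos : ∀ n, 0 < γ n) (hbpos : ∀ n, 0 < b n) (hlampos : ∀ n, 0 < lam n)
    (hb0 : Tendsto b atTop (𝓝 0)) (hlam0 : Tendsto lam atTop (𝓝 0))
    (hCγ : 0 < Cγ) (hlow : ∀ n : ℕ, 1 ≤ n → ((n : ℝ))⁻¹ ≤ Cγ * γ n)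
    (hrate1 : 1/2 ≤ η → Tendsto
      (fun n : ℕ => (n : ℝ) * γ n ^ 2 * Real.log n / (lam n * b n ^ d))
      atTop (nhds 0))
    (hrate2 : η < 1/2 → Tendsto
      (fun n : ℕ => (n : ℝ) * γ n ^ 2 * Real.log n
        / (lam n ^ (2 * (1 - η)) * b n ^ (2 * (d : ℝ) * (1 - η))))
      atTop (nhds 0)) :
    Tendsto (fun n : ℕ => γ n * Real.log n / (lam n * b n ^ d)) atTop (𝓝 0) := by
  have hnum : ∀ n : ℕ, 1 ≤ n → γ n * Real.log n ≤ Cγ * ((n : ℝ) * γ n ^ 2 * Real.log n) := by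
    intro n hn
    have hn0 : (0 : ℝ) < n := by exact_mod_cast hn
    have h1 := hlow n hn
    rw [inv_le_iff_one_le_mul₀ hn0] at h1
    have hl : 0 ≤ Real.log n := Real.log_natCast_nonneg n
    have := mul_le_mul_of_nonneg_right h1 (mul_nonneg (hγpos n).le hl)
    nlinarith
  have hnn : ∀ n : ℕ, 0 ≤ γ n * Real.log n := fun n =>
    mul_nonneg (hγpos n).le (Real.log_natCast_nonneg n)
  have hPpos : ∀ n, 0 < lam n * b n ^ d := fun n => mul_pos (hlampos n) (pow_pos (hbpos n) d)
  have h0 : ∀ᶠ n : ℕ in atTop, 0 ≤ γ n * Real.log n / (lam n * b n ^ d) :=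
    Eventually.of_forall fun n => div_nonneg (hnn n) (hPpos n).le
  by_cases hη : 1 / 2 ≤ η
  · have h := (hrate1 hη).const_mul Cγ
    rw [mul_zero] at h
    refine squeeze_zero' h0 ?_ h
    filter_upwards [eventually_ge_atTop 1] with n hn
    rw [← mul_div_assoc]
    exact div_le_div_of_nonneg_right (hnum n hn) (hPpos n).le
  · push Not at hη
    have h := (hrate2 hη).const_mul Cγ
    rw [mul_zero] at h
    refine squeeze_zero' h0 ?_ h
    filter_upwards [eventually_ge_atTop 1, hb0.eventually_lt_const zero_lt_one,
      hlam0.eventually_lt_const zero_lt_one] with n hn hb hl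
    rw [← mul_div_assoc]
    have hb' := hbpos n
    have hl' := hlampos n
    have e1 : lam n ^ (2 * (1 - η)) ≤ lam n := by
      calc lam n ^ (2 * (1 - η)) ≤ lam n ^ (1 : ℝ) :=
            Real.rpow_le_rpow_of_exponent_ge hl' hl.le (by linarith)
        _ = lam n := Real.rpow_one _
    have e2 : b n ^ (2 * (d : ℝ) * (1 - η)) ≤ b n ^ d := by
      calc b n ^ (2 * (d : ℝ) * (1 - η)) ≤ b n ^ (d : ℝ) :=
            Real.rpow_le_rpow_of_exponent_ge hb' hb.le (by
              have : (0 : ℝ) ≤ d := Nat.cast_nonneg d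
              nlinarith)
        _ = b n ^ d := Real.rpow_natCast _ _
    have p1 : 0 < lam n ^ (2 * (1 - η)) := Real.rpow_pos_of_pos hl' _
    have p2 : 0 < b n ^ (2 * (d : ℝ) * (1 - η)) := Real.rpow_pos_of_pos hb' _
    have := hnn n
    have h3 := hnum n hn
    calc γ n * Real.log n / (lam n * b n ^ d)
        ≤ γ n * Real.log n / (lam n ^ (2 * (1 - η)) * b n ^ (2 * (d : ℝ) * (1 - η))) := by
          gcongr
      _ ≤ _ := by gcongr

theorem rate_plain {γ P : ℕ → ℝ} (hγ : ∀ n, 0 < γ n) (hP : ∀ n, 0 < P n)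
    (h : Tendsto (fun n : ℕ => γ n * Real.log n / P n) atTop (𝓝 0)) :
    Tendsto (fun n : ℕ => γ n / P n) atTop (𝓝 0) := by
  refine squeeze_zero' (Eventually.of_forall fun n => (div_pos (hγ n) (hP n)).le) ?_ h
  have hl : Tendsto (fun n : ℕ => Real.log n) atTop atTop :=
    Real.tendsto_log_atTop.comp tendsto_natCast_atTop_atTop
  filter_upwards [hl.eventually_ge_atTop 1] with n hn
  have h1 := hγ n
  have h2 := hP n
  gcongr
  exact le_mul_of_one_le_right h1.le hn

theorem rate_shift_log {γ P : ℕ → ℝ} (hγ : ∀ n, 0 < γ n) (hP : ∀ n, 0 < P n) (N : ℕ)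
    (h : Tendsto (fun n : ℕ => γ n * Real.log n / P n) atTop (𝓝 0)) :
    Tendsto (fun n : ℕ => γ (N + n) * Real.log n / P (N + n)) atTop (𝓝 0) := by
  have hs := h.comp (tendsto_add_atTop_nat N)
  refine squeeze_zero (fun n => div_nonneg (mul_nonneg (hγ _).le (Real.log_natCast_nonneg n))
    (hP _).le) (fun n => ?_) hs
  simp only [Function.comp]
  rw [Nat.add_comm n N]
  have h1 := hγ (N + n)
  have h2 := hP (N + n)
  rcases Nat.eq_zero_or_pos n with rfl | hn
  · simp only [Nat.cast_zero, Real.log_zero, mul_zero, zero_div]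
    exact div_nonneg (mul_nonneg h1.le (Real.log_natCast_nonneg _)) h2.le
  · have hn0 : (0 : ℝ) < n := by exact_mod_cast hn
    gcongr
    omega

theorem rate_shift_inv {γ P : ℕ → ℝ} {Cγ : ℝ} (hC : 0 < Cγ) (hγ : ∀ n, 0 < γ n)
    (hP : ∀ n, 0 < P n) (N : ℕ)
    (hlow : ∀ n : ℕ, 1 ≤ n → ((n : ℝ))⁻¹ ≤ Cγ * γ n)
    (h : Tendsto (fun n : ℕ => γ n / P n) atTop (𝓝 0)) :
    Tendsto (fun n : ℕ => (n : ℝ)⁻¹ / P (N + n)) atTop (𝓝 0) := by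
  have hs := (h.comp (tendsto_add_atTop_nat N)).const_mul (((N : ℝ) + 1) * Cγ)
  rw [mul_zero] at hs
  refine squeeze_zero (fun n => div_nonneg (by positivity) (hP _).le) (fun n => ?_) hs
  simp only [Function.comp]
  rw [Nat.add_comm n N]
  have h1 := hγ (N + n)
  have h2 := hP (N + n)
  rcases Nat.eq_zero_or_pos n with rfl | hn
  · simp only [Nat.cast_zero, inv_zero, zero_div]
    positivity
  · have hn0 : (1 : ℝ) ≤ n := by exact_mod_cast hn
    have h3 := hlow (N + n) (by omega)
    rw [← mul_div_assoc]
    have hN : (0 : ℝ) ≤ N := Nat.cast_nonneg N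
    have h4 : (n : ℝ)⁻¹ ≤ (N + 1) * ((N + n : ℕ) : ℝ)⁻¹ := by
      push_cast
      rw [inv_le_iff_one_le_mul₀ (by linarith)]
      have : (N + 1) * ((N : ℝ) + n)⁻¹ * n = ((N + 1) * n) / (N + n) := by
        rw [div_eq_mul_inv]; ring
      rw [this, le_div_iff₀ (by linarith)]
      nlinarith
    gcongr
    calc (n : ℝ)⁻¹ ≤ (N + 1) * ((N + n : ℕ) : ℝ)⁻¹ := h4
      _ ≤ (N + 1) * (Cγ * γ (N + n)) := by gcongr
      _ = _ := by ring

theorem g_reg {d : ℕ} {K : EE d → ℝ} {rK CK : ℝ} {L : ℝ≥0} (hK : Ker K rK CK L) {γ b : ℕ → ℝ}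
    (hb : ∀ n, 0 < b n) {X : ℕ → EE d} {v : ℕ → ℝ} {g : ℕ → EE d → ℝ} (hg0 : ∀ x, g 0 x = 0)
    (hg : ∀ n x, g (n + 1) x = (1 - γ (n + 1)) * g n x
      + γ (n + 1) * v n * kb K (b (n + 1)) (x - X (n + 1))) (n : ℕ) :
    Continuous (g n) ∧ Integrable (g n) ∧ ∃ C, ∀ x, |g n x| ≤ C := by
  induction n with
  | zero =>
    have : g 0 = fun _ => 0 := funext hg0
    rw [this]
    exact ⟨continuous_const, integrable_zero _ _ _, 0, by simp⟩
  | succ n ih =>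
    obtain ⟨h1, h2, C, h3⟩ := ih
    have : g (n + 1) = fun x => (1 - γ (n + 1)) * g n x
      + γ (n + 1) * v n * kb K (b (n + 1)) (x - X (n + 1)) := funext (hg n)
    rw [this]
    refine ⟨?_, ?_, |1 - γ (n + 1)| * C + |γ (n + 1) * v n| * (CK * (b (n + 1) ^ d)⁻¹), ?_⟩
    · exact (continuous_const.mul h1).add (continuous_const.mul
        ((hK.kb_cont _).comp (continuous_id.sub continuous_const)))
    · exact (h2.const_mul _).add ((hK.kb_integrable_r (hb _) _).const_mul _)
    · intro x
      refine (abs_add_le _ _).trans ?_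
      rw [abs_mul, abs_mul (γ (n + 1) * v n),
        abs_of_nonneg (hK.kb_nonneg (hb (n + 1)) (x - X (n + 1)))]
      gcongr
      · exact h3 x
      · exact hK.kb_le (hb _) _

theorem natFilt_le {Ω : Type*} {m0 : MeasurableSpace Ω} {d : ℕ} {X : ℕ → Ω → EE d}
    (hX : ∀ n, Measurable (X n)) (n : ℕ) : natFilt X n ≤ m0 :=
  iSup₂_le fun i _ => (hX i).comap_le

theorem natFilt_mono {Ω : Type*} {d : ℕ} (X : ℕ → Ω → EE d) (n : ℕ) :
    natFilt X n ≤ natFilt X (n + 1) :=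
  biSup_mono fun i hi => by
    rw [Finset.mem_Icc] at hi ⊢; omega

theorem natFilt_meas {Ω : Type*} {d : ℕ} (X : ℕ → Ω → EE d) (n : ℕ) :
    Measurable[natFilt X (n + 1)] (X (n + 1)) := by
  have h : MeasurableSpace.comap (X (n + 1)) inferInstance ≤ natFilt X (n + 1) :=
    le_iSup₂_of_le (n + 1) (by rw [Finset.mem_Icc]; omega) le_rfl
  exact measurable_iff_comap_le.2 h

theorem limsup_le_zero {u : ℕ → ℝ} (h : ∀ ε : ℝ, 0 < ε → ∀ᶠ n in atTop, u n ≤ ε) :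
    limsup u atTop ≤ 0 := by
  rw [limsup_eq]
  by_cases hb : BddBelow {a | ∀ᶠ n in atTop, u n ≤ a}
  · refine le_of_forall_pos_le_add fun ε hε => ?_
    rw [zero_add]
    exact csInf_le hb (h ε hε)
  · rw [Real.sInf_of_not_bddBelow hb]


open MeasureTheory Filter Metric
open scoped Topology ENNReal NNReal

theorem midas_g_limsup_upper_bound
    {Ω : Type*} [MeasurableSpace Ω] (μ : Measure Ω) [IsProbabilityMeasure μ]
    {d : ℕ} (hd : 1 ≤ d) {η : ℝ} (hη : 0 < η) (hη1 : η < 1)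
    (f q0 K : EuclideanSpace ℝ (Fin d) → ℝ)
    (γ b lam : ℕ → ℝ)
    (X : ℕ → Ω → EuclideanSpace ℝ (Fin d))
    (w : ℕ → Ω → ℝ)
    (g q : ℕ → Ω → EuclideanSpace ℝ (Fin d) → ℝ)
    (hf0 : ∀ x, 0 ≤ f x) (hfint1 : (∫ x, f x) = 1)
    (hK0 : ∀ x, 0 ≤ K x) (hKint1 : (∫ x, K x) = 1)
    (hγpos : ∀ n, 0 < γ n) (hbpos : ∀ n, 0 < b n) (hlampos : ∀ n, 0 < lam n)
    (hX : ∀ n, Measurable (X n))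
    (hqmeas : ∀ n, Measurable (Function.uncurry (q n)))
    (hg0 : ∀ (ω : Ω) x, g 0 ω x = 0)
    (hw : ∀ n (ω : Ω), w (n+1) ω = f (X (n+1) ω) / q n ω (X (n+1) ω))
    (hgrec : ∀ n (ω : Ω) x, g (n+1) ω x
      = (1 - γ (n+1)) * g n ω x
        + γ (n+1) * w (n+1) ω ^ η * kb K (b (n+1)) (x - X (n+1) ω))
    (hqrec : ∀ n (ω : Ω) x, q (n+1) ω x
      = (1 - lam (n+1)) * (g (n+1) ω x / (∫ y, g (n+1) ω y)) + lam (n+1) * q0 x)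
    (hpolicy : ∀ n (φ : EuclideanSpace ℝ (Fin d) → ℝ), Continuous φ →
      (∃ C, ∀ x, |φ x| ≤ C) →
      (μ[fun ω => φ (X (n+1) ω) | natFilt X n]) =ᵐ[μ] (fun ω => ∫ y, φ y * q n ω y))
    (hadapt : ∀ n x, Measurable[natFilt X n] fun ω => q n ω x)
    (hfbdd : ∃ C, ∀ x, f x ≤ C) (hfcont : Continuous f)
    (hfInt : Integrable f)
    (hq00 : ∀ x, 0 ≤ q0 x) (hq0bdd : ∃ C, ∀ x, q0 x ≤ C) (hq0cont : Continuous q0)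
    (hq0Int : Integrable q0) (hq0int1 : (∫ x, q0 x) = 1)
    (hftail : ∃ r > (0:ℝ), ∃ Cf > (0:ℝ), ∀ t : ℝ, 0 < t →
      (∫ x in {x : EuclideanSpace ℝ (Fin d) | t < ‖x‖}, f x) ≤ Cf * t ^ (-r))
    (hfq0 : ∃ c > (0:ℝ), ∀ x, c * f x ≤ q0 x)
    (hKbdd : ∃ C, ∀ x, K x ≤ C) (hKlip : ∃ L : NNReal, LipschitzWith L K)
    (hKpos : 0 < K 0)
    (hKtail : ∃ rK > (0:ℝ), ∃ CK > (0:ℝ), ∀ x,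
      (1 + ‖x‖ ^ ((d : ℝ) + rK)) * K x ≤ CK)
    (hγanti : Antitone γ) (hγ0 : Tendsto γ atTop (nhds 0))
    (hbanti : Antitone b) (hb0 : Tendsto b atTop (nhds 0))
    (hlamanti : Antitone lam) (hlam0 : Tendsto lam atTop (nhds 0))
    (hγrate : ∃ Cγ > (0:ℝ), ∃ nγ : ℕ, 1 ≤ nγ ∧
      (∀ n : ℕ, 1 ≤ n → ((n : ℝ))⁻¹ ≤ Cγ * γ n) ∧
      (∀ n : ℕ, nγ ≤ n → γ n - γ (n+1) ≤ γ n * γ (n+1)))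
    (hγsq : Summable fun n => γ n ^ 2)
    (hrate1 : 1/2 ≤ η → Tendsto
      (fun n : ℕ => (n : ℝ) * γ n ^ 2 * Real.log n / (lam n * b n ^ d))
      atTop (nhds 0))
    (hrate2 : η < 1/2 → Tendsto
      (fun n : ℕ => (n : ℝ) * γ n ^ 2 * Real.log n
        / (lam n ^ (2 * (1 - η)) * b n ^ (2 * (d : ℝ) * (1 - η))))
      atTop (nhds 0))
    :
    ∀ A : Set (EuclideanSpace ℝ (Fin d)), IsCompact A →
      ∀ᵐ ω ∂μ, Filter.limsup (fun n : ℕ => ⨆ x ∈ A, (g n ω x - f x)) atTop ≤ 0 := by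
  obtain ⟨Cf, hCf⟩ := hfbdd
  obtain ⟨Cq, hCq⟩ := hq0bdd
  obtain ⟨c, hc, hcf⟩ := hfq0
  obtain ⟨L, hL⟩ := hKlip
  obtain ⟨rK, hrK, CK, hCK, hKt⟩ := hKtail
  obtain ⟨Cγ, hCγ, nγ, hnγ, hlow, hdec⟩ := hγrate
  have hK : Ker K rK CK L := ⟨hK0, hKint1, hL, hKpos, hrK, hCK, hKt⟩
  have hlog := rate_log (d := d) hη1 hγpos hbpos hlampos hb0 hlam0 hCγ hlow hrate1 hrate2
  have hPpos : ∀ n, 0 < lam n * b n ^ d := fun n => mul_pos (hlampos n) (pow_pos (hbpos n) d)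
  have hplain := rate_plain hγpos hPpos hlog
  -- the starting index
  obtain ⟨N, hN1, hNγ, hNh, hNb, hNl⟩ : ∃ N : ℕ, 1 ≤ N ∧ nγ ≤ N ∧ γ N ≤ 1 / 2 ∧ b N ≤ 1 ∧
      lam N ≤ 1 / 2 := by
    have h := (eventually_ge_atTop 1).and ((eventually_ge_atTop nγ).and
      ((hγ0.eventually_lt_const (show (0 : ℝ) < 1 / 2 by norm_num)).and
      ((hb0.eventually_lt_const zero_lt_one).and
      (hlam0.eventually_lt_const (show (0 : ℝ) < 1 / 2 by norm_num)))))
    obtain ⟨N, h1, h2, h3, h4, h5⟩ := h.exists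
    exact ⟨N, h1, h2, h3.le, h4.le, h5.le⟩
  have hsh : Tendsto (fun j : ℕ => N + j) atTop atTop :=
    tendsto_atTop_mono (fun j => Nat.le_add_left j N) tendsto_id
  let S : Dat d :=
    { eta := η, f := f, q0 := q0, K := K, γ := fun j => γ (N + j), b := fun j => b (N + j),
      lam := fun j => lam (N + j), X := fun _ => 0, g := fun _ _ => 0, q := fun _ _ => 0,
      c := c, Bf := max Cf 1, Bq := max Cq 1, rK := rK, CK := CK, L := L }
  have hS : Stat S :=
    { ker := hK
      wt :=
        { pos := fun n => hγpos _
          half := fun n => (hγanti (Nat.le_add_right N n)).trans hNh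
          anti := fun i j hij => hγanti (Nat.add_le_add_left hij N)
          lim := hγ0.comp hsh
          ratio := fun n => by
            have h := hdec (N + n) (hNγ.trans (Nat.le_add_right N n))
            show γ (N + n) * (1 - γ (N + n + 1)) ≤ γ (N + n + 1)
            linarith }
      eta0 := hη
      eta1 := hη1
      f0 := hf0
      fB := fun x => (hCf x).trans (le_max_left _ _)
      Bf0 := lt_of_lt_of_le zero_lt_one (le_max_right _ _)
      fcont := hfcont
      fint := hfInt
      fint1 := hfint1
      q00 := hq00
      q0B := fun x => (hCq x).trans (le_max_left _ _)
      Bq0 := lt_of_lt_of_le zero_lt_one (le_max_right _ _)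
      q0cont := hq0cont
      q0int := hq0Int
      q0int1 := hq0int1
      c0 := hc
      cf := hcf
      bpos := fun n => hbpos _
      b1 := fun n => (hbanti (Nat.le_add_right N n)).trans hNb
      banti := fun i j hij => hbanti (Nat.add_le_add_left hij N)
      b0 := hb0.comp hsh
      lpos := fun n => hlampos _
      l1 := fun n => (hlamanti (Nat.le_add_right N n)).trans hNl
      lanti := fun i j hij => hlamanti (Nat.add_le_add_left hij N)
      l0 := hlam0.comp hsh
      rate := hplain.comp hsh }
  have hgrec2 : ∀ (ω : Ω) n x, g (n + 1) ω x = (1 - γ (n + 1)) * g n ω x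
      + γ (n + 1) * (f (X (n + 1) ω) / q n ω (X (n + 1) ω)) ^ η
        * kb K (b (n + 1)) (x - X (n + 1) ω) := by
    intro ω n x
    rw [hgrec, hw]
  have hreg : ∀ ω n, Continuous (g n ω) ∧ Integrable (g n ω) ∧ ∃ C, ∀ x, |g n ω x| ≤ C :=
    fun ω n => g_reg (g := fun n => g n ω) (X := fun n => X n ω)
      (v := fun n => (f (X (n + 1) ω) / q n ω (X (n + 1) ω)) ^ η) hK hbpos (hg0 ω) (hgrec2 ω) n
  have hqd : ∀ n, 1 ≤ n → ∀ (ω : Ω) x, q n ω x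
      = (1 - lam n) * (g n ω x / (∫ y, g n ω y)) + lam n * q0 x := by
    intro n hn ω x
    obtain ⟨k, rfl⟩ := Nat.exists_eq_add_of_le' hn
    exact hqrec k ω x
  have hqc : ∀ n, 1 ≤ n → ∀ ω, Continuous (q n ω) := by
    intro n hn ω
    rw [show q n ω = fun x => (1 - lam n) * (g n ω x / (∫ y, g n ω y)) + lam n * q0 x from
      funext (hqd n hn ω)]
    exact (continuous_const.mul ((hreg ω n).1.div_const _)).add (continuous_const.mul hq0cont)
  have hqi : ∀ n, 1 ≤ n → ∀ ω, Integrable (q n ω) := by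
    intro n hn ω
    rw [show q n ω = fun x => (1 - lam n) * (g n ω x / (∫ y, g n ω y)) + lam n * q0 x from
      funext (hqd n hn ω)]
    exact (((hreg ω n).2.1.div_const _).const_mul _).add (hq0Int.const_mul _)
  have hNj : ∀ j, 1 ≤ N + j := fun j => hN1.trans (Nat.le_add_right N j)
  have hProc : Proc μ (fun j => natFilt X (N + j)) (fun j => X (N + j)) (fun j => q (N + j)) :=
    { le := fun j => natFilt_le hX _
      mono := fun j => natFilt_mono X _
      Xm := fun j => natFilt_meas X _
      qm := fun j => step_meas (hqc _ (hNj j)) (hadapt _)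
      qnn := ae_all_iff.2 fun j => step_nonneg (hqc _ (hNj j)) (hqi _ (hNj j)) (hpolicy (N + j))
      qint := ae_all_iff.2 fun j => step_int1 (natFilt_le hX (N + j)) (hpolicy (N + j))
      dis := fun j G hG => step_dis (natFilt_le hX (N + j)) (hX _) (hqc _ (hNj j))
        (hqi _ (hNj j)) (hadapt _) (hpolicy (N + j)) G hG }
  have r1 : Tendsto (fun n : ℕ => S.γ n * Real.log n / (S.lam n * S.b n ^ d)) atTop (𝓝 0) :=
    rate_shift_log hγpos hPpos N hlog
  have r2 : Tendsto (fun n : ℕ => (n : ℝ)⁻¹ / (S.lam n * S.b n ^ d)) atTop (𝓝 0) :=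
    rate_shift_inv hCγ hγpos hPpos N hlow hplain
  have hnoise := noise_all (g := fun j => g (N + j)) hd hS hProc r1 r2
  intro A hA
  filter_upwards [hnoise, hProc.qnn, hProc.qint] with ω hn hqnn hqint
  have hT : Traj (S.at (fun j => X (N + j)) (fun j => g (N + j)) (fun j => q (N + j)) ω) :=
    { ker := hS.ker, wt := hS.wt, eta0 := hS.eta0, eta1 := hS.eta1, f0 := hS.f0, fB := hS.fB
      Bf0 := hS.Bf0, fcont := hS.fcont, fint := hS.fint, fint1 := hS.fint1, q00 := hS.q00
      q0B := hS.q0B, Bq0 := hS.Bq0, q0cont := hS.q0cont, q0int := hS.q0int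
      q0int1 := hS.q0int1, c0 := hS.c0, cf := hS.cf, bpos := hS.bpos, b1 := hS.b1
      banti := hS.banti, b0 := hS.b0, lpos := hS.lpos, l1 := hS.l1, lanti := hS.lanti
      l0 := hS.l0, rate := hS.rate
      g0b := (hreg ω _).2.2
      g0c := (hreg ω _).1
      g0i := (hreg ω _).2.1
      grec := fun n x => hgrec2 ω (N + n) x
      qdef := fun n x => hqd (N + n) (hNj n) ω x
      qnn := hqnn
      qint := hqint
      noise := hn }
  refine limsup_le_zero fun ε hε => ?_
  have hub := hT.ub A hA ε hε
  have hub2 := (tendsto_sub_atTop_nat N).eventually hub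
  filter_upwards [hub2, eventually_ge_atTop N] with n hn1 hn2
  refine Real.iSup_le (fun x => Real.iSup_le (fun hx => ?_) hε.le) hε.le
  have h := hn1 x hx
  have h2 : g (N + (n - N)) ω x ≤ f x + ε := h
  rw [Nat.add_sub_cancel' hn2] at h2
  linarith
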